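/- arXiv:math/0007200 — 8 statements merged into one kernel-verified Lean document; each statement's English description precedes it below -/
import Mathlib

section
/- There exists a constant C such that for every family (B_i)_{i ∈ I} of metric balls of positive radius in ℍ with μ(⋃_{i∈I} B_i) < ∞, one can select a finite subset J ⊆ I such that (i) μ(⋃_{i∈I} B_i) ≤ C · μ(⋃_{j∈J} B_j), and (ii) ‖Σ_{j∈J} 1_{B_j}‖_{L^{2,∞}(μ)} ≤ C · μ(⋃_{i∈I} B_i)^{1/2}. -/
open MeasureTheory ENNReal NNReal UpperHalfPlane

noncomputable section

instance : MeasurableSpace UpperHalfPlane := borel UpperHalfPlane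

instance : BorelSpace UpperHalfPlane := ⟨rfl⟩

/-- The hyperbolic measure on the upper half-plane: the measure with density
`(Im z)⁻²` with respect to two-dimensional Lebesgue measure. -/
def hypMeasure : Measure UpperHalfPlane :=
  (Measure.comap (fun z : UpperHalfPlane => (z : ℂ)) volume).withDensity
    fun z => ENNReal.ofReal (1 / z.im ^ 2)

/-- The Lorentz quasi-norm `‖f‖_{L^{2,∞}(μ)} = sup_{t>0} t · μ({x : f x > t})^{1/2}`. -/
def lorentz2inf {α : Type*} [MeasurableSpace α] (μ : Measure α) (f : α → ℝ≥0∞) : ℝ≥0∞ :=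
  ⨆ (t : ℝ) (_ : 0 < t), ENNReal.ofReal t * (μ {x | ENNReal.ofReal t < f x}) ^ (1 / 2 : ℝ)

/-!
The maximal operator over all hyperbolic balls is of restricted weak type `(2, 2)`. For balls of
bounded radius, `μ` is doubling and Vitali's covering lemma even gives weak type `(1, 1)`. A ball
of large radius `r` has measure at least a constant times `cosh r`, and for every point `x + i y` of
the ball, its horizontal slice at height `v` and `x` itself lie within distance `2 cosh r √(v y)` of
the real part of the centre. So the averages of the indicator of `A` over the large balls through
`x + i y` are controlled by `√y ∫ √v M(A_v)(x) v⁻² dv`, where `M(A_v)` is the one-dimensional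
maximal function of the slice of `A` at height `v`. As `√v` lies in `L^{2,∞}(v⁻² dv)`, the integral
is at most a constant times `(∫ M(A_v)(x)^{3/2} v⁻² dv)^{1/2}`, whose `L²(dx)` norm is at most a
constant times `μ(A)^{1/2}`, and multiplying it by `√y` gives a function in `L^{2,∞}(μ)`.

Now select the balls greedily, keeping a ball if at least half of it is not yet covered. The
discarded balls lie where the maximal function of the selected union is at least `1/2`, which gives
(i). The newly covered parts of the selected balls are disjoint and comparable to them in measure,
so the integral of the overlap function over a set `F` is at most twice the integral of the maximal
function of `F` over the selected union, and duality gives (ii).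
-/

section

open Set Filter Topology Metric

section Lorentz

variable {α β : Type*} [MeasurableSpace α] [MeasurableSpace β] {μ : Measure α} {ν : Measure β}

theorem lorentz2inf_le_iff {f : α → ℝ≥0∞} {M : ℝ≥0∞} :
    lorentz2inf μ f ≤ M ↔ ∀ t : ℝ≥0∞, t ^ 2 * μ {x | t < f x} ≤ M ^ 2 := by
  have sq_iff (t m : ℝ≥0∞) : t * m ^ (1 / 2 : ℝ) ≤ M ↔ t ^ 2 * m ≤ M ^ 2 := by
    rw [← ENNReal.pow_le_pow_left_iff two_ne_zero, mul_pow, ← ENNReal.rpow_mul_natCast]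
    norm_num
  simp only [lorentz2inf, iSup_le_iff, sq_iff]
  refine ⟨fun h t => ?_, fun h t _ => h _⟩
  obtain rfl | ht := eq_or_ne t ∞
  · simp
  obtain rfl | ht₀ := eq_or_ne t 0
  · simp
  · simpa [ofReal_toReal ht] using h t.toReal (toReal_pos ht₀ ht)

theorem sq_mul_meas_lt_le (μ : Measure α) (f : α → ℝ≥0∞) (t : ℝ≥0∞) :
    t ^ 2 * μ {x | t < f x} ≤ lorentz2inf μ f ^ 2 :=
  lorentz2inf_le_iff.1 le_rfl t

theorem lorentz2inf_mono {f g : α → ℝ≥0∞} (hfg : f ≤ g) : lorentz2inf μ f ≤ lorentz2inf μ g := by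
  refine lorentz2inf_le_iff.2 fun t => (?_ : _ ≤ _).trans (sq_mul_meas_lt_le μ g t)
  gcongr with x
  exact hfg x

theorem lorentz2inf_sup_le (f g : α → ℝ≥0∞) :
    lorentz2inf μ (f ⊔ g) ≤ lorentz2inf μ f + lorentz2inf μ g := by
  refine lorentz2inf_le_iff.2 fun t => ?_
  calc t ^ 2 * μ {x | t < (f ⊔ g) x}
      = t ^ 2 * μ ({x | t < f x} ∪ {x | t < g x}) := by
        simp only [Pi.sup_apply, lt_sup_iff, ofPred_or]
    _ ≤ t ^ 2 * μ {x | t < f x} + t ^ 2 * μ {x | t < g x} := by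
        rw [← mul_add]; gcongr; exact measure_union_le _ _
    _ ≤ lorentz2inf μ f ^ 2 + lorentz2inf μ g ^ 2 :=
        add_le_add (sq_mul_meas_lt_le μ f t) (sq_mul_meas_lt_le μ g t)
    _ ≤ (lorentz2inf μ f + lorentz2inf μ g) ^ 2 :=
        pow_add_pow_le zero_le zero_le two_ne_zero

theorem lorentz2inf_const_mul_le {c : ℝ≥0∞} (hc : c ≠ ∞) (f : α → ℝ≥0∞) :
    lorentz2inf μ (fun x => c * f x) ≤ c * lorentz2inf μ f := by
  refine lorentz2inf_le_iff.2 fun t => ?_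
  obtain rfl | hc₀ := eq_or_ne c 0
  · simp
  calc t ^ 2 * μ {x | t < c * f x}
      = c ^ 2 * ((t / c) ^ 2 * μ {x | t / c < f x}) := by
        simp only [ENNReal.div_lt_iff (.inl hc₀) (.inl hc), mul_comm c, ← mul_assoc, ← mul_pow,
          ENNReal.div_mul_cancel hc₀ hc]
    _ ≤ c ^ 2 * lorentz2inf μ f ^ 2 := by gcongr; exact sq_mul_meas_lt_le μ f _
    _ = (c * lorentz2inf μ f) ^ 2 := (mul_pow _ _ _).symm

theorem lorentz2inf_comp_of_measurePreserving {Φ : α → β} (hΦ : MeasurePreserving Φ μ ν)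
    {f : β → ℝ≥0∞} (hf : Measurable f) : lorentz2inf μ (f ∘ Φ) = lorentz2inf ν f := by
  simp only [lorentz2inf]
  congr! 5 with t _
  exact hΦ.measure_preimage (measurableSet_lt measurable_const hf).nullMeasurableSet

theorem lorentz2inf_prod_mul_le [SFinite ν] {a : α → ℝ≥0∞} {f : β → ℝ≥0∞}
    (ha : Measurable a) (hf : Measurable f) (ha_top : ∀ᵐ x ∂μ, a x ≠ ∞) :
    lorentz2inf (μ.prod ν) (fun p => a p.1 * f p.2) ≤
      (∫⁻ x, a x ^ 2 ∂μ) ^ (1 / 2 : ℝ) * lorentz2inf ν f := by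
  refine lorentz2inf_le_iff.2 fun t => ?_
  have hslice : ∀ᵐ x ∂μ, t ^ 2 * ν {y | t < a x * f y} ≤ a x ^ 2 * lorentz2inf ν f ^ 2 := by
    filter_upwards [ha_top] with x hx
    rw [← mul_pow]
    exact lorentz2inf_le_iff.1 (lorentz2inf_const_mul_le hx f) t
  have hmeas : MeasurableSet {p : α × β | t < a p.1 * f p.2} :=
    measurableSet_lt measurable_const (by fun_prop)
  calc t ^ 2 * μ.prod ν {p | t < a p.1 * f p.2}
      = ∫⁻ x, t ^ 2 * ν {y | t < a x * f y} ∂μ := by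
        rw [Measure.prod_apply hmeas,
          ← lintegral_const_mul _ (measurable_measure_prodMk_left hmeas)]
        rfl
    _ ≤ ∫⁻ x, a x ^ 2 * lorentz2inf ν f ^ 2 ∂μ := lintegral_mono_ae hslice
    _ = (∫⁻ x, a x ^ 2 ∂μ) * lorentz2inf ν f ^ 2 := lintegral_mul_const _ (by fun_prop)
    _ = ((∫⁻ x, a x ^ 2 ∂μ) ^ (1 / 2 : ℝ) * lorentz2inf ν f) ^ 2 := by
        rw [mul_pow, ← ENNReal.rpow_mul_natCast]; norm_num

theorem lintegral_le_lintegral_meas_lt (f : α → ℝ≥0∞) :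
    ∫⁻ x, f x ∂μ ≤ ∫⁻ t in Ioi (0 : ℝ), μ {x | ENNReal.ofReal t < f x} := by
  rw [lintegral_eq_nnreal]
  refine iSup₂_le fun φ hφ => ?_
  calc (φ.map (↑) : SimpleFunc α ℝ≥0∞).lintegral μ
      = ∫⁻ x, ENNReal.ofReal (φ x) ∂μ := by
        simp [← SimpleFunc.lintegral_eq_lintegral]
    _ = ∫⁻ t in Ioi (0 : ℝ), μ {x | t < φ x} :=
        lintegral_eq_lintegral_meas_lt μ (.of_forall fun x => (φ x).2)
          φ.measurable.coe_nnreal_real.aemeasurable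
    _ ≤ ∫⁻ t in Ioi (0 : ℝ), μ {x | ENNReal.ofReal t < f x} := by
        refine setLIntegral_mono' measurableSet_Ioi fun t ht => measure_mono fun x hx => ?_
        refine lt_of_lt_of_le ?_ (hφ x)
        rw [← ENNReal.ofReal_coe_nnreal]
        exact (ofReal_lt_ofReal_iff_of_nonneg (le_of_lt ht)).2 hx

theorem lintegral_Ioi_one_div_sq {s : ℝ} (hs : 0 < s) :
    ∫⁻ t in Ioi s, ENNReal.ofReal (1 / t ^ 2) = ENNReal.ofReal (1 / s) := by
  have h_rpow : ∀ t : ℝ, 1 / t ^ 2 = t ^ (-2 : ℝ) := fun t => by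
    rw [show (-2 : ℝ) = ((-2 : ℤ) : ℝ) by norm_num, Real.rpow_intCast]; simp [zpow_neg]
  simp only [h_rpow]
  rw [← ofReal_integral_eq_lintegral_ofReal (integrableOn_Ioi_rpow_of_lt (by norm_num) hs)
    ((ae_restrict_mem measurableSet_Ioi).mono fun t ht => Real.rpow_nonneg (hs.trans ht).le _),
    integral_Ioi_rpow_of_lt (by norm_num) hs]
  norm_num [Real.rpow_neg_one]

theorem setLIntegral_le_mul_add_div (f : α → ℝ≥0∞) (W : Set α) {s : ℝ} (hs : 0 < s) :
    ∫⁻ x in W, f x ∂μ ≤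
      ENNReal.ofReal s * μ W + lorentz2inf μ f ^ 2 * ENNReal.ofReal (1 / s) := by
  have h_le_lorentz (t : ℝ) (ht : 0 < t) : μ.restrict W {x | ENNReal.ofReal t < f x} ≤
      lorentz2inf μ f ^ 2 * ENNReal.ofReal (1 / t ^ 2) := by
    have ht' : ENNReal.ofReal t ^ 2 ≠ 0 := by simpa using ht
    rw [ENNReal.ofReal_div_of_pos (by positivity), ofReal_one, ENNReal.ofReal_pow ht.le, one_div,
      ← div_eq_mul_inv, ENNReal.le_div_iff_mul_le (.inl ht') (.inl (by finiteness)), mul_comm]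
    exact (mul_le_mul_right (Measure.restrict_apply_le _ _) _).trans (sq_mul_meas_lt_le μ f _)
  calc ∫⁻ x in W, f x ∂μ
      ≤ ∫⁻ t in Ioi (0 : ℝ), μ.restrict W {x | ENNReal.ofReal t < f x} :=
        lintegral_le_lintegral_meas_lt f
    _ ≤ (∫⁻ t in Ioc 0 s, μ.restrict W {x | ENNReal.ofReal t < f x}) +
          ∫⁻ t in Ioi s, μ.restrict W {x | ENNReal.ofReal t < f x} := by
        rw [← Ioc_union_Ioi_eq_Ioi hs.le]; exact lintegral_union_le _ _ _
    _ ≤ (∫⁻ _ in Ioc 0 s, μ W) +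
          ∫⁻ t in Ioi s, lorentz2inf μ f ^ 2 * ENNReal.ofReal (1 / t ^ 2) := by
        refine add_le_add (lintegral_mono fun t => ?_)
          (setLIntegral_mono' measurableSet_Ioi fun t ht => h_le_lorentz t (hs.trans ht))
        exact (measure_mono (subset_univ _)).trans_eq (Measure.restrict_apply_univ W)
    _ = ENNReal.ofReal s * μ W + lorentz2inf μ f ^ 2 * ENNReal.ofReal (1 / s) := by
        rw [setLIntegral_const, Real.volume_Ioc, sub_zero, mul_comm,
          lintegral_const_mul _ (by fun_prop), lintegral_Ioi_one_div_sq hs]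

theorem setLIntegral_le_lorentz2inf (f : α → ℝ≥0∞) (W : Set α) :
    ∫⁻ x in W, f x ∂μ ≤ 2 * lorentz2inf μ f * μ W ^ (1 / 2 : ℝ) := by
  obtain hW₀ | hW₀ := eq_or_ne (μ W) 0
  · simp [Measure.restrict_eq_zero.2 hW₀]
  obtain hN₀ | hN₀ := eq_or_ne (lorentz2inf μ f) 0
  · have h_null : ∀ t ∈ Ioi (0 : ℝ), μ {x | ENNReal.ofReal t < f x} = 0 := fun t ht => by
      simpa [hN₀, not_le.2 ht.out] using sq_mul_meas_lt_le μ f (ENNReal.ofReal t)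
    calc ∫⁻ x in W, f x ∂μ
        ≤ ∫⁻ t in Ioi (0 : ℝ), μ {x | ENNReal.ofReal t < f x} :=
          (setLIntegral_le_lintegral W f).trans (lintegral_le_lintegral_meas_lt f)
      _ = 0 := by rw [setLIntegral_congr_fun measurableSet_Ioi h_null, lintegral_zero]
      _ ≤ _ := zero_le
  obtain hN | hN := eq_or_ne (lorentz2inf μ f) ∞
  · simp [hN, hW₀]
  obtain hW | hW := eq_or_ne (μ W) ∞
  · simp [hW, hN₀]
  set N := lorentz2inf μ f
  set q := μ W ^ (1 / 2 : ℝ) with hq_def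
  have hq : μ W = q ^ 2 := by rw [hq_def, ← ENNReal.rpow_mul_natCast]; norm_num
  have hq₀ : q ≠ 0 := by simpa [hq] using hW₀
  have hq_top : q ≠ ∞ := by simpa [hq] using hW
  have hs : 0 < (N / q).toReal :=
    toReal_pos (ENNReal.div_ne_zero.2 ⟨hN₀, hq_top⟩) (div_ne_top hN hq₀)
  -- The threshold `N / q` balances the two terms.
  calc ∫⁻ x in W, f x ∂μ
      ≤ ENNReal.ofReal (N / q).toReal * μ W + N ^ 2 * ENNReal.ofReal (1 / (N / q).toReal) :=
        setLIntegral_le_mul_add_div f W hs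
    _ = N / q * q * q + N / N * N * q := by
        rw [ENNReal.ofReal_div_of_pos hs, ofReal_toReal (div_ne_top hN hq₀), hq, ofReal_one,
          one_div, ENNReal.inv_div (.inl hq_top) (.inl hq₀)]
        simp only [div_eq_mul_inv]
        ring
    _ = 2 * N * q := by
        rw [ENNReal.div_mul_cancel hq₀ hq_top, ENNReal.div_self hN₀ hN]; ring

theorem lintegral_le_of_meas_lt_le_rpow {f : α → ℝ≥0∞} {A : ℝ≥0∞} {q : ℝ}
    (hf : ∀ x, f x ≤ 1) (hq : q < 1)
    (h : ∀ t ∈ Ioo (0 : ℝ) 1,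
      μ {x | ENNReal.ofReal t < f x} ≤ A * ENNReal.ofReal (t ^ (-q))) :
    ∫⁻ x, f x ∂μ ≤ A * ENNReal.ofReal (1 / (1 - q)) := by
  have h_rpow : ∫⁻ t in Ioo (0 : ℝ) 1, ENNReal.ofReal (t ^ (-q)) =
      ENNReal.ofReal (1 / (1 - q)) := by
    have h_int : IntegrableOn (fun t : ℝ => t ^ (-q)) (Ioc 0 1) :=
      (intervalIntegrable_iff_integrableOn_Ioc_of_le zero_le_one).1
        (intervalIntegral.intervalIntegrable_rpow' (by linarith))
    rw [setLIntegral_congr Ioo_ae_eq_Ioc, ← ofReal_integral_eq_lintegral_ofReal h_int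
      ((ae_restrict_mem measurableSet_Ioc).mono fun t ht => Real.rpow_nonneg ht.1.le _),
      ← intervalIntegral.integral_of_le zero_le_one, integral_rpow (.inl (by linarith)),
      Real.one_rpow, Real.zero_rpow (by linarith), sub_zero, neg_add_eq_sub]
  have h_empty : ∀ t ∈ Ici (1 : ℝ), μ {x | ENNReal.ofReal t < f x} = 0 := fun t ht => by
    simp [((hf _).trans (one_le_ofReal.2 ht.out)).not_gt]
  calc ∫⁻ x, f x ∂μ
      ≤ ∫⁻ t in Ioi (0 : ℝ), μ {x | ENNReal.ofReal t < f x} := lintegral_le_lintegral_meas_lt f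
    _ ≤ (∫⁻ t in Ioo (0 : ℝ) 1, μ {x | ENNReal.ofReal t < f x}) +
          ∫⁻ t in Ici (1 : ℝ), μ {x | ENNReal.ofReal t < f x} := by
        rw [← Ioo_union_Ici_eq_Ioi zero_lt_one]; exact lintegral_union_le _ _ _
    _ ≤ (∫⁻ t in Ioo (0 : ℝ) 1, A * ENNReal.ofReal (t ^ (-q))) + 0 := by
        refine add_le_add (setLIntegral_mono' measurableSet_Ioo h) ?_
        rw [setLIntegral_congr_fun measurableSet_Ici h_empty, lintegral_zero]
    _ = A * ENNReal.ofReal (1 / (1 - q)) := by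
        rw [add_zero, lintegral_const_mul _ (by fun_prop), h_rpow]

theorem lintegral_rpow_le_of_mul_meas_lt_le {f : α → ℝ≥0∞} {A : ℝ≥0∞} {p : ℝ}
    (hf : ∀ x, f x ≤ 1) (hp : 1 < p) (h : ∀ t, t * μ {x | t < f x} ≤ A) :
    ∫⁻ x, f x ^ p ∂μ ≤ A * ENNReal.ofReal (p / (p - 1)) := by
  have hp₀ : 0 < p := zero_lt_one.trans hp
  convert lintegral_le_of_meas_lt_le_rpow (f := fun x => f x ^ p) (A := A) (q := p⁻¹)
    (fun x => rpow_le_one (hf x) hp₀.le) (inv_lt_one_of_one_lt₀ hp) fun t ht => ?_ using 3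
  · field_simp
  have h_iff (x : α) : ENNReal.ofReal t < f x ^ p ↔ ENNReal.ofReal (t ^ p⁻¹) < f x := by
    rw [← ENNReal.ofReal_rpow_of_pos ht.1, ENNReal.rpow_inv_lt_iff hp₀]
  simp only [h_iff]
  rw [Real.rpow_neg ht.1.le, ENNReal.ofReal_inv_of_pos (by have := ht.1; positivity),
    ← div_eq_mul_inv, ENNReal.le_div_iff_mul_le, mul_comm]
  · exact h _
  · simp [Real.rpow_pos_of_pos ht.1]
  · simp

theorem lintegral_mul_le_lorentz2inf_mul {g m : α → ℝ≥0∞} {p : ℝ} (hg : Measurable g)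
    (hm : Measurable m) (hm_one : ∀ x, m x ≤ 1) (hp₀ : 0 < p) (hp : p < 2) :
    ∫⁻ x, g x * m x ∂μ ≤
      2 * lorentz2inf μ g * (∫⁻ x, m x ^ p ∂μ) ^ (1 / 2 : ℝ) *
        ENNReal.ofReal (1 / (1 - p / 2)) := by
  refine (lintegral_withDensity_eq_lintegral_mul _ hg hm).ge.trans ?_
  refine lintegral_le_of_meas_lt_le_rpow hm_one (by linarith) fun t ht => ?_
  have h_chebyshev : μ {x | ENNReal.ofReal t < m x} ≤
      (∫⁻ x, m x ^ p ∂μ) * ENNReal.ofReal (t ^ (-p)) := by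
    have htp : 0 < t ^ p := Real.rpow_pos_of_pos ht.1 p
    rw [Real.rpow_neg ht.1.le, ENNReal.ofReal_inv_of_pos htp, ← div_eq_mul_inv]
    refine (measure_mono fun x hx => ?_).trans
      (meas_ge_le_lintegral_div (hm.pow_const p).aemeasurable (by simpa) (by simp))
    rw [mem_ofPred_eq, ← ENNReal.ofReal_rpow_of_pos ht.1]
    exact ENNReal.rpow_le_rpow (le_of_lt hx) hp₀.le
  calc μ.withDensity g {x | ENNReal.ofReal t < m x}
      = ∫⁻ x in {x | ENNReal.ofReal t < m x}, g x ∂μ :=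
        withDensity_apply _ (measurableSet_lt measurable_const hm)
    _ ≤ 2 * lorentz2inf μ g * μ {x | ENNReal.ofReal t < m x} ^ (1 / 2 : ℝ) :=
        setLIntegral_le_lorentz2inf g _
    _ ≤ 2 * lorentz2inf μ g *
          ((∫⁻ x, m x ^ p ∂μ) * ENNReal.ofReal (t ^ (-p))) ^ (1 / 2 : ℝ) := by gcongr
    _ = 2 * lorentz2inf μ g * (∫⁻ x, m x ^ p ∂μ) ^ (1 / 2 : ℝ) *
          ENNReal.ofReal (t ^ (-(p / 2))) := by
        rw [ENNReal.mul_rpow_of_nonneg _ _ (by norm_num), ← mul_assoc,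
          ENNReal.ofReal_rpow_of_pos (Real.rpow_pos_of_pos ht.1 _), ← Real.rpow_mul ht.1.le]
        ring_nf

end Lorentz

section MaximalFunction

variable {α ι : Type*} [MeasurableSpace α] {μ : Measure α} {B : ι → Set α} {s : Set ι}

/-- The noncentered maximal function of (the indicator of) the set `F` over the sets `B i`,
`i ∈ s`: the supremum over those `B i` that contain `x` of the proportion `μ (B i ∩ F) / μ (B i)`
of `B i` occupied by `F`. Null sets `B i` do not contribute, as `0 / 0 = 0`. -/
def maximalFunction (μ : Measure α) (B : ι → Set α) (s : Set ι) (F : Set α) (x : α) : ℝ≥0∞ :=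
  ⨆ i ∈ s, (B i).indicator (fun _ => μ (B i ∩ F) / μ (B i)) x

/-- The maximal operator over the sets `B i`, `i ∈ s`, is of restricted weak type `(2, 2)`: it
maps indicators of sets of finite measure to `L^{2,∞}`, with norm at most `A` times the `L²` norm
of the indicator. -/
def HasRestrictedWeakType (μ : Measure α) (B : ι → Set α) (s : Set ι) (A : ℝ≥0) : Prop :=
  ∀ F, MeasurableSet F → μ F ≠ ∞ →
    lorentz2inf μ (maximalFunction μ B s F) ≤ A * μ F ^ (1 / 2 : ℝ)

theorem maximalFunction_le_iff {F : Set α} {x : α} {a : ℝ≥0∞} :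
    maximalFunction μ B s F x ≤ a ↔ ∀ i ∈ s, x ∈ B i → μ (B i ∩ F) / μ (B i) ≤ a := by
  classical
  simp only [maximalFunction, iSup_le_iff, indicator_apply]
  congr! 3 with i
  split_ifs with h <;> simp [h]

theorem lt_maximalFunction_iff {F : Set α} {x : α} {a : ℝ≥0∞} :
    a < maximalFunction μ B s F x ↔ ∃ i ∈ s, x ∈ B i ∧ a < μ (B i ∩ F) / μ (B i) := by
  contrapose!
  exact maximalFunction_le_iff

theorem maximalFunction_le_one (F : Set α) (x : α) : maximalFunction μ B s F x ≤ 1 :=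
  maximalFunction_le_iff.2 fun _ _ _ => ENNReal.div_le_of_le_mul <| by
    rw [one_mul]; exact measure_mono inter_subset_left

theorem measure_inter_le_maximalFunction_mul {F : Set α} {i : ι} {x : α} (hi : i ∈ s)
    (hx : x ∈ B i) (hB : μ (B i) ≠ ∞) :
    μ (B i ∩ F) ≤ maximalFunction μ B s F x * μ (B i) := by
  have h_avg : μ (B i ∩ F) / μ (B i) ≤ maximalFunction μ B s F x :=
    maximalFunction_le_iff.1 le_rfl i hi hx
  calc μ (B i ∩ F) = μ (B i ∩ F) / μ (B i) * μ (B i) :=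
        (ENNReal.div_mul_cancel' (measure_mono_null inter_subset_left) (absurd · hB)).symm
    _ ≤ maximalFunction μ B s F x * μ (B i) := by gcongr

theorem maximalFunction_union (s t : Set ι) (F : Set α) :
    maximalFunction μ B (s ∪ t) F = maximalFunction μ B s F ⊔ maximalFunction μ B t F :=
  funext fun _ => iSup_union

theorem HasRestrictedWeakType.union {t : Set ι} {A A' : ℝ≥0}
    (hs : HasRestrictedWeakType μ B s A) (ht : HasRestrictedWeakType μ B t A') :
    HasRestrictedWeakType μ B (s ∪ t) (A + A') := fun F hF hF_top => by
  rw [maximalFunction_union, ENNReal.coe_add, add_mul]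
  exact (lorentz2inf_sup_le _ _).trans (add_le_add (hs F hF hF_top) (ht F hF hF_top))

theorem HasRestrictedWeakType.of_mul_meas_lt_le {A : ℝ≥0}
    (h : ∀ F, MeasurableSet F → μ F ≠ ∞ →
      ∀ t, t * μ {x | t < maximalFunction μ B s F x} ≤ A ^ 2 * μ F) :
    HasRestrictedWeakType μ B s A := fun F hF hF_top => lorentz2inf_le_iff.2 fun t => by
  obtain ht | ht := le_or_gt 1 t
  · simp [((maximalFunction_le_one F _).trans ht).not_gt]
  calc t ^ 2 * μ {x | t < maximalFunction μ B s F x}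
      ≤ t * μ {x | t < maximalFunction μ B s F x} := by
        gcongr; exact pow_le_of_le_one zero_le ht.le two_ne_zero
    _ ≤ A ^ 2 * μ F := h F hF hF_top t
    _ = (A * μ F ^ (1 / 2 : ℝ)) ^ 2 := by
        rw [mul_pow, ← ENNReal.rpow_mul_natCast]; norm_num

theorem mul_meas_lt_maximalFunction_ball_le {α : Type*} [PseudoMetricSpace α]
    [SecondCountableTopology α] [MeasurableSpace α] [OpensMeasurableSpace α] {μ : Measure α}
    {x : ι → α} {r : ι → ℝ} {K : ℝ≥0∞} {F : Set α}
    (hK : ∀ i ∈ s, μ (closedBall (x i) (5 * r i)) ≤ K * μ (ball (x i) (r i)))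
    (hr : ∀ M ≠ ∞, ∃ R, ∀ i ∈ s, μ (ball (x i) (r i)) ≤ M → r i ≤ R)
    (hF : μ F ≠ ∞) (t : ℝ≥0∞) :
    t * μ {y | t < maximalFunction μ (fun i => ball (x i) (r i)) s F y} ≤ K * μ F := by
  set B := fun i => ball (x i) (r i)
  obtain rfl | ht₀ := eq_or_ne t 0
  · simp
  let T : Set ι := {i ∈ s | t < μ (B i ∩ F) / μ (B i)}
  have hT_mul : ∀ i ∈ T, t * μ (B i) ≤ μ (B i ∩ F) := fun i hi =>
    ENNReal.mul_le_of_le_div hi.2.le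
  have hT_nonempty : ∀ i ∈ T, (B i).Nonempty := fun i hi => by
    by_contra! h
    simpa [h] using hi.2
  obtain ⟨R, hR⟩ := hr (μ F / t) (div_ne_top hF ht₀)
  have hT_radius : ∀ i ∈ T, r i ≤ R := fun i hi => hR i hi.1 <| by
    rw [ENNReal.le_div_iff_mul_le (.inl ht₀) (.inr hF), mul_comm]
    exact (hT_mul i hi).trans (measure_mono inter_subset_right)
  obtain ⟨u, huT, hu_disj, hu_cover⟩ :=
    Vitali.exists_disjoint_subfamily_covering_enlargement_closedBall T x r R hT_radius 5
      (by norm_num)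
  have hu_disj : u.PairwiseDisjoint B := hu_disj.mono fun i => ball_subset_closedBall
  have hu_count : u.Countable :=
    hu_disj.countable_of_isOpen (fun _ _ => isOpen_ball) fun i hi => hT_nonempty i (huT hi)
  have h_cover : {y | t < maximalFunction μ B s F y} ⊆ ⋃ i ∈ u, closedBall (x i) (5 * r i) := by
    intro y hy
    obtain ⟨i, his, hyi, hti⟩ := lt_maximalFunction_iff.1 hy
    obtain ⟨j, hj, hij⟩ := hu_cover i ⟨his, hti⟩
    exact mem_biUnion hj (hij (ball_subset_closedBall hyi))
  calc t * μ {y | t < maximalFunction μ B s F y}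
      ≤ t * ∑' i : u, μ (closedBall (x i) (5 * r i)) := by
        gcongr; exact (measure_mono h_cover).trans (measure_biUnion_le _ hu_count _)
    _ ≤ K * ∑' i : u, μ.restrict F (B i) := by
        rw [← ENNReal.tsum_mul_left, ← ENNReal.tsum_mul_left]
        refine ENNReal.tsum_le_tsum fun i => ?_
        rw [Measure.restrict_apply measurableSet_ball]
        calc t * μ (closedBall (x i) (5 * r i)) ≤ t * (K * μ (B i)) := by
              gcongr; exact hK i (huT i.2).1
          _ = K * (t * μ (B i)) := mul_left_comm _ _ _
          _ ≤ K * μ (B i ∩ F) := by gcongr; exact hT_mul i (huT i.2)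
    _ = K * μ.restrict F (⋃ i ∈ u, B i) := by
        rw [measure_biUnion hu_count hu_disj fun _ _ => measurableSet_ball]
    _ ≤ K * μ F := by
        rw [← Measure.restrict_apply_univ F]
        gcongr
        exact subset_univ _

theorem measurable_maximalFunction_slice {β : Type*} [MeasurableSpace β] [Countable ι] [SFinite μ]
    (hB : ∀ i, MeasurableSet (B i))
    {A : Set (α × β)} (hA : MeasurableSet A) :
    Measurable fun p : α × β => maximalFunction μ B s {u | (u, p.2) ∈ A} p.1 := by
  refine Measurable.biSup s s.to_countable fun i _ => ?_
  have h_slice : Measurable fun v => μ (B i ∩ {u | (u, v) ∈ A}) := by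
    simpa using! measurable_measure_prodMk_right (μ := μ) (((hB i).prod .univ).inter hA)
  exact ((h_slice.comp measurable_snd).div_const _).indicator (measurable_fst (hB i))

end MaximalFunction

section Covering

variable {α ι : Type*} [MeasurableSpace α] {μ : Measure α}

theorem exists_finset_measure_iUnion_le_two_mul [TopologicalSpace α] [SecondCountableTopology α]
    {U : ι → Set α} (hU : ∀ i, IsOpen (U i)) (h_top : μ (⋃ i, U i) ≠ ∞) :
    ∃ J : Finset ι, μ (⋃ i, U i) ≤ 2 * μ (⋃ i ∈ J, U i) := by
  obtain ⟨T, hT, hTU⟩ := TopologicalSpace.isOpen_iUnion_countable U hU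
  have := hT.to_subtype
  have h_sup : μ (⋃ i, U i) = ⨆ J : Finset T, μ (⋃ i ∈ J, U i) := by
    rw [← hTU, biUnion_eq_iUnion, iUnion_eq_iUnion_finset, Directed.measure_iUnion]
    exact Monotone.directed_le fun J J' hJ => biUnion_subset_biUnion_left hJ
  obtain h₀ | h₀ := eq_or_ne (μ (⋃ i, U i)) 0
  · exact ⟨∅, by simp [h₀]⟩
  obtain ⟨J, hJ⟩ := lt_iSup_iff.1 ((ENNReal.half_lt_self h₀ h_top).trans_eq h_sup)
  refine ⟨J.map (Function.Embedding.subtype _), ?_⟩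
  rw [mul_comm, ← ENNReal.div_le_iff_le_mul (.inl two_ne_zero) (.inl ofNat_ne_top)]
  simpa using hJ.le

variable {B : ι → Set α} {s : Set ι}

theorem exists_subset_sum_measure_inter_le_lintegral_maximalFunction
    (hB : ∀ i, MeasurableSet (B i)) (hB_top : ∀ i, μ (B i) ≠ ∞) {J₀ : Finset ι}
    (hJ₀ : (J₀ : Set ι) ⊆ s) :
    ∃ J ⊆ J₀, (∀ i ∈ J₀, μ (B i) ≤ 2 * μ (B i ∩ ⋃ j ∈ J, B j)) ∧
      ∀ F, ∑ j ∈ J, μ (B j ∩ F) ≤ 2 * ∫⁻ x in ⋃ j ∈ J, B j, maximalFunction μ B s F x ∂μ := by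
  classical
  induction J₀ using Finset.induction_on with
  | empty => exact ⟨∅, by simp⟩
  | insert a J₀ ha ih =>
    rw [Finset.coe_insert, insert_subset_iff] at hJ₀
    obtain ⟨J, hJJ₀, hJ_half, hJ_sum⟩ := ih hJ₀.2
    set U := ⋃ j ∈ J, B j
    obtain h_half | h_half := le_or_gt (μ (B a)) (2 * μ (B a ∩ U))
    · exact ⟨J, hJJ₀.trans (Finset.subset_insert _ _),
        Finset.forall_mem_insert _ _ _ |>.2 ⟨h_half, hJ_half⟩, hJ_sum⟩
    have hU : ⋃ j ∈ insert a J, B j = U ∪ B a := by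
      rw [Finset.set_biUnion_insert, union_comm]
    refine ⟨insert a J, Finset.insert_subset_insert _ hJJ₀, ?_, fun F => ?_⟩
    · rw [hU, Finset.forall_mem_insert, inter_eq_left.2 subset_union_right]
      refine ⟨le_mul_of_one_le_left' one_le_two, fun i hi => (hJ_half i hi).trans ?_⟩
      gcongr
      exact subset_union_left
    have hU_meas : MeasurableSet U := J.measurableSet_biUnion fun j _ => hB j
    have h_diff : μ (B a) ≤ 2 * μ (B a \ U) := by
      by_contra! h
      have := ENNReal.add_lt_add h_half h
      rw [← mul_add, measure_inter_add_sdiff _ hU_meas, ← two_mul] at this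
      exact this.false
    have h_new : μ (B a ∩ F) ≤ 2 * ∫⁻ x in B a \ U, maximalFunction μ B s F x ∂μ :=
      calc μ (B a ∩ F) = μ (B a ∩ F) / μ (B a) * μ (B a) :=
            (ENNReal.div_mul_cancel' (measure_mono_null inter_subset_left)
              (absurd · (hB_top a))).symm
        _ ≤ μ (B a ∩ F) / μ (B a) * (2 * μ (B a \ U)) := by gcongr
        _ = 2 * ∫⁻ _ in B a \ U, μ (B a ∩ F) / μ (B a) ∂μ := by
            rw [setLIntegral_const, mul_left_comm]
        _ ≤ 2 * ∫⁻ x in B a \ U, maximalFunction μ B s F x ∂μ := by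
            gcongr 2 * ?_
            exact setLIntegral_mono' ((hB a).diff hU_meas) fun x hx =>
              maximalFunction_le_iff.1 le_rfl a hJ₀.1 hx.1
    rw [hU, ← union_sdiff_self, lintegral_union ((hB a).diff hU_meas) disjoint_sdiff_right,
      mul_add, Finset.sum_insert fun h => ha (hJJ₀ h), add_comm]
    exact add_le_add (hJ_sum F) h_new

theorem sq_mul_le_sq_of_mul_le_mul_rpow_half {t m K : ℝ≥0∞} (hm : m ≠ ∞)
    (h : t * m ≤ K * m ^ (1 / 2 : ℝ)) : t ^ 2 * m ≤ K ^ 2 := by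
  obtain rfl | hm₀ := eq_or_ne m 0
  · simp
  refine (ENNReal.mul_le_mul_iff_left hm₀ hm).1 ?_
  calc t ^ 2 * m * m = (t * m) ^ 2 := by ring
    _ ≤ (K * m ^ (1 / 2 : ℝ)) ^ 2 := by gcongr
    _ = K ^ 2 * m := by rw [mul_pow, ← ENNReal.rpow_mul_natCast]; norm_num

theorem HasRestrictedWeakType.lorentz2inf_sum_indicator_le {A : ℝ≥0}
    (hA : HasRestrictedWeakType μ B s A) (hB : ∀ i, MeasurableSet (B i))
    (hB_top : ∀ i, μ (B i) ≠ ∞) {J : Finset ι}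
    (hJ : ∀ F, ∑ j ∈ J, μ (B j ∩ F) ≤
      2 * ∫⁻ x in ⋃ j ∈ J, B j, maximalFunction μ B s F x ∂μ) :
    lorentz2inf μ (fun x => ∑ j ∈ J, (B j).indicator (fun _ => 1) x) ≤
      4 * A * μ (⋃ j ∈ J, B j) ^ (1 / 2 : ℝ) := by
  set U := ⋃ j ∈ J, B j
  have hU_top : μ U ≠ ∞ := (measure_biUnion_lt_top J.finite_toSet fun j _ => (hB_top j).lt_top).ne
  refine lorentz2inf_le_iff.2 fun t => ?_
  set F := {x | t < ∑ j ∈ J, (B j).indicator (fun _ => 1) x}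
  have hF : MeasurableSet F := measurableSet_lt measurable_const
    (Finset.measurable_fun_sum _ fun j _ => measurable_const.indicator (hB j))
  have hFU : F ⊆ U := fun x hx => by
    obtain ⟨j, hj, hxj⟩ := Finset.exists_ne_zero_of_sum_ne_zero (pos_of_gt hx.out).ne'
    exact mem_biUnion hj (mem_of_indicator_ne_zero hxj)
  have hF_top : μ F ≠ ∞ := measure_ne_top_of_subset hFU hU_top
  refine sq_mul_le_sq_of_mul_le_mul_rpow_half hF_top ?_
  calc t * μ F
      ≤ ∫⁻ x in F, ∑ j ∈ J, (B j).indicator (fun _ => 1) x ∂μ := by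
        rw [← setLIntegral_const]
        exact setLIntegral_mono' hF fun x hx => le_of_lt hx
    _ = ∑ j ∈ J, μ (B j ∩ F) := by
        rw [lintegral_finsetSum _ fun j _ => measurable_const.indicator (hB j)]
        simp [lintegral_indicator (hB _), hB]
    _ ≤ 2 * ∫⁻ x in U, maximalFunction μ B s F x ∂μ := hJ F
    _ ≤ 2 * (2 * (A * μ F ^ (1 / 2 : ℝ)) * μ U ^ (1 / 2 : ℝ)) := by
        gcongr
        exact (setLIntegral_le_lorentz2inf _ U).trans (by gcongr; exact hA F hF hF_top)
    _ = 4 * A * μ U ^ (1 / 2 : ℝ) * μ F ^ (1 / 2 : ℝ) := by ring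

theorem HasRestrictedWeakType.exists_subset_covering {A : ℝ≥0}
    (hA : HasRestrictedWeakType μ B s A) (hB : ∀ i, MeasurableSet (B i))
    (hB₀ : ∀ i, μ (B i) ≠ 0) (hB_top : ∀ i, μ (B i) ≠ ∞)
    {J₀ : Finset ι} (hJ₀ : (J₀ : Set ι) ⊆ s) :
    ∃ J ⊆ J₀, μ (⋃ i ∈ J₀, B i) ≤ 16 * A ^ 2 * μ (⋃ j ∈ J, B j) ∧
      lorentz2inf μ (fun x => ∑ j ∈ J, (B j).indicator (fun _ => 1) x) ≤
        4 * A * μ (⋃ j ∈ J, B j) ^ (1 / 2 : ℝ) := by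
  obtain ⟨J, hJJ₀, hJ_half, hJ_sum⟩ :=
    exists_subset_sum_measure_inter_le_lintegral_maximalFunction hB hB_top hJ₀
  set U := ⋃ j ∈ J, B j
  have hU : MeasurableSet U := J.measurableSet_biUnion fun j _ => hB j
  have hU_top : μ U ≠ ∞ := (measure_biUnion_lt_top J.finite_toSet fun j _ => (hB_top j).lt_top).ne
  refine ⟨J, hJJ₀, ?_, hA.lorentz2inf_sum_indicator_le hB hB_top hJ_sum⟩
  have h_quarter : ⋃ i ∈ J₀, B i ⊆ {x | 4⁻¹ < maximalFunction μ B s U x} := by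
    refine iUnion₂_subset fun i hi x hx => lt_maximalFunction_iff.2 ⟨i, hJ₀ hi, hx, ?_⟩
    have h_half : 2⁻¹ ≤ μ (B i ∩ U) / μ (B i) := by
      rw [ENNReal.le_div_iff_mul_le (.inl (hB₀ i)) (.inl (hB_top i)), mul_comm, ← div_eq_mul_inv]
      exact ENNReal.div_le_of_le_mul' (hJ_half i hi)
    exact (ENNReal.inv_lt_inv.2 (by norm_num)).trans_le h_half
  calc μ (⋃ i ∈ J₀, B i)
      ≤ 16 * (4⁻¹ ^ 2 * μ {x | 4⁻¹ < maximalFunction μ B s U x}) := by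
        rw [← mul_assoc, ← ENNReal.inv_pow, show (4 : ℝ≥0∞) ^ 2 = 16 by norm_num,
          ENNReal.mul_inv_cancel (by norm_num) (by norm_num), one_mul]
        exact measure_mono h_quarter
    _ ≤ 16 * (A * μ U ^ (1 / 2 : ℝ)) ^ 2 := by
        gcongr; exact lorentz2inf_le_iff.1 (hA U hU hU_top) _
    _ = 16 * A ^ 2 * μ U := by
        rw [mul_pow, ← ENNReal.rpow_mul_natCast, ← mul_assoc]; norm_num

theorem HasRestrictedWeakType.exists_finset_covering {α ι : Type*} [TopologicalSpace α]
    [SecondCountableTopology α] [MeasurableSpace α] [OpensMeasurableSpace α] {μ : Measure α}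
    {B : ι → Set α} {A : ℝ≥0}
    (hA : HasRestrictedWeakType μ B univ A) (hB : ∀ i, IsOpen (B i)) (hB₀ : ∀ i, μ (B i) ≠ 0)
    (h_top : μ (⋃ i, B i) ≠ ∞) :
    ∃ J : Finset ι, μ (⋃ i, B i) ≤ 32 * A ^ 2 * μ (⋃ j ∈ J, B j) ∧
      lorentz2inf μ (fun x => ∑ j ∈ J, (B j).indicator (fun _ => 1) x) ≤
        4 * A * μ (⋃ i, B i) ^ (1 / 2 : ℝ) := by
  obtain ⟨J₀, hJ₀⟩ := exists_finset_measure_iUnion_le_two_mul hB h_top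
  obtain ⟨J, -, hJ_measure, hJ_lorentz⟩ :=
    hA.exists_subset_covering (fun i => (hB i).measurableSet) hB₀
      (fun i => measure_ne_top_of_subset (subset_iUnion B i) h_top) (subset_univ (J₀ : Set ι))
  refine ⟨J, ?_, hJ_lorentz.trans ?_⟩
  · calc μ (⋃ i, B i) ≤ 2 * (16 * A ^ 2 * μ (⋃ j ∈ J, B j)) := hJ₀.trans (by gcongr)
      _ = 32 * A ^ 2 * μ (⋃ j ∈ J, B j) := by ring
  · gcongr 4 * A * μ ?_ ^ (1 / 2 : ℝ)
    exact iUnion₂_subset_iUnion _ B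

end Covering

section Line

/-- The Hardy–Littlewood maximal function of (the indicator of) a set of reals. Restricting the
supremum to balls with rational centre and radius changes it by at most a constant factor and
makes it measurable. -/
def lineMaximalFunction (E : Set ℝ) : ℝ → ℝ≥0∞ :=
  maximalFunction volume (fun p : ℚ × ℚ => ball (p.1 : ℝ) p.2) univ E

theorem mul_volume_lt_lineMaximalFunction_le (E : Set ℝ) (t : ℝ≥0∞) :
    t * volume {x | t < lineMaximalFunction E x} ≤ 5 * volume E := by
  obtain hE | hE := eq_or_ne (volume E) ∞
  · simp [hE]
  refine mul_meas_lt_maximalFunction_ball_le (fun p _ => ?_) (fun M hM => ?_) hE t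
  · rw [Real.volume_closedBall, Real.volume_ball, mul_left_comm, ofReal_mul (by norm_num),
      ofReal_ofNat]
  · refine ⟨M.toReal, fun p _ hp => ?_⟩
    rw [Real.volume_ball, ofReal_le_iff_le_toReal hM] at hp
    obtain hp₀ | hp₀ := le_total (p.2 : ℝ) 0
    · exact hp₀.trans toReal_nonneg
    · linarith

theorem lintegral_lineMaximalFunction_rpow_le (E : Set ℝ) :
    ∫⁻ x, lineMaximalFunction E x ^ (3 / 2 : ℝ) ≤ 15 * volume E := by
  refine (lintegral_rpow_le_of_mul_meas_lt_le (maximalFunction_le_one E) (by norm_num)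
    (mul_volume_lt_lineMaximalFunction_le E)).trans_eq ?_
  rw [mul_right_comm]
  norm_num

theorem volume_inter_ball_le_lineMaximalFunction {E : Set ℝ} {a L x : ℝ} (hx : x ∈ ball a L) :
    volume (E ∩ ball a L) ≤ ENNReal.ofReal (4 * L) * lineMaximalFunction E x := by
  have hL : 0 < L := pos_of_mem_ball hx
  obtain ⟨q, haq, hqa⟩ := exists_rat_btwn (show a < a + L / 2 by linarith)
  obtain ⟨ρ, hLρ, hρL⟩ := exists_rat_btwn (show 3 / 2 * L < 2 * L by linarith)
  have h_ball : ball a L ⊆ ball (q : ℝ) ρ := ball_subset_ball' <| by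
    rw [dist_comm, Real.dist_eq, abs_of_pos (by linarith)]; linarith
  calc volume (E ∩ ball a L)
      ≤ volume (ball (q : ℝ) ρ ∩ E) := by
        rw [inter_comm]; gcongr
    _ ≤ lineMaximalFunction E x * volume (ball (q : ℝ) ρ) :=
        measure_inter_le_maximalFunction_mul (B := fun p : ℚ × ℚ => ball (p.1 : ℝ) p.2)
          (mem_univ (q, ρ)) (h_ball hx) measure_ball_lt_top.ne
    _ ≤ ENNReal.ofReal (4 * L) * lineMaximalFunction E x := by
        rw [Real.volume_ball, mul_comm]
        gcongr ENNReal.ofReal ?_ * _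
        linarith

end Line

section HyperbolicMeasure

/-- The measure `v⁻² dv` on the positive reals, the vertical factor of the hyperbolic measure. -/
def verticalMeasure : Measure ℝ :=
  (volume.restrict (Ioi 0)).withDensity fun v => ENNReal.ofReal (1 / v ^ 2)

instance : SFinite verticalMeasure := by unfold verticalMeasure; infer_instance

/-- The Cartesian coordinates of a point of the upper half-plane. -/
def cartesian (z : UpperHalfPlane) : ℝ × ℝ := (z.re, z.im)

theorem measurableEmbedding_cartesian : MeasurableEmbedding cartesian :=
  Complex.measurableEquivRealProd.measurableEmbedding.comp
    isOpenEmbedding_coe.measurableEmbedding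

theorem measurePreserving_cartesian :
    MeasurePreserving cartesian hypMeasure (volume.prod verticalMeasure) := by
  have h_emb : MeasurableEmbedding (fun z : UpperHalfPlane => (z : ℂ)) :=
    isOpenEmbedding_coe.measurableEmbedding
  have h_range : range (fun z : UpperHalfPlane => (z : ℂ)) =
      Complex.measurableEquivRealProd ⁻¹' (univ ×ˢ Ioi 0) := by
    ext z
    simp [Complex.measurableEquivRealProd]
  have h_coe : MeasurePreserving (fun z : UpperHalfPlane => (z : ℂ))
      (.comap (fun z : UpperHalfPlane => (z : ℂ)) volume)
      (volume.restrict (range fun z : UpperHalfPlane => (z : ℂ))) :=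
    ⟨h_emb.measurable, h_emb.map_comap _⟩
  have h_equiv := Complex.volume_preserving_equiv_real_prod.restrict_preimage
    (MeasurableSet.univ.prod (measurableSet_Ioi (a := (0 : ℝ))))
  rw [← h_range] at h_equiv
  have h_lebesgue : MeasurePreserving cartesian (.comap (fun z : UpperHalfPlane => (z : ℂ)) volume)
      (volume.prod (volume.restrict (Ioi 0))) := by
    rw [Measure.volume_eq_prod, ← Measure.prod_restrict, Measure.restrict_univ] at h_equiv
    exact h_equiv.comp h_coe
  refine ⟨measurableEmbedding_cartesian.measurable, Measure.ext fun S hS => ?_⟩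
  rw [verticalMeasure, prod_withDensity_right (by fun_prop),
    Measure.map_apply measurableEmbedding_cartesian.measurable hS, hypMeasure,
    withDensity_apply _ (measurableEmbedding_cartesian.measurable hS), withDensity_apply _ hS]
  exact h_lebesgue.setLIntegral_comp_preimage hS
    (f := fun p => ENNReal.ofReal (1 / p.2 ^ 2)) (by fun_prop)

theorem verticalMeasure_Ioi {V : ℝ} (hV : 0 < V) :
    verticalMeasure (Ioi V) = ENNReal.ofReal (1 / V) := by
  rw [verticalMeasure, withDensity_apply _ measurableSet_Ioi,
    Measure.restrict_restrict measurableSet_Ioi, inter_eq_left.2 (Ioi_subset_Ioi hV.le),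
    lintegral_Ioi_one_div_sq hV]

theorem verticalMeasure_Ioc {a b : ℝ} (ha : 0 < a) (hab : a ≤ b) :
    verticalMeasure (Ioc a b) = ENNReal.ofReal (1 / a - 1 / b) := by
  have hb : 0 < b := ha.trans_le hab
  rw [← Ioi_sdiff_Ioi, measure_sdiff (Ioi_subset_Ioi hab) measurableSet_Ioi.nullMeasurableSet
    (by rw [verticalMeasure_Ioi hb]; exact ofReal_ne_top), verticalMeasure_Ioi ha,
    verticalMeasure_Ioi hb, ENNReal.ofReal_sub _ (by positivity)]

theorem lorentz2inf_verticalMeasure_sqrt_le_one :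
    lorentz2inf verticalMeasure (fun v => ENNReal.ofReal √v) ≤ 1 := by
  refine iSup₂_le fun t ht => ?_
  have h_level : {v : ℝ | ENNReal.ofReal t < ENNReal.ofReal √v} = Ioi (t ^ 2) := by
    ext v
    rw [mem_ofPred_eq, ofReal_lt_ofReal_iff_of_nonneg ht.le, Real.lt_sqrt ht.le, mem_Ioi]
  have h_pow : (1 / t ^ 2) ^ (1 / 2 : ℝ) = 1 / t := by
    rw [← Real.sqrt_eq_rpow, Real.sqrt_div zero_le_one, Real.sqrt_one, Real.sqrt_sq ht.le]
  rw [h_level, verticalMeasure_Ioi (by positivity),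
    ENNReal.ofReal_rpow_of_nonneg (by positivity) (by norm_num), h_pow, ← ofReal_mul ht.le,
    mul_one_div_cancel ht.ne', ofReal_one]

end HyperbolicMeasure

section LargeBalls

theorem mem_ball_iff_cartesian {c z : UpperHalfPlane} {r : ℝ} (hr : 0 ≤ r) :
    z ∈ ball c r ↔
      (z.re - c.re) ^ 2 + z.im ^ 2 + c.im ^ 2 < 2 * z.im * c.im * Real.cosh r := by
  have := z.im_pos
  have := c.im_pos
  rw [mem_ball, ← Real.cosh_strictMonoOn.lt_iff_lt dist_nonneg hr, UpperHalfPlane.cosh_dist',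
    div_lt_iff₀ (by positivity), mul_comm]

theorem abs_re_sub_lt_of_mem_ball {c z w : UpperHalfPlane} {r : ℝ} (hr : 0 ≤ r)
    (hz : z ∈ ball c r) (hw : w ∈ ball c r) :
    |z.re - c.re| < 2 * Real.cosh r * √(z.im * w.im) := by
  rw [mem_ball_iff_cartesian hr] at hz hw
  have hC := Real.cosh_pos r
  have hb : c.im < 2 * w.im * Real.cosh r := by
    nlinarith [c.im_pos, sq_nonneg (w.re - c.re), sq_nonneg w.im]
  have hzC : 0 < z.im * Real.cosh r := mul_pos z.im_pos hC
  refine abs_lt_of_sq_lt_sq ?_ (by positivity)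
  rw [mul_pow, Real.sq_sqrt (mul_pos z.im_pos w.im_pos).le]
  nlinarith [sq_nonneg z.im, sq_nonneg c.im, mul_lt_mul_of_pos_left hb hzC]

theorem cosh_le_hypMeasure_ball (c : UpperHalfPlane) {r : ℝ} (hr : 0 ≤ r) (hC : 2 ≤ Real.cosh r) :
    ENNReal.ofReal (Real.cosh r) ≤ 3 * hypMeasure (ball c r) := by
  set C := Real.cosh r with hC_def
  have hb := c.im_pos
  set b := c.im with hb_def
  have hC₀ : 0 < C := by positivity
  have h_box : cartesian ⁻¹' (Ioo (c.re - b) (c.re + b) ×ˢ Ioc (3 * b / (2 * C)) (2 * b / C)) ⊆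
      ball c r := by
    rintro z ⟨⟨hu₁, hu₂⟩, hv₁, hv₂⟩
    simp only [cartesian] at hu₁ hu₂ hv₁ hv₂
    rw [div_lt_iff₀ (by positivity)] at hv₁
    rw [le_div_iff₀ hC₀] at hv₂
    rw [mem_ball_iff_cartesian hr, ← hC_def, ← hb_def]
    have h_re : (z.re - c.re) ^ 2 < b ^ 2 := sq_lt_sq' (by linarith) (by linarith)
    have h_im : z.im ≤ b := by nlinarith [z.im_pos]
    nlinarith [z.im_pos]
  have h_vertical : 1 / (3 * b / (2 * C)) - 1 / (2 * b / C) = C / (6 * b) := by field_simp; norm_num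
  have h_le : 3 * b / (2 * C) ≤ 2 * b / C := by
    rw [div_le_div_iff₀ (by positivity) hC₀]; nlinarith [mul_pos hb hC₀]
  calc ENNReal.ofReal C
      = 3 * (volume (Ioo (c.re - b) (c.re + b)) *
          verticalMeasure (Ioc (3 * b / (2 * C)) (2 * b / C))) := by
        rw [Real.volume_Ioo, verticalMeasure_Ioc (by positivity) h_le, h_vertical,
          ← ofReal_ofNat 3, ← ofReal_mul (by linarith), ← ofReal_mul (by norm_num)]
        congr 1
        field_simp
        ring
    _ = 3 * hypMeasure (cartesian ⁻¹'
          (Ioo (c.re - b) (c.re + b) ×ˢ Ioc (3 * b / (2 * C)) (2 * b / C))) := by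
        rw [measurePreserving_cartesian.measure_preimage_emb measurableEmbedding_cartesian,
          Measure.prod_prod]
    _ ≤ 3 * hypMeasure (ball c r) := by gcongr

/-- The integral over all heights `v` of the `3/2`-power of the maximal function of the horizontal
slice of `A` at height `v`. Its square root dominates, up to the factor `√z.im`, the averages of
`A` over large balls through `z`. Any exponent in `(1, 2)` would do: larger than `1` for the
maximal theorem, smaller than `2` for the duality with `√v ∈ L^{2,∞}`. -/
def sliceEnergy (A : Set (ℝ × ℝ)) (x : ℝ) : ℝ≥0∞ :=
  ∫⁻ v, lineMaximalFunction {u | (u, v) ∈ A} x ^ (3 / 2 : ℝ) ∂verticalMeasure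

variable {A : Set (ℝ × ℝ)}

theorem measurable_lineMaximalFunction_slice (hA : MeasurableSet A) :
    Measurable fun p : ℝ × ℝ => lineMaximalFunction {u | (u, p.2) ∈ A} p.1 :=
  measurable_maximalFunction_slice (fun _ => measurableSet_ball) hA

theorem measurable_sliceEnergy (hA : MeasurableSet A) : Measurable (sliceEnergy A) :=
  ((measurable_lineMaximalFunction_slice hA).pow_const _).lintegral_prod_right'

theorem lintegral_sliceEnergy_le (hA : MeasurableSet A) :
    ∫⁻ x, sliceEnergy A x ≤ 15 * volume.prod verticalMeasure A :=
  calc ∫⁻ x, sliceEnergy A x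
      = ∫⁻ v, (∫⁻ x, lineMaximalFunction {u | (u, v) ∈ A} x ^ (3 / 2 : ℝ)) ∂verticalMeasure :=
        lintegral_lintegral_swap
          ((measurable_lineMaximalFunction_slice hA).pow_const _).aemeasurable
    _ ≤ ∫⁻ v, 15 * volume {u | (u, v) ∈ A} ∂verticalMeasure :=
        lintegral_mono fun v => lintegral_lineMaximalFunction_rpow_le {u | (u, v) ∈ A}
    _ = 15 * volume.prod verticalMeasure A := by
        rw [Measure.prod_apply_symm hA,
          ← lintegral_const_mul _ (measurable_measure_prodMk_right hA)]
        rfl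

theorem lintegral_sqrt_mul_lineMaximalFunction_le (hA : MeasurableSet A) (x : ℝ) :
    ∫⁻ v, ENNReal.ofReal √v * lineMaximalFunction {u | (u, v) ∈ A} x ∂verticalMeasure ≤
      8 * sliceEnergy A x ^ (1 / 2 : ℝ) := by
  refine (lintegral_mul_le_lorentz2inf_mul (p := 3 / 2) (by fun_prop)
    ((measurable_lineMaximalFunction_slice hA).comp measurable_prodMk_left)
    (fun v => maximalFunction_le_one _ x) (by norm_num) (by norm_num)).trans ?_
  calc 2 * lorentz2inf verticalMeasure (fun v => ENNReal.ofReal √v) *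
        sliceEnergy A x ^ (1 / 2 : ℝ) * ENNReal.ofReal (1 / (1 - 3 / 2 / 2))
      ≤ 2 * 1 * sliceEnergy A x ^ (1 / 2 : ℝ) * 4 := by
        gcongr
        · exact lorentz2inf_verticalMeasure_sqrt_le_one
        · norm_num
    _ = 8 * sliceEnergy A x ^ (1 / 2 : ℝ) := by ring

theorem volume_slice_le (A : Set (ℝ × ℝ)) {c z : UpperHalfPlane} {r : ℝ} (hr : 0 ≤ r)
    (hz : z ∈ ball c r) (v : ℝ) :
    volume {u | (u, v) ∈ cartesian '' ball c r ∩ A} ≤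
      ENNReal.ofReal (8 * Real.cosh r * √z.im) *
        (ENNReal.ofReal √v * lineMaximalFunction {u | (u, v) ∈ A} z.re) := by
  obtain h_empty | ⟨_, ⟨w, hw, hwv⟩, -⟩ :=
    {u | (u, v) ∈ cartesian '' ball c r ∩ A}.eq_empty_or_nonempty
  · rw [h_empty, measure_empty]
    exact zero_le
  obtain rfl : w.im = v := congrArg Prod.snd hwv
  have h_subset : {u | (u, w.im) ∈ cartesian '' ball c r ∩ A} ⊆
      {u | (u, w.im) ∈ A} ∩ ball c.re (2 * Real.cosh r * √(z.im * w.im)) := by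
    rintro _ ⟨⟨w', hw', h⟩, huA⟩
    obtain ⟨rfl, h_im⟩ := Prod.ext_iff.1 h
    refine ⟨huA, ?_⟩
    rw [mem_ball, Real.dist_eq, mul_comm z.im, ← show w'.im = w.im from h_im]
    exact abs_re_sub_lt_of_mem_ball hr hw' hz
  have hz_mem : z.re ∈ ball c.re (2 * Real.cosh r * √(z.im * w.im)) :=
    abs_re_sub_lt_of_mem_ball hr hz hw
  refine ((measure_mono h_subset).trans
    (volume_inter_ball_le_lineMaximalFunction hz_mem)).trans_eq ?_
  rw [← mul_assoc (ENNReal.ofReal _), ← ofReal_mul (by positivity), Real.sqrt_mul z.im_pos.le]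
  ring_nf

theorem hypMeasure_ball_inter_le (hA : MeasurableSet A) {c z : UpperHalfPlane} {r : ℝ}
    (hr : 0 ≤ r) (hz : z ∈ ball c r) :
    hypMeasure (ball c r ∩ cartesian ⁻¹' A) ≤
      ENNReal.ofReal (64 * Real.cosh r * √z.im) * sliceEnergy A z.re ^ (1 / 2 : ℝ) := by
  have hD : MeasurableSet (cartesian '' ball c r) :=
    measurableEmbedding_cartesian.measurableSet_image.2 measurableSet_ball
  have h_preimage : ball c r ∩ cartesian ⁻¹' A = cartesian ⁻¹' (cartesian '' ball c r ∩ A) := by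
    rw [preimage_inter, preimage_image_eq _ measurableEmbedding_cartesian.injective]
  calc hypMeasure (ball c r ∩ cartesian ⁻¹' A)
      = ∫⁻ v, volume {u | (u, v) ∈ cartesian '' ball c r ∩ A} ∂verticalMeasure := by
        rw [h_preimage, measurePreserving_cartesian.measure_preimage_emb
          measurableEmbedding_cartesian, Measure.prod_apply_symm (hD.inter hA)]
        rfl
    _ ≤ ∫⁻ v, ENNReal.ofReal (8 * Real.cosh r * √z.im) *
          (ENNReal.ofReal √v * lineMaximalFunction {u | (u, v) ∈ A} z.re) ∂verticalMeasure :=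
        lintegral_mono fun v => volume_slice_le A hr hz v
    _ ≤ ENNReal.ofReal (8 * Real.cosh r * √z.im) * (8 * sliceEnergy A z.re ^ (1 / 2 : ℝ)) := by
        rw [lintegral_const_mul' _ _ ofReal_ne_top]
        gcongr
        exact lintegral_sqrt_mul_lineMaximalFunction_le hA _
    _ = ENNReal.ofReal (64 * Real.cosh r * √z.im) * sliceEnergy A z.re ^ (1 / 2 : ℝ) := by
        rw [← mul_assoc, ← ofReal_ofNat 8, ← ofReal_mul (by positivity)]
        ring_nf

theorem maximalFunction_large_balls_le {ι : Type*} (hA : MeasurableSet A) {c : ι → UpperHalfPlane}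
    {r : ι → ℝ} {s : Set ι} (hr : ∀ i ∈ s, 0 ≤ r i) (hC : ∀ i ∈ s, 2 ≤ Real.cosh (r i))
    (z : UpperHalfPlane) :
    maximalFunction hypMeasure (fun i => ball (c i) (r i)) s (cartesian ⁻¹' A) z ≤
      192 * (sliceEnergy A z.re ^ (1 / 2 : ℝ) * ENNReal.ofReal √z.im) := by
  refine maximalFunction_le_iff.2 fun i hi hz => ENNReal.div_le_of_le_mul ?_
  calc hypMeasure (ball (c i) (r i) ∩ cartesian ⁻¹' A)
      ≤ ENNReal.ofReal (64 * Real.cosh (r i) * √z.im) * sliceEnergy A z.re ^ (1 / 2 : ℝ) :=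
        hypMeasure_ball_inter_le hA (hr i hi) hz
    _ = 64 * ENNReal.ofReal (Real.cosh (r i)) * ENNReal.ofReal √z.im *
          sliceEnergy A z.re ^ (1 / 2 : ℝ) := by
        rw [ofReal_mul (by positivity), ofReal_mul (by positivity), ofReal_ofNat]
    _ ≤ 64 * (3 * hypMeasure (ball (c i) (r i))) * ENNReal.ofReal √z.im *
          sliceEnergy A z.re ^ (1 / 2 : ℝ) := by
        gcongr; exact cosh_le_hypMeasure_ball _ (hr i hi) (hC i hi)
    _ = 192 * (sliceEnergy A z.re ^ (1 / 2 : ℝ) * ENNReal.ofReal √z.im) *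
          hypMeasure (ball (c i) (r i)) := by ring

theorem lorentz2inf_sqrt_sliceEnergy_mul_sqrt_le (hA : MeasurableSet A)
    (hA_top : volume.prod verticalMeasure A ≠ ∞) :
    lorentz2inf (volume.prod verticalMeasure)
        (fun p => sliceEnergy A p.1 ^ (1 / 2 : ℝ) * ENNReal.ofReal √p.2) ≤
      4 * volume.prod verticalMeasure A ^ (1 / 2 : ℝ) := by
  have h_energy := lintegral_sliceEnergy_le hA
  have h_finite : ∀ᵐ x, sliceEnergy A x ^ (1 / 2 : ℝ) ≠ ∞ := by
    filter_upwards [ae_lt_top (measurable_sliceEnergy hA)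
      (h_energy.trans_lt (mul_lt_top (by simp) hA_top.lt_top)).ne] with x hx
    finiteness
  have h_sq (x : ℝ) : (sliceEnergy A x ^ (1 / 2 : ℝ)) ^ 2 = sliceEnergy A x := by
    rw [← ENNReal.rpow_mul_natCast]; norm_num
  calc lorentz2inf (volume.prod verticalMeasure)
        (fun p => sliceEnergy A p.1 ^ (1 / 2 : ℝ) * ENNReal.ofReal √p.2)
      ≤ (∫⁻ x, (sliceEnergy A x ^ (1 / 2 : ℝ)) ^ 2) ^ (1 / 2 : ℝ) *
          lorentz2inf verticalMeasure (fun v => ENNReal.ofReal √v) :=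
        lorentz2inf_prod_mul_le (a := fun x => sliceEnergy A x ^ (1 / 2 : ℝ))
          (f := fun v => ENNReal.ofReal √v) ((measurable_sliceEnergy hA).pow_const _)
          (by fun_prop) h_finite
    _ ≤ (4 ^ 2 * volume.prod verticalMeasure A) ^ (1 / 2 : ℝ) * 1 := by
        simp_rw [h_sq]
        gcongr
        · exact h_energy.trans (by gcongr; norm_num)
        · exact lorentz2inf_verticalMeasure_sqrt_le_one
    _ = 4 * volume.prod verticalMeasure A ^ (1 / 2 : ℝ) := by
        rw [mul_one, ENNReal.mul_rpow_of_nonneg _ _ (by norm_num), ← ENNReal.rpow_natCast_mul]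
        norm_num

theorem hasRestrictedWeakType_large_balls {ι : Type*} {c : ι → UpperHalfPlane}
    {r : ι → ℝ} {s : Set ι} (hr : ∀ i ∈ s, 0 ≤ r i) (hC : ∀ i ∈ s, 2 ≤ Real.cosh (r i)) :
    HasRestrictedWeakType hypMeasure (fun i => ball (c i) (r i)) s 768 := by
  intro F hF hF_top
  obtain ⟨A, hA, rfl⟩ : ∃ A, MeasurableSet A ∧ cartesian ⁻¹' A = F :=
    ⟨cartesian '' F, measurableEmbedding_cartesian.measurableSet_image.2 hF,
      preimage_image_eq _ measurableEmbedding_cartesian.injective⟩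
  have h_measure : hypMeasure (cartesian ⁻¹' A) = volume.prod verticalMeasure A :=
    measurePreserving_cartesian.measure_preimage_emb measurableEmbedding_cartesian A
  rw [h_measure] at hF_top ⊢
  let g : ℝ × ℝ → ℝ≥0∞ := fun p => sliceEnergy A p.1 ^ (1 / 2 : ℝ) * ENNReal.ofReal √p.2
  have hg : Measurable g :=
    (((measurable_sliceEnergy hA).comp measurable_fst).pow_const _).mul (by fun_prop)
  calc lorentz2inf hypMeasure
        (maximalFunction hypMeasure (fun i => ball (c i) (r i)) s (cartesian ⁻¹' A))
      ≤ lorentz2inf hypMeasure (fun z => 192 * (g ∘ cartesian) z) :=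
        lorentz2inf_mono fun z => maximalFunction_large_balls_le hA hr hC z
    _ ≤ 192 * lorentz2inf hypMeasure (g ∘ cartesian) := lorentz2inf_const_mul_le ofNat_ne_top _
    _ = 192 * lorentz2inf (volume.prod verticalMeasure) g := by
        rw [lorentz2inf_comp_of_measurePreserving measurePreserving_cartesian hg]
    _ ≤ 192 * (4 * volume.prod verticalMeasure A ^ (1 / 2 : ℝ)) := by
        gcongr; exact lorentz2inf_sqrt_sliceEnergy_mul_sqrt_le hA hF_top
    _ = (768 : ℝ≥0) * volume.prod verticalMeasure A ^ (1 / 2 : ℝ) := by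
        rw [← mul_assoc]; norm_num

end LargeBalls

section SmallBalls

theorem sinh_le_mul_exp {x : ℝ} : Real.sinh x ≤ x * Real.exp x := by
  have h_exp : Real.exp (-x) = Real.exp (-(2 * x)) * Real.exp x := by
    rw [← Real.exp_add]; ring_nf
  rw [Real.sinh_eq, h_exp]
  nlinarith [Real.add_one_le_exp (-(2 * x)), Real.exp_pos x]

theorem hypMeasure_closedBall_le (z : UpperHalfPlane) {r : ℝ} (hr : 0 ≤ r) :
    hypMeasure (closedBall z r) ≤
      ENNReal.ofReal ((Real.exp r * Real.sinh r) ^ 2) * NNReal.pi := by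
  have hz := z.im_pos
  have h_density : ∀ w ∈ closedBall z r,
      ENNReal.ofReal (1 / w.im ^ 2) ≤ ENNReal.ofReal ((Real.exp r / z.im) ^ 2) := fun w hw => by
    have hw_im := w.im_pos
    have h_im : z.im ≤ w.im * Real.exp r :=
      (im_le_im_mul_exp_dist z w).trans (by gcongr; exact mem_closedBall'.1 hw)
    rw [← one_div_pow]
    gcongr ENNReal.ofReal (?_ ^ 2)
    rwa [div_le_div_iff₀ hw_im hz, one_mul, mul_comm]
  calc hypMeasure (closedBall z r)
      ≤ ENNReal.ofReal ((Real.exp r / z.im) ^ 2) * volume ((↑) '' closedBall z r : Set ℂ) := by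
        rw [hypMeasure, withDensity_apply _ measurableSet_closedBall,
          ← UpperHalfPlane.isOpenEmbedding_coe.measurableEmbedding.comap_apply,
          ← setLIntegral_const]
        exact setLIntegral_mono' measurableSet_closedBall h_density
    _ = ENNReal.ofReal ((Real.exp r * Real.sinh r) ^ 2) * NNReal.pi := by
        rw [image_coe_closedBall, Complex.volume_closedBall, ← mul_assoc,
          ← ENNReal.ofReal_pow (by positivity), ← ofReal_mul (by positivity)]
        congr 2
        field_simp

theorem le_hypMeasure_ball (z : UpperHalfPlane) {r : ℝ} (hr : 0 ≤ r) :
    ENNReal.ofReal ((Real.exp (-r) * Real.sinh r) ^ 2) * NNReal.pi ≤ hypMeasure (ball z r) := by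
  have hz := z.im_pos
  have h_density : ∀ w ∈ ball z r,
      ENNReal.ofReal ((Real.exp (-r) / z.im) ^ 2) ≤ ENNReal.ofReal (1 / w.im ^ 2) := fun w hw => by
    have hw_im := w.im_pos
    have h_im : w.im ≤ z.im * Real.exp r :=
      (im_le_im_mul_exp_dist w z).trans (by gcongr; exact (mem_ball.1 hw).le)
    rw [← one_div_pow]
    gcongr ENNReal.ofReal (?_ ^ 2)
    rwa [div_le_div_iff₀ hz hw_im, one_mul, Real.exp_neg, inv_mul_le_iff₀ (Real.exp_pos r),
      mul_comm]
  calc ENNReal.ofReal ((Real.exp (-r) * Real.sinh r) ^ 2) * NNReal.pi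
      = ENNReal.ofReal ((Real.exp (-r) / z.im) ^ 2) * volume ((↑) '' ball z r : Set ℂ) := by
        rw [image_coe_ball, Complex.volume_ball, ← mul_assoc,
          ← ENNReal.ofReal_pow (by positivity), ← ofReal_mul (by positivity)]
        congr 2
        field_simp
    _ ≤ hypMeasure (ball z r) := by
        rw [hypMeasure, withDensity_apply _ measurableSet_ball,
          ← UpperHalfPlane.isOpenEmbedding_coe.measurableEmbedding.comap_apply,
          ← setLIntegral_const]
        exact setLIntegral_mono' measurableSet_ball h_density

theorem hypMeasure_ball_ne_zero (z : UpperHalfPlane) {r : ℝ} (hr : 0 < r) :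
    hypMeasure (ball z r) ≠ 0 := by
  refine ((ENNReal.mul_pos ?_ ?_).trans_le (le_hypMeasure_ball z hr.le)).ne'
  · rw [ofReal_ne_zero_iff]; positivity
  · exact ENNReal.coe_ne_zero.2 NNReal.pi_ne_zero

theorem hypMeasure_closedBall_mul_le {a r R : ℝ} (ha : 0 < a) (hrR : r ≤ R) (z : UpperHalfPlane) :
    hypMeasure (closedBall z (a * r)) ≤
      ENNReal.ofReal (a * Real.exp ((2 * a + 1) * R)) ^ 2 * hypMeasure (ball z r) := by
  obtain hr | hr := lt_or_ge r 0
  · simp [closedBall_eq_empty.2 (mul_neg_of_pos_of_neg ha hr)]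
  have har : 0 ≤ a * r := by positivity
  have h_compare : Real.exp (a * r) * Real.sinh (a * r) ≤
      a * Real.exp ((2 * a + 1) * R) * (Real.exp (-r) * Real.sinh r) :=
    calc Real.exp (a * r) * Real.sinh (a * r)
        ≤ Real.exp (a * r) * (a * r * Real.exp (a * r)) := by gcongr; exact sinh_le_mul_exp
      _ = a * Real.exp ((2 * a + 1) * r) * (Real.exp (-r) * r) := by
        have h_exp : Real.exp (a * r) * Real.exp (a * r) =
            Real.exp ((2 * a + 1) * r) * Real.exp (-r) := by
          rw [← Real.exp_add, ← Real.exp_add]; ring_nf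
        linear_combination a * r * h_exp
      _ ≤ a * Real.exp ((2 * a + 1) * R) * (Real.exp (-r) * Real.sinh r) := by
        gcongr; exact Real.self_le_sinh_iff.2 hr
  calc hypMeasure (closedBall z (a * r))
      ≤ ENNReal.ofReal ((Real.exp (a * r) * Real.sinh (a * r)) ^ 2) * NNReal.pi :=
        hypMeasure_closedBall_le z har
    _ ≤ ENNReal.ofReal (a * Real.exp ((2 * a + 1) * R)) ^ 2 *
          (ENNReal.ofReal ((Real.exp (-r) * Real.sinh r) ^ 2) * NNReal.pi) := by
        rw [← mul_assoc, ← ENNReal.ofReal_pow (by positivity), ← ofReal_mul (by positivity),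
          ← mul_pow]
        gcongr
    _ ≤ ENNReal.ofReal (a * Real.exp ((2 * a + 1) * R)) ^ 2 * hypMeasure (ball z r) := by
        gcongr; exact le_hypMeasure_ball z hr

theorem hasRestrictedWeakType_small_balls {ι : Type*} (c : ι → UpperHalfPlane) {r : ι → ℝ}
    {s : Set ι} {R : ℝ} (hR : ∀ i ∈ s, r i ≤ R) :
    HasRestrictedWeakType hypMeasure (fun i => ball (c i) (r i)) s
      (5 * Real.exp ((2 * 5 + 1) * R)).toNNReal :=
  .of_mul_meas_lt_le fun _ _ hF_top => mul_meas_lt_maximalFunction_ball_le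
    (fun i hi => hypMeasure_closedBall_mul_le (by norm_num) (hR i hi) (c i))
    (fun _ _ => ⟨R, fun i hi _ => hR i hi⟩) hF_top

end SmallBalls

theorem two_le_cosh {r : ℝ} (hr : 3 ≤ r) : 2 ≤ Real.cosh r := by
  rw [Real.cosh_eq]
  linarith [Real.add_one_le_exp r, Real.exp_pos (-r)]

theorem exists_hasRestrictedWeakType_ball :
    ∃ A : ℝ≥0, ∀ (ι : Type*) (c : ι → UpperHalfPlane) (r : ι → ℝ),
      HasRestrictedWeakType hypMeasure (fun i => ball (c i) (r i)) univ A := by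
  refine ⟨(5 * Real.exp ((2 * 5 + 1) * 3)).toNNReal + 768, fun ι c r => ?_⟩
  rw [show univ = {i | r i ≤ 3} ∪ {i | 3 < r i} by ext i; simp [le_or_gt]]
  exact (hasRestrictedWeakType_small_balls c fun i hi => hi).union
    (hasRestrictedWeakType_large_balls (fun i (hi : 3 < r i) => by linarith)
      fun i (hi : 3 < r i) => two_le_cosh hi.le)

end

/-- **Covering lemma on the hyperbolic plane.**  From any family of metric balls whose union
has finite measure one can select a finite subfamily covering a fixed proportion of the union
and whose overlap function has small `L^{2,∞}` norm. -/
theorem covering_lemma :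
    ∃ C : ℝ≥0, ∀ (I : Type*) (c : I → UpperHalfPlane) (r : I → ℝ), (∀ i, 0 < r i) →
      hypMeasure (⋃ i, Metric.ball (c i) (r i)) < ∞ →
      ∃ J : Finset I,
        hypMeasure (⋃ i, Metric.ball (c i) (r i)) ≤
          C * hypMeasure (⋃ j ∈ J, Metric.ball (c j) (r j)) ∧
        lorentz2inf hypMeasure
            (fun z => ∑ j ∈ J, (Metric.ball (c j) (r j)).indicator (fun _ => (1 : ℝ≥0∞)) z) ≤
          C * hypMeasure (⋃ i, Metric.ball (c i) (r i)) ^ (1 / 2 : ℝ) := by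
  obtain ⟨A, hA⟩ := exists_hasRestrictedWeakType_ball
  refine ⟨32 * A ^ 2 + 4 * A, fun I c r hr h_top => ?_⟩
  obtain ⟨J, hJ_measure, hJ_lorentz⟩ := (hA I c r).exists_finset_covering
    (fun _ => Metric.isOpen_ball) (fun i => hypMeasure_ball_ne_zero (c i) (hr i)) h_top.ne
  refine ⟨J, hJ_measure.trans ?_, hJ_lorentz.trans ?_⟩
  all_goals push_cast; gcongr
  · exact le_self_add
  · exact le_add_self

end
end

section
/- There exists a constant C = C(m₁, m₂) ≥ 1 such that for every s ∈ ℝ and every measurable function F : ℝ → [0,∞], C⁻¹ · J ≤ e^{ρ s} ∫_{ℝ^{m₁} × ℝ^{m₂}} F(T_s(v,w)) dv dw ≤ C · J, where J = ∫_{|s|}^∞ F(t) · ψ̃(t,s) dt. (This is the integration formula of Lemma 1 computing the kernel relating the Iwasawa and Cartan decompositions.) -/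
/-!
The image of a Haar measure on a `d`-dimensional space under `v ↦ ‖v‖ ^ 2` is a multiple of the
Riesz measure `r_{d/2}`, where `r_α = u ^ (α - 1) du / Γ(α)`. With `c = cosh s`, `G = F ∘ arcosh`,
`α = m₁ / 2` and `β = m₂ / 2`, the left-hand side is therefore a constant times
`∫∫ G(√((c + u)² + p)) dr_β(p) dr_α(u)`, the powers of `eˢ` from the two dilations being exactly
absorbed by `e^{ρs}`. The substitution `√(b² + p) = b + q`, with `b = c + u`, turns the inner
integral into `∫ G(b + q) (b + q)^β · 2 ((2b + q)/(b + q))^(β - 1) dr_β(q)`, in which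
`1 ≤ (2b + q)/(b + q) ≤ 2`: this is the only inequality in the argument. What remains depends only
on `u + q`, so the semigroup law `r_α ∗ r_β = r_{α + β}` collapses it to
`∫ G(c + x) (c + x)^β dr_{α + β}(x)`, and `x = cosh t - cosh s` identifies this with `J / Γ(α + β)`.
-/

open MeasureTheory ENNReal NNReal

noncomputable section

/-- The kernel `ψ̃(t,s) = sinh t · (cosh t)^{m₂/2} · (cosh t − cosh s)^{(m₁+m₂−2)/2}`
(real powers; the factor `(cosh t)^{m₂/2}` is automatically `1` when `m₂ = 0`). -/
def psiT (m₁ m₂ : ℕ) (t s : ℝ) : ℝ :=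
  Real.sinh t * Real.cosh t ^ ((m₂ : ℝ) / 2) *
    (Real.cosh t - Real.cosh s) ^ (((m₁ : ℝ) + (m₂ : ℝ) - 2) / 2)

open Set Metric Filter Module

lemma lintegral_Ioi_deriv_mul_comp {f f' : ℝ → ℝ} {a : ℝ} (hf : ContinuousOn f (Ici a))
    (hf_top : Tendsto f atTop atTop) (hff' : ∀ x ∈ Ioi a, HasDerivAt f (f' x) x)
    (hf'_pos : ∀ x ∈ Ioi a, 0 < f' x) (g : ℝ → ℝ≥0∞) :
    ∫⁻ x in Ioi a, ENNReal.ofReal (f' x) * g (f x) = ∫⁻ y in Ioi (f a), g y := by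
  have hmono : StrictMonoOn f (Ici a) := by
    refine strictMonoOn_of_deriv_pos (convex_Ici a) hf fun x hx ↦ ?_
    rw [interior_Ici] at hx
    exact (hff' x hx).deriv ▸ hf'_pos x hx
  have himage : f '' Ioi a = Ioi (f a) := by
    refine Subset.antisymm ?_ fun y hy ↦ ?_
    · rintro _ ⟨x, hx, rfl⟩
      exact hmono self_mem_Ici (mem_Ioi.1 hx).le hx
    · obtain ⟨x, hx, rfl⟩ := intermediate_value_Ici hf hf_top (mem_Ioi.1 hy).le
      have hne : a ≠ x := fun h ↦ (mem_Ioi.1 hy).ne (congrArg f h)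
      exact ⟨x, lt_of_le_of_ne hx hne, rfl⟩
  rw [← himage, lintegral_image_eq_lintegral_deriv_mul_of_monotoneOn measurableSet_Ioi
    (fun x hx ↦ (hff' x hx).hasDerivWithinAt) (hmono.monotoneOn.mono Ioi_subset_Ici_self)]

lemma lintegral_Ioo_rpow_mul_sub_rpow {α β x : ℝ} (hα : 0 < α) (hβ : 0 < β) (hx : 0 < x) :
    ∫⁻ u in Ioo 0 x, ENNReal.ofReal (u ^ (α - 1) * (x - u) ^ (β - 1)) =
      ENNReal.ofReal (ProbabilityTheory.beta α β * x ^ (α + β - 1)) := by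
  have hbeta := ProbabilityTheory.beta_pos hα hβ
  have himage : (x * ·) '' Ioo (0 : ℝ) 1 = Ioo 0 x := by simp [image_mul_left_Ioo hx]
  rw [← himage, lintegral_image_eq_lintegral_deriv_mul_of_monotoneOn (f' := fun _ ↦ x)
    measurableSet_Ioo (fun y _ ↦ by simpa using ((hasDerivAt_id y).const_mul x).hasDerivWithinAt)
    (monotone_mul_left_of_nonneg hx.le |>.monotoneOn _)]
  have hscale : ∀ y ∈ Ioo (0 : ℝ) 1,
      ENNReal.ofReal x * ENNReal.ofReal ((x * y) ^ (α - 1) * (x - x * y) ^ (β - 1)) =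
        ENNReal.ofReal (ProbabilityTheory.beta α β * x ^ (α + β - 1)) *
          ENNReal.ofReal (1 / ProbabilityTheory.beta α β * y ^ (α - 1) * (1 - y) ^ (β - 1)) := by
    rintro y ⟨hy₀, hy₁⟩
    have hy₁' : 0 < 1 - y := sub_pos.2 hy₁
    have hpow : x ^ (α + β - 1) = x * x ^ (α - 1) * x ^ (β - 1) := by
      rw [← Real.rpow_one_add' hx.le (by simpa using hα.ne'), ← Real.rpow_add hx]
      ring_nf
    rw [← ENNReal.ofReal_mul hx.le, ← ENNReal.ofReal_mul (by positivity), ← mul_one_sub,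
      Real.mul_rpow hx.le hy₀.le, Real.mul_rpow hx.le hy₁'.le, hpow]
    congr 1
    field_simp
  rw [setLIntegral_congr_fun measurableSet_Ioo hscale, lintegral_const_mul _ (by fun_prop),
    ← ProbabilityTheory.lintegral_betaPDF, ProbabilityTheory.lintegral_betaPDF_eq_one hα hβ,
    mul_one]

lemma measure_ext_of_Iio {X : Type*} [TopologicalSpace X] [SecondCountableTopology X]
    [LinearOrder X] [OrderTopology X] [NoMaxOrder X] [Nonempty X] [MeasurableSpace X]
    [BorelSpace X] {μ ν : Measure X} (hμ : ∀ x, μ (Iio x) ≠ ∞)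
    (h : ∀ x, μ (Iio x) = ν (Iio x)) : μ = ν := by
  obtain ⟨u, hu⟩ := exists_seq_tendsto (atTop : Filter X)
  refine Measure.ext_of_generateFrom_of_iUnion (range Iio) (fun n ↦ Iio (u n))
    (BorelSpace.measurable_eq.trans (borel_eq_generateFrom_Iio X)) isPiSystem_Iio
    (eq_univ_of_forall fun x ↦ ?_) (fun n ↦ mem_range_self _) (fun n ↦ hμ _)
    (forall_mem_range.2 h)
  exact mem_iUnion.2 (hu.eventually_gt_atTop x).exists

lemma tendsto_cosh_atTop : Tendsto Real.cosh atTop atTop :=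
  tendsto_atTop_mono' atTop ((eventually_ge_atTop 0).mono fun t ht ↦
    (Real.self_le_sinh_iff.2 ht).trans (Real.sinh_lt_cosh t).le) tendsto_id

lemma eq_arcosh_sqrt_of_cosh_sq_eq {t x : ℝ} (ht : 0 ≤ t) (h : Real.cosh t ^ 2 = x) :
    t = Real.arcosh √x := by
  rw [← h, Real.sqrt_sq (Real.cosh_pos t).le, Real.arcosh_cosh ht]

@[fun_prop]
lemma measurable_arcosh : Measurable Real.arcosh := by
  unfold Real.arcosh
  fun_prop

/-- `IsComparable C x y` is the relation `x ≍ y` of agreement up to the factor `C`; the symmetric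
form avoids dividing by `C`. -/
def IsComparable (C : ℝ≥0) (x y : ℝ≥0∞) : Prop :=
  x ≤ C * y ∧ y ≤ C * x

namespace IsComparable

variable {C D : ℝ≥0} {x y z : ℝ≥0∞}

lemma refl (hC : 1 ≤ C) (x : ℝ≥0∞) : IsComparable C x x :=
  ⟨le_mul_of_one_le_left' (by exact_mod_cast hC), le_mul_of_one_le_left' (by exact_mod_cast hC)⟩

lemma mono (h : IsComparable C x y) (hCD : C ≤ D) : IsComparable D x y :=
  ⟨h.1.trans (by gcongr), h.2.trans (by gcongr)⟩

lemma symm (h : IsComparable C x y) : IsComparable C y x :=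
  And.symm h

lemma trans (hxy : IsComparable C x y) (hyz : IsComparable D y z) : IsComparable (C * D) x z := by
  constructor
  · calc x ≤ C * y := hxy.1
      _ ≤ C * (D * z) := by gcongr; exact hyz.1
      _ = ↑(C * D) * z := by rw [ENNReal.coe_mul, mul_assoc]
  · calc z ≤ D * y := hyz.2
      _ ≤ D * (C * x) := by gcongr; exact hxy.2
      _ = ↑(C * D) * x := by rw [ENNReal.coe_mul, mul_left_comm, mul_assoc]

lemma mul_right (h : IsComparable C x y) (z : ℝ≥0∞) : IsComparable C (x * z) (y * z) :=
  ⟨by rw [← mul_assoc]; gcongr; exact h.1, by rw [← mul_assoc]; gcongr; exact h.2⟩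

lemma lintegral {X : Type*} [MeasurableSpace X] {μ : Measure X} {f g : X → ℝ≥0∞}
    (h : ∀ᵐ a ∂μ, IsComparable C (f a) (g a)) :
    IsComparable C (∫⁻ a, f a ∂μ) (∫⁻ a, g a ∂μ) := by
  simp only [IsComparable, ← lintegral_const_mul' _ _ ENNReal.coe_ne_top]
  exact ⟨lintegral_mono_ae (h.mono fun _ ↦ And.left), lintegral_mono_ae (h.mono fun _ ↦ And.right)⟩

end IsComparable

lemma exists_isComparable_mul_left {k : ℝ≥0∞} (hk₀ : k ≠ 0) (hk : k ≠ ∞) :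
    ∃ C, ∀ x, IsComparable C (k * x) x := by
  lift k to ℝ≥0 using hk
  have hk₀' : k ≠ 0 := by exact_mod_cast hk₀
  have hone : IsComparable (max k k⁻¹) k 1 := by
    constructor
    · simp
    · calc (1 : ℝ≥0∞) = ↑(k⁻¹ * k) := by rw [inv_mul_cancel₀ hk₀', ENNReal.coe_one]
        _ ≤ ↑(max k k⁻¹) * k := by rw [ENNReal.coe_mul]; gcongr; exact le_max_right _ _
  exact ⟨_, fun x ↦ by simpa using hone.mul_right x⟩

lemma isComparable_two_mul_rpow {r : ℝ} (γ : ℝ) (hr₁ : 1 ≤ r) (hr₂ : r ≤ 2) :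
    IsComparable (2 * 2 ^ |γ|) (ENNReal.ofReal (2 * r ^ γ)) 1 := by
  have hr₀ : 0 < r := one_pos.trans_le hr₁
  have hC : ((2 * 2 ^ |γ| : ℝ≥0) : ℝ≥0∞) = ENNReal.ofReal (2 * 2 ^ |γ|) := by
    rw [ENNReal.ofReal, Real.toNNReal_mul two_pos.le, Real.toNNReal_rpow_of_nonneg two_pos.le,
      Real.toNNReal_ofNat]
  rw [IsComparable, mul_one, hC, ← ENNReal.ofReal_mul (by positivity), ENNReal.one_le_ofReal]
  constructor
  · gcongr
    calc r ^ γ ≤ r ^ |γ| := Real.rpow_le_rpow_of_exponent_le hr₁ (le_abs_self γ)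
      _ ≤ 2 ^ |γ| := by gcongr
  · have hinv : 1 ≤ 2 ^ |γ| * r ^ γ := calc
      1 = r ^ |γ| * r ^ (-|γ|) := by rw [← Real.rpow_add hr₀, add_neg_cancel, Real.rpow_zero]
      _ ≤ 2 ^ |γ| * r ^ γ := by
        gcongr
        exact neg_abs_le γ
    linarith

/-- The density `u ^ (α - 1) / Γ(α)` on `(0, ∞)` of the Riemann–Liouville integral of order `α`. -/
def rieszDensity (α : ℝ) : ℝ → ℝ≥0∞ :=
  (Ioi 0).indicator fun u ↦ ENNReal.ofReal (u ^ (α - 1) / Real.Gamma α)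

/-- The Riesz measures `u ^ (α - 1) du / Γ(α)` on `(0, ∞)`, which form a convolution semigroup in
`α ≥ 0`. At `α = 0` the density degenerates and its weak limit, the Dirac mass at the origin, is
used instead; this covers the case of a zero-dimensional space. -/
def rieszMeasure (α : ℝ) : Measure ℝ :=
  if α = 0 then Measure.dirac 0 else volume.withDensity (rieszDensity α)

@[fun_prop]
lemma measurable_rieszDensity (α : ℝ) : Measurable (rieszDensity α) :=
  Measurable.indicator (by fun_prop) measurableSet_Ioi

lemma rieszMeasure_zero : rieszMeasure 0 = Measure.dirac 0 :=
  if_pos rfl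

lemma rieszMeasure_of_pos {α : ℝ} (hα : 0 < α) :
    rieszMeasure α = volume.withDensity (rieszDensity α) :=
  if_neg hα.ne'

instance (α : ℝ) : SFinite (rieszMeasure α) := by
  rw [rieszMeasure]
  split_ifs <;> infer_instance

lemma lintegral_rieszMeasure {α : ℝ} (hα : 0 < α) (g : ℝ → ℝ≥0∞) :
    ∫⁻ u, g u ∂rieszMeasure α =
      ∫⁻ u in Ioi 0, ENNReal.ofReal (u ^ (α - 1) / Real.Gamma α) * g u := by
  rw [rieszMeasure_of_pos hα, rieszDensity, withDensity_indicator measurableSet_Ioi,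
    lintegral_withDensity_eq_lintegral_mul_non_measurable _ (by fun_prop) (by simp)]
  rfl

lemma ae_rieszMeasure_nonneg {α : ℝ} (hα : 0 ≤ α) : ∀ᵐ u ∂rieszMeasure α, 0 ≤ u := by
  obtain rfl | hα := hα.eq_or_lt
  · simp [rieszMeasure_zero, ae_dirac_eq]
  · rw [rieszMeasure_of_pos hα, rieszDensity, withDensity_indicator measurableSet_Ioi]
    exact (withDensity_absolutelyContinuous _ _).ae_le
      (ae_restrict_of_forall_mem measurableSet_Ioi fun _ hu ↦ (mem_Ioi.1 hu).le)

lemma rieszMeasure_Iio_of_nonpos {α x : ℝ} (hα : 0 ≤ α) (hx : x ≤ 0) :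
    rieszMeasure α (Iio x) = 0 :=
  measure_mono_null (fun _ hu ↦ not_le.2 (lt_of_lt_of_le hu hx)) (ae_rieszMeasure_nonneg hα)

lemma rieszMeasure_Iio_of_pos {α x : ℝ} (hα : 0 ≤ α) (hx : 0 < x) :
    rieszMeasure α (Iio x) = ENNReal.ofReal (x ^ α / Real.Gamma (α + 1)) := by
  obtain rfl | hα := hα.eq_or_lt
  · simp [rieszMeasure_zero, hx]
  have hΓ := Real.Gamma_pos_of_pos hα
  have hbeta := lintegral_Ioo_rpow_mul_sub_rpow hα one_pos hx
  simp only [sub_self, Real.rpow_zero, mul_one, add_sub_cancel_right, ProbabilityTheory.beta,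
    Real.Gamma_one] at hbeta
  rw [rieszMeasure_of_pos hα, withDensity_apply _ measurableSet_Iio, rieszDensity,
    setLIntegral_indicator measurableSet_Ioi, Ioi_inter_Iio]
  simp_rw [div_eq_inv_mul _ (Real.Gamma α), ENNReal.ofReal_mul (inv_nonneg.2 hΓ.le)]
  rw [lintegral_const_mul _ (by fun_prop), hbeta, ← ENNReal.ofReal_mul (inv_nonneg.2 hΓ.le)]
  congr 1
  field_simp

lemma rieszDensity_lconvolution {α β : ℝ} (hα : 0 < α) (hβ : 0 < β) :
    rieszDensity α ⋆ₗ rieszDensity β = rieszDensity (α + β) := by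
  ext x
  have hprod : ∀ u, rieszDensity α u * rieszDensity β (-u + x) =
      (Ioo 0 x).indicator (fun u ↦ ENNReal.ofReal (Real.Gamma α * Real.Gamma β)⁻¹ *
        ENNReal.ofReal (u ^ (α - 1) * (x - u) ^ (β - 1))) u := fun u ↦ by
    simp only [rieszDensity, indicator_apply, mem_Ioi, mem_Ioo, neg_add_eq_sub, sub_pos]
    by_cases hu : 0 < u <;> by_cases hux : u < x <;> simp only [hu, hux, if_true, if_false,
      mul_zero, zero_mul, and_self, and_false, false_and]
    rw [← ENNReal.ofReal_mul (by positivity), ← ENNReal.ofReal_mul (by positivity)]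
    congr 1
    field_simp
  rw [lconvolution_def, lintegral_congr hprod, lintegral_indicator measurableSet_Ioo,
    lintegral_const_mul _ (by fun_prop)]
  obtain hx | hx := le_or_gt x 0
  · simp [rieszDensity, hx]
  · rw [lintegral_Ioo_rpow_mul_sub_rpow hα hβ hx, ← ENNReal.ofReal_mul (by positivity),
      rieszDensity, indicator_of_mem (mem_Ioi.2 hx), ProbabilityTheory.beta]
    congr 1
    field_simp

lemma rieszMeasure_conv {α β : ℝ} (hα : 0 ≤ α) (hβ : 0 ≤ β) :
    rieszMeasure α ∗ rieszMeasure β = rieszMeasure (α + β) := by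
  obtain rfl | hα := hα.eq_or_lt
  · rw [rieszMeasure_zero, Measure.dirac_zero_conv, zero_add]
  obtain rfl | hβ := hβ.eq_or_lt
  · rw [rieszMeasure_zero, Measure.conv_dirac_zero, add_zero]
  rw [rieszMeasure_of_pos hα, rieszMeasure_of_pos hβ, rieszMeasure_of_pos (add_pos hα hβ),
    conv_withDensity_eq_lconvolution (by fun_prop) (by fun_prop), rieszDensity_lconvolution hα hβ]

lemma lintegral_comp_sqrt_rieszMeasure {b β : ℝ} (hb : 0 < b) (hβ : 0 < β) (G : ℝ → ℝ≥0∞) :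
    ∫⁻ p, G √(b ^ 2 + p) ∂rieszMeasure β =
      ∫⁻ q, ENNReal.ofReal (2 * ((2 * b + q) / (b + q)) ^ (β - 1)) *
        (ENNReal.ofReal ((b + q) ^ β) * G (b + q)) ∂rieszMeasure β := by
  have hderiv : ∀ q ∈ Ioi (0 : ℝ), HasDerivAt (fun q ↦ q * (2 * b + q)) (2 * (b + q)) q :=
    fun q _ ↦ ((hasDerivAt_id' q).fun_mul ((hasDerivAt_id' q).const_add (2 * b))).congr_deriv
      (by ring)
  have hsubst := lintegral_Ioi_deriv_mul_comp (f := fun q ↦ q * (2 * b + q)) (by fun_prop)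
    (tendsto_id.atTop_mul_atTop₀ (tendsto_atTop_add_const_left _ _ tendsto_id)) hderiv
    (fun q hq ↦ by have := mem_Ioi.1 hq; positivity)
    (fun p ↦ ENNReal.ofReal (p ^ (β - 1) / Real.Gamma β) * G √(b ^ 2 + p))
  rw [zero_mul] at hsubst
  rw [lintegral_rieszMeasure hβ, lintegral_rieszMeasure hβ, ← hsubst]
  refine setLIntegral_congr_fun measurableSet_Ioi fun q hq ↦ ?_
  have hq : 0 < q := hq
  have hbq : 0 < b + q := by positivity
  have hsqrt : √(b ^ 2 + q * (2 * b + q)) = b + q := by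
    rw [show b ^ 2 + q * (2 * b + q) = (b + q) ^ 2 by ring, Real.sqrt_sq hbq.le]
  have hdensity : 2 * (b + q) * ((q * (2 * b + q)) ^ (β - 1) / Real.Gamma β) =
      q ^ (β - 1) / Real.Gamma β * (2 * ((2 * b + q) / (b + q)) ^ (β - 1) * (b + q) ^ β) := by
    rw [Real.mul_rpow hq.le (by positivity), Real.div_rpow (by positivity) hbq.le,
      Real.rpow_sub_one hbq.ne']
    field_simp
  simp only [hsqrt, ← mul_assoc]
  rw [← ENNReal.ofReal_mul (by positivity), ← ENNReal.ofReal_mul (by positivity),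
    ← ENNReal.ofReal_mul (by positivity), hdensity, mul_assoc (q ^ (β - 1) / Real.Gamma β)]

lemma isComparable_lintegral_comp_sqrt_rieszMeasure {b β : ℝ} (hb : 0 < b) (hβ : 0 ≤ β)
    (G : ℝ → ℝ≥0∞) :
    IsComparable (2 * 2 ^ |β - 1|) (∫⁻ p, G √(b ^ 2 + p) ∂rieszMeasure β)
      (∫⁻ q, ENNReal.ofReal ((b + q) ^ β) * G (b + q) ∂rieszMeasure β) := by
  obtain rfl | hβ := hβ.eq_or_lt
  · simpa [rieszMeasure_zero, Real.sqrt_sq hb.le] using IsComparable.refl (by norm_num) (G b)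
  rw [lintegral_comp_sqrt_rieszMeasure hb hβ]
  refine IsComparable.lintegral ((ae_rieszMeasure_nonneg hβ.le).mono fun q hq ↦ ?_)
  have hbq : 0 < b + q := by positivity
  have hratio := isComparable_two_mul_rpow (β - 1)
    ((one_le_div hbq).2 (by linarith : b + q ≤ 2 * b + q))
    ((div_le_iff₀ hbq).2 (by linarith))
  simpa only [one_mul] using hratio.mul_right (ENNReal.ofReal ((b + q) ^ β) * G (b + q))

lemma isComparable_lintegral_lintegral_comp_sqrt_rieszMeasure {α β c : ℝ} (hα : 0 ≤ α)
    (hβ : 0 ≤ β) (hc : 0 < c) {G : ℝ → ℝ≥0∞} (hG : Measurable G) :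
    IsComparable (2 * 2 ^ |β - 1|)
      (∫⁻ u, ∫⁻ p, G √((c + u) ^ 2 + p) ∂rieszMeasure β ∂rieszMeasure α)
      (∫⁻ x, ENNReal.ofReal ((c + x) ^ β) * G (c + x) ∂rieszMeasure (α + β)) := by
  rw [← rieszMeasure_conv hα hβ, Measure.lintegral_conv (by fun_prop)]
  refine IsComparable.lintegral ((ae_rieszMeasure_nonneg hα).mono fun u hu ↦ ?_)
  simpa only [add_assoc] using
    isComparable_lintegral_comp_sqrt_rieszMeasure (add_pos_of_pos_of_nonneg hc hu) hβ G

/-- The factor between the image of the Haar measure `μ` under `v ↦ ‖v‖ ^ 2` and the Riesz measure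
of order half the dimension. For Lebesgue measure on `ℝᵈ` it is `π ^ (d / 2)`. -/
def normSqConst {E : Type*} [NormedAddCommGroup E] [NormedSpace ℝ E] [MeasurableSpace E]
    (μ : Measure E) : ℝ≥0∞ :=
  μ (ball 0 1) * ENNReal.ofReal (Real.Gamma (finrank ℝ E / 2 + 1))

section NormSq

variable {E : Type*} [NormedAddCommGroup E] [NormedSpace ℝ E] [MeasurableSpace E]

lemma normSqConst_ne_zero (μ : Measure E) [μ.IsOpenPosMeasure] : normSqConst μ ≠ 0 :=
  mul_ne_zero (measure_ball_pos μ 0 one_pos).ne'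
    (ENNReal.ofReal_pos.2 (Real.Gamma_pos_of_pos (by positivity))).ne'

variable [FiniteDimensional ℝ E]

lemma normSqConst_ne_top (μ : Measure E) [IsFiniteMeasureOnCompacts μ] : normSqConst μ ≠ ∞ :=
  mul_ne_top measure_ball_lt_top.ne ofReal_ne_top

variable [BorelSpace E] (μ : Measure E) [μ.IsAddHaarMeasure]

lemma smul_map_mul_norm_sq_addHaar {l : ℝ} (hl : 0 < l) :
    ENNReal.ofReal (l ^ ((finrank ℝ E : ℝ) / 2)) • μ.map (fun v ↦ l * ‖v‖ ^ 2) =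
      normSqConst μ • rieszMeasure (finrank ℝ E / 2) := by
  have hd : (0 : ℝ) ≤ finrank ℝ E / 2 := by positivity
  suffices h : ∀ x, ENNReal.ofReal (l ^ ((finrank ℝ E : ℝ) / 2)) *
      μ ((fun v ↦ l * ‖v‖ ^ 2) ⁻¹' Iio x) =
        normSqConst μ * rieszMeasure (finrank ℝ E / 2) (Iio x) by
    refine (measure_ext_of_Iio (fun x ↦ ?_) fun x ↦ ?_).symm
    · obtain hx | hx := le_or_gt x 0
      · simp [rieszMeasure_Iio_of_nonpos hd hx]
      · simpa [rieszMeasure_Iio_of_pos hd hx] using mul_ne_top (normSqConst_ne_top μ) ofReal_ne_top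
    · simp only [Measure.smul_apply, smul_eq_mul]
      rw [Measure.map_apply (by fun_prop) measurableSet_Iio, h]
  intro x
  obtain hx | hx := le_or_gt x 0
  · have hempty : (fun v : E ↦ l * ‖v‖ ^ 2) ⁻¹' Iio x = ∅ :=
      eq_empty_of_forall_notMem fun v hv ↦ (hx.trans (by positivity)).not_gt (mem_Iio.1 hv)
    rw [hempty, measure_empty, rieszMeasure_Iio_of_nonpos hd hx, mul_zero, mul_zero]
  have hball : (fun v : E ↦ l * ‖v‖ ^ 2) ⁻¹' Iio x = ball 0 √(x / l) := by
    ext v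
    rw [mem_preimage, mem_Iio, mem_ball_zero_iff, Real.lt_sqrt (norm_nonneg v), lt_div_iff₀' hl]
  have hpow : √(x / l) ^ finrank ℝ E = (x / l) ^ ((finrank ℝ E : ℝ) / 2) := by
    rw [Real.sqrt_eq_rpow, ← Real.rpow_natCast, ← Real.rpow_mul (by positivity),
      one_div_mul_eq_div]
  have hΓ : 0 < Real.Gamma ((finrank ℝ E : ℝ) / 2 + 1) := Real.Gamma_pos_of_pos (by positivity)
  rw [hball, Measure.addHaar_ball_of_pos μ 0 (by positivity), rieszMeasure_Iio_of_pos hd hx,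
    normSqConst, hpow, Real.div_rpow hx.le hl.le, mul_assoc, ← ENNReal.ofReal_mul hΓ.le,
    mul_div_cancel₀ _ hΓ.ne', ← mul_assoc, ← ENNReal.ofReal_mul (by positivity),
    mul_div_cancel₀ _ (by positivity), mul_comm]

lemma lintegral_comp_mul_norm_sq {l : ℝ} (hl : 0 < l) {g : ℝ → ℝ≥0∞} (hg : Measurable g) :
    ENNReal.ofReal (l ^ ((finrank ℝ E : ℝ) / 2)) * ∫⁻ v, g (l * ‖v‖ ^ 2) ∂μ =
      normSqConst μ * ∫⁻ u, g u ∂rieszMeasure (finrank ℝ E / 2) := by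
  have h := congrArg (fun ν ↦ ∫⁻ u, g u ∂ν) (smul_map_mul_norm_sq_addHaar μ hl)
  simp only [lintegral_smul_measure, smul_eq_mul] at h
  rwa [lintegral_map hg (by fun_prop)] at h

end NormSq

lemma lintegral_psiT {m₁ m₂ : ℕ} (hm : 0 < m₁ + m₂) (s : ℝ) (F : ℝ → ℝ≥0∞) :
    ∫⁻ t in Ioi |s|, F t * ENNReal.ofReal (psiT m₁ m₂ t s) =
      ENNReal.ofReal (Real.Gamma (m₁ / 2 + m₂ / 2)) *
        ∫⁻ x, ENNReal.ofReal ((Real.cosh s + x) ^ ((m₂ : ℝ) / 2)) *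
          F (Real.arcosh (Real.cosh s + x)) ∂rieszMeasure (m₁ / 2 + m₂ / 2) := by
  set γ : ℝ := m₁ / 2 + m₂ / 2 with hγ_def
  have hγ : 0 < γ := by
    rw [hγ_def, ← add_div]
    exact_mod_cast half_pos (Nat.cast_pos.2 hm)
  have hsubst := lintegral_Ioi_deriv_mul_comp (f := fun t ↦ Real.cosh t - Real.cosh s) (a := |s|)
    (by fun_prop) (tendsto_atTop_add_const_right _ _ tendsto_cosh_atTop)
    (fun t _ ↦ (Real.hasDerivAt_cosh t).sub_const _)
    (fun t ht ↦ Real.sinh_pos_iff.2 ((abs_nonneg s).trans_lt ht))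
  simp only [Real.cosh_abs, sub_self] at hsubst
  rw [lintegral_rieszMeasure hγ, ← lintegral_const_mul' _ _ ofReal_ne_top, ← hsubst]
  refine setLIntegral_congr_fun measurableSet_Ioi fun t ht ↦ ?_
  have ht₀ : 0 < t := (abs_nonneg s).trans_lt ht
  have hcosh : 0 < Real.cosh t - Real.cosh s := sub_pos.2 (Real.cosh_lt_cosh.2 (by
    rwa [abs_of_pos ht₀]))
  have hsinh : 0 < Real.sinh t := Real.sinh_pos_iff.2 ht₀
  simp only [add_sub_cancel, Real.arcosh_cosh ht₀.le, ← mul_assoc]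
  rw [mul_comm (F t), ← ENNReal.ofReal_mul hsinh.le, ← ENNReal.ofReal_mul (by positivity),
    ← ENNReal.ofReal_mul (by positivity), psiT]
  have hexp : ((m₁ : ℝ) + m₂ - 2) / 2 = γ - 1 := by ring
  rw [hexp]
  congr 2
  field_simp

section General

variable {V W : Type*} [NormedAddCommGroup V] [NormedSpace ℝ V] [FiniteDimensional ℝ V]
  [MeasurableSpace V] [BorelSpace V] [NormedAddCommGroup W] [NormedSpace ℝ W]
  [FiniteDimensional ℝ W] [MeasurableSpace W] [BorelSpace W]
  (μ : Measure V) [μ.IsAddHaarMeasure] (ν : Measure W) [ν.IsAddHaarMeasure]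

lemma lintegral_prod_comp_mul_norm_sq {k l : ℝ} (hk : 0 < k) (hl : 0 < l) {H : ℝ → ℝ → ℝ≥0∞}
    (hH : Measurable (Function.uncurry H)) :
    ENNReal.ofReal (k ^ ((finrank ℝ V : ℝ) / 2) * l ^ ((finrank ℝ W : ℝ) / 2)) *
        ∫⁻ p, H (k * ‖p.1‖ ^ 2) (l * ‖p.2‖ ^ 2) ∂μ.prod ν =
      normSqConst μ * normSqConst ν *
        ∫⁻ u, ∫⁻ p, H u p ∂rieszMeasure (finrank ℝ W / 2) ∂rieszMeasure (finrank ℝ V / 2) := by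
  have hinner : ∀ u, ENNReal.ofReal (l ^ ((finrank ℝ W : ℝ) / 2)) * ∫⁻ w, H u (l * ‖w‖ ^ 2) ∂ν =
      normSqConst ν * ∫⁻ p, H u p ∂rieszMeasure (finrank ℝ W / 2) := fun u ↦
    lintegral_comp_mul_norm_sq ν hl (by fun_prop)
  rw [ENNReal.ofReal_mul (by positivity), mul_assoc, lintegral_prod _ (by fun_prop),
    ← lintegral_const_mul' _ _ ofReal_ne_top]
  simp only [hinner]
  rw [lintegral_const_mul' _ _ (normSqConst_ne_top ν), mul_left_comm,
    lintegral_comp_mul_norm_sq μ hk (g := fun u ↦ ∫⁻ p, H u p ∂rieszMeasure (finrank ℝ W / 2))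
      (by fun_prop), mul_left_comm, mul_assoc]

lemma lintegral_comp_of_cosh_sq_eq {T : V → W → ℝ} {s : ℝ}
    (hT : ∀ v w, |s| ≤ T v w ∧ Real.cosh (T v w) ^ 2 =
      (Real.cosh s + Real.exp s * ‖v‖ ^ 2) ^ 2 + Real.exp (2 * s) * ‖w‖ ^ 2)
    {F : ℝ → ℝ≥0∞} (hF : Measurable F) :
    ENNReal.ofReal (Real.exp ((finrank ℝ V + 2 * finrank ℝ W) / 2 * s)) *
        ∫⁻ p, F (T p.1 p.2) ∂μ.prod ν =
      normSqConst μ * normSqConst ν *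
        ∫⁻ u, ∫⁻ p, F (Real.arcosh √((Real.cosh s + u) ^ 2 + p))
          ∂rieszMeasure (finrank ℝ W / 2) ∂rieszMeasure (finrank ℝ V / 2) := by
  have hexp : Real.exp ((finrank ℝ V + 2 * finrank ℝ W) / 2 * s) =
      Real.exp s ^ ((finrank ℝ V : ℝ) / 2) * Real.exp (2 * s) ^ ((finrank ℝ W : ℝ) / 2) := by
    rw [← Real.exp_mul, ← Real.exp_mul, ← Real.exp_add]
    ring_nf
  have hT' : ∀ v w, T v w = Real.arcosh
      √((Real.cosh s + Real.exp s * ‖v‖ ^ 2) ^ 2 + Real.exp (2 * s) * ‖w‖ ^ 2) := fun v w ↦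
    eq_arcosh_sqrt_of_cosh_sq_eq ((abs_nonneg s).trans (hT v w).1) (hT v w).2
  simp only [hT', hexp]
  exact lintegral_prod_comp_mul_norm_sq μ ν (Real.exp_pos s) (Real.exp_pos (2 * s))
    (H := fun u p ↦ F (Real.arcosh √((Real.cosh s + u) ^ 2 + p))) (by fun_prop)

theorem integration_formula_general (hVW : 0 < finrank ℝ V + finrank ℝ W) (T : ℝ → V → W → ℝ)
    (hT : ∀ s v w, |s| ≤ T s v w ∧ Real.cosh (T s v w) ^ 2 =
      (Real.cosh s + Real.exp s * ‖v‖ ^ 2) ^ 2 + Real.exp (2 * s) * ‖w‖ ^ 2) :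
    ∃ C : ℝ≥0, 1 ≤ C ∧ ∀ (s : ℝ) (F : ℝ → ℝ≥0∞), Measurable F →
      (C : ℝ≥0∞)⁻¹ *
          ∫⁻ t in Ioi |s|, F t * ENNReal.ofReal (psiT (finrank ℝ V) (finrank ℝ W) t s) ≤
        ENNReal.ofReal (Real.exp ((finrank ℝ V + 2 * finrank ℝ W) / 2 * s)) *
          ∫⁻ p, F (T s p.1 p.2) ∂μ.prod ν ∧
      ENNReal.ofReal (Real.exp ((finrank ℝ V + 2 * finrank ℝ W) / 2 * s)) *
          ∫⁻ p, F (T s p.1 p.2) ∂μ.prod ν ≤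
        C * ∫⁻ t in Ioi |s|, F t * ENNReal.ofReal (psiT (finrank ℝ V) (finrank ℝ W) t s) := by
  have hΓ : 0 < Real.Gamma ((finrank ℝ V : ℝ) / 2 + finrank ℝ W / 2) :=
    Real.Gamma_pos_of_pos (by rw [← add_div]; exact half_pos (by exact_mod_cast hVW))
  obtain ⟨A, hA⟩ := exists_isComparable_mul_left
    (mul_ne_zero (normSqConst_ne_zero μ) (normSqConst_ne_zero ν))
    (mul_ne_top (normSqConst_ne_top μ) (normSqConst_ne_top ν))
  obtain ⟨B, hB⟩ := exists_isComparable_mul_left (ENNReal.ofReal_pos.2 hΓ).ne' ofReal_ne_top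
  refine ⟨max 1 (A * (2 * 2 ^ |(finrank ℝ W : ℝ) / 2 - 1|) * B), le_max_left _ _, fun s F hF ↦ ?_⟩
  rw [lintegral_comp_of_cosh_sq_eq μ ν (hT s) hF, lintegral_psiT hVW]
  have hcomp := isComparable_lintegral_lintegral_comp_sqrt_rieszMeasure
    (α := finrank ℝ V / 2) (β := finrank ℝ W / 2) (by positivity) (by positivity)
    (Real.cosh_pos s) (hF.comp measurable_arcosh)
  have h := (((hA _).trans hcomp).trans (hB _).symm).mono (le_max_right 1 _)
  exact ⟨(ENNReal.inv_mul_le_iff (by simp) coe_ne_top).2 h.2, h.1⟩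

end General

/-- **Lemma 1**: the integration formula relating the Iwasawa and Cartan decompositions.
Here `T s v w` is the unique `t ≥ |s|` with
`(cosh t)² = (cosh s + eˢ|v|²)² + e^{2s}|w|²`, and `ρ = (m₁ + 2m₂)/2`. -/
theorem integration_formula (m₁ m₂ : ℕ) (hm₁ : 1 ≤ m₁)
    (T : ℝ → EuclideanSpace ℝ (Fin m₁) → EuclideanSpace ℝ (Fin m₂) → ℝ)
    (hT : ∀ (s : ℝ) (v : EuclideanSpace ℝ (Fin m₁)) (w : EuclideanSpace ℝ (Fin m₂)),
      |s| ≤ T s v w ∧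
      Real.cosh (T s v w) ^ 2 =
        (Real.cosh s + Real.exp s * ‖v‖ ^ 2) ^ 2 + Real.exp (2 * s) * ‖w‖ ^ 2) :
    ∃ C : ℝ≥0, 1 ≤ C ∧ ∀ (s : ℝ) (F : ℝ → ℝ≥0∞), Measurable F →
      ((C : ℝ≥0∞)⁻¹ * (∫⁻ t in Set.Ioi |s|, F t * ENNReal.ofReal (psiT m₁ m₂ t s)) ≤
        ENNReal.ofReal (Real.exp (((m₁ : ℝ) + 2 * (m₂ : ℝ)) / 2 * s)) *
          ∫⁻ p : EuclideanSpace ℝ (Fin m₁) × EuclideanSpace ℝ (Fin m₂),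
            F (T s p.1 p.2)) ∧
      (ENNReal.ofReal (Real.exp (((m₁ : ℝ) + 2 * (m₂ : ℝ)) / 2 * s)) *
          (∫⁻ p : EuclideanSpace ℝ (Fin m₁) × EuclideanSpace ℝ (Fin m₂),
            F (T s p.1 p.2)) ≤
        (C : ℝ≥0∞) * ∫⁻ t in Set.Ioi |s|, F t * ENNReal.ofReal (psiT m₁ m₂ t s)) := by
  simpa only [finrank_euclideanSpace_fin, ← Measure.volume_eq_prod] using
    integration_formula_general volume volume (by simpa using Or.inl (Nat.zero_lt_of_lt hm₁)) T hT

end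
end

section
/- There exists a constant C = C(m₁, m₂) such that for every s ∈ ℝ and every measurable set E ⊆ (0,∞), ∫_{|s|}^∞ 1_E(t) · ψ̃(t,s) dt ≤ C · ( ∫₀^∞ 1_E(t) · (sinh t)^{m₁} (sinh 2t)^{m₂} dt )^{1/2}. -/
open MeasureTheory ENNReal NNReal

noncomputable section

/-!
Write `μ = f(t) ψ̃(t,s) dt` on `(|s|, ∞)` with `0 ≤ f ≤ 1`. The square `μ × μ` is covered by the two
half-planes `{y ≤ x}` and `{x ≤ y}`, so `μ(ℝ)² ≤ 2 ∫ μ((-∞, t]) dμ(t)`. Bounding `f` by `1` and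
`(cosh x)^{m₂/2}` by `(cosh t)^{m₂/2}` in `μ((-∞, t])` leaves an exact derivative, so that
`μ((-∞, t])` is at most `(2 / (m₁ + m₂)) (cosh t)^{m₂/2} (cosh t - cosh s)^{(m₁+m₂)/2}`. The product
of this with `ψ̃(t,s)` is `(2 / (m₁ + m₂)) sinh t (cosh t)^{m₂} (cosh t - cosh s)^{m₁+m₂-1}`, and
`cosh t - cosh s ≤ sinh t` turns it into the weight `(sinh t)^{m₁} (sinh 2t)^{m₂}`.
-/

section Measure

variable {α : Type*} [LinearOrder α] [TopologicalSpace α] [OrderClosedTopology α]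
  [SecondCountableTopology α] [MeasurableSpace α] [OpensMeasurableSpace α]

lemma measure_univ_sq_le_two_mul_lintegral_measure_Iic (μ : Measure α) [SFinite μ] :
    μ Set.univ ^ 2 ≤ 2 * ∫⁻ t, μ (Set.Iic t) ∂μ := by
  have lower : (μ.prod μ) {p : α × α | p.2 ≤ p.1} = ∫⁻ t, μ (Set.Iic t) ∂μ :=
    Measure.prod_apply (measurableSet_le measurable_snd measurable_fst)
  have upper : (μ.prod μ) {p : α × α | p.1 ≤ p.2} = ∫⁻ t, μ (Set.Iic t) ∂μ :=
    Measure.prod_apply_symm (measurableSet_le measurable_fst measurable_snd)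
  have cover : (Set.univ : Set (α × α)) ⊆ {p | p.2 ≤ p.1} ∪ {p | p.1 ≤ p.2} :=
    fun p _ ↦ le_total p.2 p.1
  calc μ Set.univ ^ 2 = (μ.prod μ) Set.univ := by
        rw [sq, ← Measure.prod_prod, Set.univ_prod_univ]
    _ ≤ (μ.prod μ) {p | p.2 ≤ p.1} + (μ.prod μ) {p | p.1 ≤ p.2} :=
        (measure_mono cover).trans (measure_union_le _ _)
    _ = 2 * ∫⁻ t, μ (Set.Iic t) ∂μ := by rw [lower, upper, two_mul]

lemma sq_lintegral_mul_le_two_mul_lintegral_setLIntegral_Iic (μ : Measure α) [SFinite μ]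
    {f g : α → ℝ≥0∞} (hf : Measurable f) (hg : Measurable g) (hf1 : f ≤ 1) :
    (∫⁻ t, f t * g t ∂μ) ^ 2 ≤ 2 * ∫⁻ t, f t * (g t * ∫⁻ x in Set.Iic t, g x ∂μ) ∂μ := by
  set ν : Measure α := μ.withDensity (f * g)
  have measure_Iic_le (t : α) : ν (Set.Iic t) ≤ ∫⁻ x in Set.Iic t, g x ∂μ := by
    rw [withDensity_apply _ measurableSet_Iic]
    exact lintegral_mono fun x ↦ mul_le_of_le_one_left' (hf1 x)
  calc (∫⁻ t, f t * g t ∂μ) ^ 2 = ν Set.univ ^ 2 := by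
        rw [withDensity_apply _ .univ, Measure.restrict_univ]; rfl
    _ ≤ 2 * ∫⁻ t, ν (Set.Iic t) ∂ν := measure_univ_sq_le_two_mul_lintegral_measure_Iic ν
    _ ≤ 2 * ∫⁻ t, ∫⁻ x in Set.Iic t, g x ∂μ ∂ν := by gcongr with t; exact measure_Iic_le t
    _ ≤ 2 * ∫⁻ t, f t * (g t * ∫⁻ x in Set.Iic t, g x ∂μ) ∂μ := by
        gcongr 2 * ?_
        simpa only [Pi.mul_apply, mul_assoc] using
          lintegral_withDensity_le_lintegral_mul μ (hf.mul hg) fun t ↦ ∫⁻ x in Set.Iic t, g x ∂μ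

end Measure

lemma setLIntegral_deriv_mul_rpow_sub_le {f f' : ℝ → ℝ} {a b p : ℝ} (hp : 0 < p)
    (hmono : StrictMonoOn f (Set.Icc a b)) (hderiv : ∀ x ∈ Set.Ioc a b, HasDerivAt f (f' x) x) :
    ∫⁻ x in Set.Ioc a b, ENNReal.ofReal (f' x * (f x - f a) ^ (p - 1)) ≤
      ENNReal.ofReal ((f b - f a) ^ p / p) := by
  have sub_pos_of_mem {x : ℝ} (hx : x ∈ Set.Ioc a b) : 0 < f x - f a :=
    sub_pos.2 (hmono (Set.left_mem_Icc.2 (hx.1.le.trans hx.2)) (Set.Ioc_subset_Icc_self hx) hx.1)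
  set F : ℝ → ℝ := fun x ↦ (f x - f a) ^ p / p with hF
  have F_mono : MonotoneOn F (Set.Ioc a b) := fun x hx y hy hxy ↦ by
    have := sub_pos_of_mem hx
    have := hmono.monotoneOn (Set.Ioc_subset_Icc_self hx) (Set.Ioc_subset_Icc_self hy) hxy
    simp only [hF]
    gcongr
  have F_deriv : ∀ x ∈ Set.Ioc a b,
      HasDerivWithinAt F (f' x * (f x - f a) ^ (p - 1)) (Set.Ioc a b) x := fun x hx ↦ by
    have h := (((hderiv x hx).sub_const (f a)).rpow_const (p := p)
      (.inl (sub_pos_of_mem hx).ne')).div_const p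
    exact (h.congr_deriv (by field_simp)).hasDerivWithinAt
  have image_subset : F '' Set.Ioc a b ⊆ Set.Icc 0 (F b) := by
    rintro _ ⟨x, hx, rfl⟩
    exact ⟨div_nonneg (Real.rpow_nonneg (sub_pos_of_mem hx).le _) hp.le,
      F_mono hx (Set.right_mem_Ioc.2 (hx.1.trans_le hx.2)) hx.2⟩
  calc ∫⁻ x in Set.Ioc a b, ENNReal.ofReal (f' x * (f x - f a) ^ (p - 1))
      = volume (F '' Set.Ioc a b) :=
        lintegral_deriv_eq_volume_image_of_monotoneOn measurableSet_Ioc F_deriv F_mono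
    _ ≤ volume (Set.Icc 0 (F b)) := measure_mono image_subset
    _ = ENNReal.ofReal ((f b - f a) ^ p / p) := by rw [Real.volume_Icc, sub_zero]

lemma cosh_sub_cosh_pos {s t : ℝ} (hst : |s| < t) : 0 < Real.cosh t - Real.cosh s :=
  sub_pos.2 (Real.cosh_lt_cosh.2 (hst.trans_le (le_abs_self t)))

lemma cosh_sub_cosh_le_sinh (s : ℝ) {t : ℝ} (ht : 0 ≤ t) :
    Real.cosh t - Real.cosh s ≤ Real.sinh t := by
  have := Real.cosh_sub_sinh t
  have := Real.exp_le_one_iff.2 (neg_nonpos.2 ht)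
  linarith [Real.one_le_cosh s]

/-- The kernel `ψ̃` for real multiplicities `m₁, m₂`; for natural numbers it is `psiT`. -/
def psiKernel (m₁ m₂ t s : ℝ) : ℝ :=
  Real.sinh t * Real.cosh t ^ (m₂ / 2) * (Real.cosh t - Real.cosh s) ^ ((m₁ + m₂ - 2) / 2)

lemma measurable_psiKernel (m₁ m₂ s : ℝ) : Measurable fun t ↦ psiKernel m₁ m₂ t s := by
  have := Real.measurable_sinh
  have := Real.measurable_cosh
  unfold psiKernel
  fun_prop

section Kernel

variable {m₁ m₂ s t : ℝ}

lemma psiKernel_nonneg (hst : |s| < t) : 0 ≤ psiKernel m₁ m₂ t s := by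
  have := cosh_sub_cosh_pos hst
  have := Real.sinh_nonneg_iff.2 ((abs_nonneg s).trans hst.le)
  unfold psiKernel
  positivity

lemma setLIntegral_psiKernel_le (hm₂ : 0 ≤ m₂) (hm : 0 < m₁ + m₂) :
    ∫⁻ x in Set.Ioc |s| t, ENNReal.ofReal (psiKernel m₁ m₂ x s) ≤
      ENNReal.ofReal (Real.cosh t ^ (m₂ / 2) *
        ((Real.cosh t - Real.cosh s) ^ ((m₁ + m₂) / 2) / ((m₁ + m₂) / 2))) := by
  have cosh_rpow_nonneg : 0 ≤ Real.cosh t ^ (m₂ / 2) := Real.rpow_nonneg (Real.cosh_pos t).le _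
  have psiKernel_le : ∀ x ∈ Set.Ioc |s| t, psiKernel m₁ m₂ x s ≤ Real.cosh t ^ (m₂ / 2) *
      (Real.sinh x * (Real.cosh x - Real.cosh s) ^ ((m₁ + m₂) / 2 - 1)) := fun x hx ↦ by
    have hx0 : 0 ≤ x := (abs_nonneg s).trans hx.1.le
    have := Real.sinh_nonneg_iff.2 hx0
    have := cosh_sub_cosh_pos hx.1
    have : Real.cosh x ≤ Real.cosh t := Real.cosh_le_cosh.2 (abs_le_abs_of_nonneg hx0 hx.2)
    calc psiKernel m₁ m₂ x s = Real.cosh x ^ (m₂ / 2) *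
          (Real.sinh x * (Real.cosh x - Real.cosh s) ^ ((m₁ + m₂) / 2 - 1)) := by
          rw [psiKernel, show (m₁ + m₂ - 2) / 2 = (m₁ + m₂) / 2 - 1 by ring]; ring
      _ ≤ _ := by gcongr
  have cosh_strictMonoOn : StrictMonoOn Real.cosh (Set.Icc |s| t) :=
    Real.cosh_strictMonoOn.mono fun x hx ↦ (abs_nonneg s).trans hx.1
  calc ∫⁻ x in Set.Ioc |s| t, ENNReal.ofReal (psiKernel m₁ m₂ x s)
      ≤ ∫⁻ x in Set.Ioc |s| t, ENNReal.ofReal (Real.cosh t ^ (m₂ / 2)) *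
          ENNReal.ofReal (Real.sinh x * (Real.cosh x - Real.cosh s) ^ ((m₁ + m₂) / 2 - 1)) :=
        setLIntegral_mono' measurableSet_Ioc fun x hx ↦ by
          rw [← ENNReal.ofReal_mul cosh_rpow_nonneg]
          exact ENNReal.ofReal_le_ofReal (psiKernel_le x hx)
    _ ≤ ENNReal.ofReal (Real.cosh t ^ (m₂ / 2)) *
          ENNReal.ofReal ((Real.cosh t - Real.cosh s) ^ ((m₁ + m₂) / 2) / ((m₁ + m₂) / 2)) := by
        rw [lintegral_const_mul' _ _ ENNReal.ofReal_ne_top]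
        gcongr
        simpa only [Real.cosh_abs] using setLIntegral_deriv_mul_rpow_sub_le (half_pos hm)
          cosh_strictMonoOn fun x _ ↦ Real.hasDerivAt_cosh x
    _ = _ := (ENNReal.ofReal_mul cosh_rpow_nonneg).symm

lemma psiKernel_mul_cosh_sub_cosh_rpow_le (hm₂ : 0 ≤ m₂) (hm : 1 ≤ m₁ + m₂) (hst : |s| < t) :
    psiKernel m₁ m₂ t s *
        (Real.cosh t ^ (m₂ / 2) * (Real.cosh t - Real.cosh s) ^ ((m₁ + m₂) / 2)) ≤
      Real.sinh t ^ m₁ * Real.sinh (2 * t) ^ m₂ := by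
  have ht : 0 < t := (abs_nonneg s).trans_lt hst
  have hcosh : 0 < Real.cosh t := Real.cosh_pos t
  have hsinh : 0 < Real.sinh t := Real.sinh_pos_iff.2 ht
  have hsub : 0 < Real.cosh t - Real.cosh s := cosh_sub_cosh_pos hst
  have hsub_le := cosh_sub_cosh_le_sinh s ht.le
  calc psiKernel m₁ m₂ t s *
        (Real.cosh t ^ (m₂ / 2) * (Real.cosh t - Real.cosh s) ^ ((m₁ + m₂) / 2))
      = Real.sinh t * (Real.cosh t ^ (m₂ / 2) * Real.cosh t ^ (m₂ / 2)) *
          ((Real.cosh t - Real.cosh s) ^ ((m₁ + m₂ - 2) / 2) *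
            (Real.cosh t - Real.cosh s) ^ ((m₁ + m₂) / 2)) := by
        rw [psiKernel]; ring
    _ = Real.sinh t * Real.cosh t ^ m₂ * (Real.cosh t - Real.cosh s) ^ (m₁ + m₂ - 1) := by
        rw [← Real.rpow_add hcosh, ← Real.rpow_add hsub]; ring_nf
    _ ≤ Real.sinh t * Real.cosh t ^ m₂ * Real.sinh t ^ (m₁ + m₂ - 1) := by
        gcongr
    _ = Real.sinh t ^ m₁ * (Real.sinh t * Real.cosh t) ^ m₂ := by
        rw [Real.mul_rpow hsinh.le hcosh.le, Real.rpow_sub_one hsinh.ne', Real.rpow_add hsinh]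
        field_simp
    _ ≤ Real.sinh t ^ m₁ * Real.sinh (2 * t) ^ m₂ := by
        rw [Real.sinh_two_mul]
        gcongr
        nlinarith

lemma psiKernel_mul_setLIntegral_psiKernel_le (hm₂ : 0 ≤ m₂) (hm : 1 ≤ m₁ + m₂) (hst : |s| < t) :
    ENNReal.ofReal (psiKernel m₁ m₂ t s) *
        ∫⁻ x in Set.Ioc |s| t, ENNReal.ofReal (psiKernel m₁ m₂ x s) ≤
      2 * ENNReal.ofReal (Real.sinh t ^ m₁ * Real.sinh (2 * t) ^ m₂) := by
  have hψ : 0 ≤ psiKernel m₁ m₂ t s := psiKernel_nonneg hst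
  have hm_pos : 0 < m₁ + m₂ := one_pos.trans_le hm
  have two_div_le : 2 / (m₁ + m₂) ≤ 2 := div_le_self zero_le_two hm
  have hsub : 0 < Real.cosh t - Real.cosh s := cosh_sub_cosh_pos hst
  refine (mul_le_mul_right (setLIntegral_psiKernel_le hm₂ hm_pos) _).trans ?_
  rw [← ENNReal.ofReal_mul hψ, ← ENNReal.ofReal_ofNat, ← ENNReal.ofReal_mul zero_le_two]
  refine ENNReal.ofReal_le_ofReal ?_
  calc psiKernel m₁ m₂ t s * (Real.cosh t ^ (m₂ / 2) *
        ((Real.cosh t - Real.cosh s) ^ ((m₁ + m₂) / 2) / ((m₁ + m₂) / 2)))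
      = 2 / (m₁ + m₂) * (psiKernel m₁ m₂ t s *
          (Real.cosh t ^ (m₂ / 2) * (Real.cosh t - Real.cosh s) ^ ((m₁ + m₂) / 2))) := by
        field_simp
    _ ≤ 2 * (Real.sinh t ^ m₁ * Real.sinh (2 * t) ^ m₂) := by
        grw [two_div_le]
        gcongr 2 * ?_
        exact psiKernel_mul_cosh_sub_cosh_rpow_le hm₂ hm hst

end Kernel

theorem indicator_psi_estimate_general {m₁ m₂ : ℝ} (hm₂ : 0 ≤ m₂) (hm : 1 ≤ m₁ + m₂) (s : ℝ)
    {f : ℝ → ℝ≥0∞} (hf : Measurable f) (hf1 : f ≤ 1) :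
    ∫⁻ t in Set.Ioi |s|, f t * ENNReal.ofReal (psiKernel m₁ m₂ t s) ≤
      2 * (∫⁻ t in Set.Ioi (0 : ℝ),
        f t * ENNReal.ofReal (Real.sinh t ^ m₁ * Real.sinh (2 * t) ^ m₂)) ^ (1 / 2 : ℝ) := by
  set ψ : ℝ → ℝ≥0∞ := fun t ↦ ENNReal.ofReal (psiKernel m₁ m₂ t s)
  set w : ℝ → ℝ≥0∞ := fun t ↦ ENNReal.ofReal (Real.sinh t ^ m₁ * Real.sinh (2 * t) ^ m₂)
  have hψ : Measurable ψ := (measurable_psiKernel m₁ m₂ s).ennreal_ofReal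
  have pointwise : ∀ t ∈ Set.Ioi |s|, ψ t * ∫⁻ x in Set.Iic t, ψ x ∂volume.restrict (Set.Ioi |s|) ≤
      2 * w t := fun t ht ↦ by
    rw [Measure.restrict_restrict measurableSet_Iic, Set.inter_comm, Set.Ioi_inter_Iic]
    exact psiKernel_mul_setLIntegral_psiKernel_le hm₂ hm ht
  have sq_le : (∫⁻ t in Set.Ioi |s|, f t * ψ t) ^ 2 ≤
      (2 * (∫⁻ t in Set.Ioi (0 : ℝ), f t * w t) ^ (1 / 2 : ℝ)) ^ 2 :=
    calc (∫⁻ t in Set.Ioi |s|, f t * ψ t) ^ 2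
        ≤ 2 * ∫⁻ t in Set.Ioi |s|, f t *
            (ψ t * ∫⁻ x in Set.Iic t, ψ x ∂volume.restrict (Set.Ioi |s|)) :=
          sq_lintegral_mul_le_two_mul_lintegral_setLIntegral_Iic _ hf hψ hf1
      _ ≤ 2 * ∫⁻ t in Set.Ioi |s|, f t * (2 * w t) := by
          gcongr 2 * ?_
          exact setLIntegral_mono' measurableSet_Ioi fun t ht ↦ by grw [pointwise t ht]
      _ ≤ 2 * ∫⁻ t in Set.Ioi 0, f t * (2 * w t) := by
          gcongr
          exact abs_nonneg s
      _ = (2 * (∫⁻ t in Set.Ioi 0, f t * w t) ^ (1 / 2 : ℝ)) ^ 2 := by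
          simp only [mul_left_comm (f _)]
          rw [lintegral_const_mul' _ _ ENNReal.ofNat_ne_top, mul_pow, ← ENNReal.rpow_mul_natCast]
          norm_num [← mul_assoc]
  exact (ENNReal.pow_le_pow_left_iff two_ne_zero).1 sq_le

/-- Inequality (2.9): for any `s ∈ ℝ` and measurable `E ⊆ (0,∞)`,
`∫_{|s|}^∞ 1_E(t) ψ̃(t,s) dt ≤ C (∫₀^∞ 1_E(t) (sinh t)^{m₁} (sinh 2t)^{m₂} dt)^{1/2}`. -/
theorem indicator_psi_estimate (m₁ m₂ : ℕ) (hm₁ : 1 ≤ m₁) :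
    ∃ C : ℝ≥0, ∀ (s : ℝ) (E : Set ℝ), MeasurableSet E → E ⊆ Set.Ioi 0 →
      (∫⁻ t in Set.Ioi |s|,
          E.indicator (fun _ => (1 : ℝ≥0∞)) t * ENNReal.ofReal (psiT m₁ m₂ t s)) ≤
        C * (∫⁻ t in Set.Ioi (0 : ℝ),
          E.indicator (fun _ => (1 : ℝ≥0∞)) t *
            ENNReal.ofReal (Real.sinh t ^ m₁ * Real.sinh (2 * t) ^ m₂)) ^ (1 / 2 : ℝ) := by
  have hm : (1 : ℝ) ≤ m₁ + m₂ := mod_cast hm₁.trans (Nat.le_add_right m₁ m₂)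
  exact ⟨2, fun s E hE _ ↦ by
    simpa only [psiKernel, psiT, Real.rpow_natCast, ENNReal.coe_ofNat] using
      indicator_psi_estimate_general m₂.cast_nonneg hm s (measurable_const.indicator hE)
        (Set.indicator_le_self E 1)⟩

end
end

section
/- For every a ∈ ℝ and every measurable set E ⊆ ℝ, ∫_a^{a+1} 1_E(t) · (t − a)^{−1/2} dt ≤ 2 · ( Leb(E ∩ (a, a+1)) )^{1/2}, where Leb denotes one-dimensional Lebesgue measure. -/
open MeasureTheory ENNReal NNReal

/-!
Among the subsets of `(a, ∞)` of measure `m`, the interval `(a, a + m]` maximizes the integral of a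
decreasing function `f`. This is the bathtub principle: `f` is at least `f (a + m)` on the interval
and at most `f (a + m)` beyond it. For `f t = (t - a) ^ (-1 / 2)` the maximum is `2 * m ^ (1 / 2)`.
-/

open Set

theorem setLIntegral_le_setLIntegral_of_threshold {α : Type*} [MeasurableSpace α] {μ : Measure α}
    {f : α → ℝ≥0∞} {c : ℝ≥0∞} {s t : Set α} (ht : MeasurableSet t) (hst : μ s ≤ μ t)
    (h_ge : ∀ᵐ x ∂μ, x ∈ t → c ≤ f x) (h_le : ∀ᵐ x ∂μ, x ∉ t → f x ≤ c) :
    ∫⁻ x in s, f x ∂μ ≤ ∫⁻ x in t, f x ∂μ := by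
  -- Split `f` at height `c`: the part below `c` is controlled by measure, the excess lives on `t`.
  have excess_le : ∫⁻ x in s, (f x - c) ∂μ ≤ ∫⁻ x in t, (f x - c) ∂μ := by
    rw [← lintegral_indicator ht]
    refine (setLIntegral_le_lintegral s _).trans (lintegral_mono_ae ?_)
    filter_upwards [h_le] with x hx
    by_cases hxt : x ∈ t <;> simp [hxt, tsub_eq_zero_of_le, hx]
  calc ∫⁻ x in s, f x ∂μ
      ≤ ∫⁻ x in s, (c + (f x - c)) ∂μ := lintegral_mono fun _ ↦ le_add_tsub
    _ = c * μ s + ∫⁻ x in s, (f x - c) ∂μ := by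
      rw [lintegral_add_left measurable_const, setLIntegral_const]
    _ ≤ c * μ t + ∫⁻ x in t, (f x - c) ∂μ := by gcongr
    _ = ∫⁻ x in t, (c + (f x - c)) ∂μ := by
      rw [lintegral_add_left measurable_const, setLIntegral_const]
    _ = ∫⁻ x in t, f x ∂μ :=
      setLIntegral_congr_fun_ae ht <| h_ge.mono fun _ hx hxt ↦ add_tsub_cancel_of_le (hx hxt)

theorem setLIntegral_le_setLIntegral_Ioc_of_antitoneOn {f : ℝ → ℝ≥0∞} {a m : ℝ} {s : Set ℝ}
    (hf : AntitoneOn f (Ioi a)) (hs : s ⊆ Ioi a) (hsm : volume s ≤ ENNReal.ofReal m) :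
    ∫⁻ t in s, f t ≤ ∫⁻ t in Ioc a (a + m), f t := by
  rcases le_or_gt m 0 with hm | hm
  · have hs₀ : volume s = 0 := by simpa [ENNReal.ofReal_of_nonpos hm] using hsm
    simp [setLIntegral_measure_zero s f hs₀]
  have ham : a + m ∈ Ioi a := lt_add_of_pos_right a hm
  rw [← Measure.restrict_restrict_of_subset hs,
    ← Measure.restrict_restrict_of_subset (Ioc_subset_Ioi_self : Ioc a (a + m) ⊆ Ioi a)]
  refine setLIntegral_le_setLIntegral_of_threshold (c := f (a + m)) measurableSet_Ioc ?_ ?_ ?_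
  · rwa [Measure.restrict_eq_self _ hs, Measure.restrict_eq_self _ Ioc_subset_Ioi_self,
      Real.volume_Ioc, add_sub_cancel_left]
  · exact ae_restrict_of_forall_mem measurableSet_Ioi fun t hat ht ↦ hf hat ham ht.2
  · refine ae_restrict_of_forall_mem measurableSet_Ioi fun t hat ht ↦ ?_
    have hmt : a + m < t := not_le.1 fun h ↦ ht ⟨hat, h⟩
    exact hf ham hat hmt.le

theorem setLIntegral_Ioc_rpow_sub {a b r : ℝ} (hab : a ≤ b) (hr : -1 < r) :
    ∫⁻ t in Ioc a b, ENNReal.ofReal ((t - a) ^ r) =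
      ENNReal.ofReal ((b - a) ^ (r + 1) / (r + 1)) := by
  have hint : IntervalIntegrable (fun t ↦ (t - a) ^ r) volume a b := by
    simpa using
      (intervalIntegral.intervalIntegrable_rpow' (a := 0) (b := b - a) hr).comp_sub_right a
  have hnonneg : 0 ≤ᵐ[volume.restrict (Ioc a b)] fun t ↦ (t - a) ^ r :=
    ae_restrict_of_forall_mem measurableSet_Ioc fun t ht ↦
      Real.rpow_nonneg (sub_nonneg.2 ht.1.le) r
  rw [← ofReal_integral_eq_lintegral_ofReal hint.1 hnonneg,
    ← intervalIntegral.integral_of_le hab,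
    intervalIntegral.integral_comp_sub_right (fun t ↦ t ^ r) a, integral_rpow (.inl hr),
    sub_self, Real.zero_rpow (by linarith), sub_zero]

theorem setLIntegral_rpow_sub_le {a r : ℝ} {s : Set ℝ} (hs : s ⊆ Ioi a) (hr : -1 < r)
    (hr₀ : r ≤ 0) :
    ∫⁻ t in s, ENNReal.ofReal ((t - a) ^ r) ≤
      ENNReal.ofReal (r + 1)⁻¹ * volume s ^ (r + 1) := by
  have hr₁ : 0 < r + 1 := by linarith
  rcases eq_or_ne (volume s) ∞ with htop | hfin
  · simp [htop, hr₁, ENNReal.mul_top]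
  set m := (volume s).toReal
  have hm : 0 ≤ m := ENNReal.toReal_nonneg
  have hsm : volume s = ENNReal.ofReal m := (ENNReal.ofReal_toReal hfin).symm
  have hanti : AntitoneOn (fun t ↦ ENNReal.ofReal ((t - a) ^ r)) (Ioi a) := fun t ht u _ htu ↦
    ENNReal.ofReal_le_ofReal <|
      Real.rpow_le_rpow_of_nonpos (sub_pos.2 ht) (sub_le_sub_right htu a) hr₀
  calc ∫⁻ t in s, ENNReal.ofReal ((t - a) ^ r)
      ≤ ∫⁻ t in Ioc a (a + m), ENNReal.ofReal ((t - a) ^ r) :=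
        setLIntegral_le_setLIntegral_Ioc_of_antitoneOn hanti hs hsm.le
    _ = ENNReal.ofReal (m ^ (r + 1) / (r + 1)) := by
      rw [setLIntegral_Ioc_rpow_sub (by linarith) hr, add_sub_cancel_left]
    _ = ENNReal.ofReal (r + 1)⁻¹ * volume s ^ (r + 1) := by
      rw [hsm, ENNReal.ofReal_rpow_of_nonneg hm hr₁.le, ← ENNReal.ofReal_mul (by positivity),
        div_eq_inv_mul]

theorem indicator_rpow_estimate_general (a b : ℝ) {r : ℝ} (hr : -1 < r) (hr₀ : r ≤ 0)
    (E : Set ℝ) :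
    (∫⁻ t in Ioo a b, E.indicator (fun _ ↦ (1 : ℝ≥0∞)) t * ENNReal.ofReal ((t - a) ^ r)) ≤
      ENNReal.ofReal (r + 1)⁻¹ * volume (E ∩ Ioo a b) ^ (r + 1) :=
  calc ∫⁻ t in Ioo a b, E.indicator (fun _ ↦ (1 : ℝ≥0∞)) t * ENNReal.ofReal ((t - a) ^ r)
      = ∫⁻ t in Ioo a b, E.indicator (fun t ↦ ENNReal.ofReal ((t - a) ^ r)) t := by
        classical simp only [indicator_apply, ite_mul, one_mul, zero_mul]
    _ ≤ ∫⁻ t in E ∩ Ioo a b, ENNReal.ofReal ((t - a) ^ r) := by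
      rw [← Measure.restrict_restrict' measurableSet_Ioo]
      exact lintegral_indicator_le _ E
    _ ≤ ENNReal.ofReal (r + 1)⁻¹ * volume (E ∩ Ioo a b) ^ (r + 1) :=
      setLIntegral_rpow_sub_le (inter_subset_right.trans Ioo_subset_Ioi_self) hr hr₀

/-- For every `a ∈ ℝ` and every measurable set `E ⊆ ℝ`,
`∫_a^{a+1} 1_E(t) (t − a)^{−1/2} dt ≤ 2 (Leb(E ∩ (a, a+1)))^{1/2}`. -/
theorem indicator_rpow_estimate (a : ℝ) (E : Set ℝ) (hE : MeasurableSet E) :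
    (∫⁻ t in Set.Ioo a (a + 1),
        E.indicator (fun _ => (1 : ℝ≥0∞)) t * ENNReal.ofReal ((t - a) ^ (-(1 / 2) : ℝ))) ≤
      2 * (volume (E ∩ Set.Ioo a (a + 1))) ^ (1 / 2 : ℝ) := by
  have hr : (-2⁻¹ + 1 : ℝ) = 2⁻¹ := by norm_num
  simpa [hr] using
    indicator_rpow_estimate_general a (a + 1) (r := -(1 / 2)) (by norm_num) (by norm_num) E
end

section
/- Let δ ≠ 0 be a real number. There exists a constant C_δ such that for every measurable function f : ℝ → [0,∞], ∫_ℝ f(t) e^{δ t} dt ≤ C_δ · ‖f‖_{L^{2,1}(μ₂)}, where μ₂ is the measure e^{2δ t} dt on ℝ and ‖f‖_{L^{2,1}(μ₂)} = 2 ∫₀^∞ μ₂({t : f(t) > λ})^{1/2} dλ. -/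
open MeasureTheory ENNReal NNReal

/-!
Write `ν = e^{δt} dt` and `μ₂ = e^{2δt} dt`. On the part of a set `E` where `e^{δt} > s` we have
`e^{δt} ≤ s⁻¹ e^{2δt}`, while the part where `e^{δt} ≤ s` has `ν`-mass at most `s / |δ|`. Hence
`ν E ≤ s / |δ| + s⁻¹ μ₂ E`, and `s = μ₂ E ^ (1 / 2)` gives `ν E ≤ (|δ|⁻¹ + 1) μ₂ E ^ (1 / 2)`.
Applied to the superlevel sets of `f`, this bounds the integrand of the layer cake formula for
`∫ f dν`.
-/

section LayerCake

variable {α : Type*} [MeasurableSpace α] {f : α → ℝ≥0∞}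

theorem lintegral_eq_lintegral_Ioi_meas_ofReal_lt {ν : Measure α} (hf : AEMeasurable f ν) :
    ∫⁻ a, f a ∂ν = ∫⁻ l in Set.Ioi (0 : ℝ), ν {a | ENNReal.ofReal l < f a} := by
  by_cases hfin : ∀ᵐ a ∂ν, f a ≠ ∞
  · calc ∫⁻ a, f a ∂ν = ∫⁻ a, ENNReal.ofReal (f a).toReal ∂ν :=
          lintegral_congr_ae (hfin.mono fun a ha => (ofReal_toReal ha).symm)
      _ = ∫⁻ l in Set.Ioi (0 : ℝ), ν {a | l < (f a).toReal} :=
          lintegral_eq_lintegral_meas_lt ν (ae_of_all _ fun _ => toReal_nonneg) hf.ennreal_toReal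
      _ = ∫⁻ l in Set.Ioi (0 : ℝ), ν {a | ENNReal.ofReal l < f a} := by
          refine setLIntegral_congr_fun measurableSet_Ioi fun l hl => measure_congr ?_
          filter_upwards [hfin] with a ha
          exact propext (ofReal_lt_iff_lt_toReal (le_of_lt hl) ha).symm
  · have htop : ν {a | f a = ∞} ≠ 0 := by simpa [ae_iff] using hfin
    have hdiv : ∫⁻ l in Set.Ioi (0 : ℝ), ν {a | ENNReal.ofReal l < f a} = ∞ := by
      refine top_unique ?_
      calc ∞ = ∫⁻ _ in Set.Ioi (0 : ℝ), ν {a | f a = ∞} := by simp [mul_top, htop]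
        _ ≤ ∫⁻ l in Set.Ioi (0 : ℝ), ν {a | ENNReal.ofReal l < f a} := by
          gcongr with l a
          rintro (ha : f a = ∞)
          simp [ha]
    rw [hdiv, lintegral_eq_top_of_measure_eq_top_ne_zero hf htop]

theorem lintegral_le_mul_lintegral_rpow_meas_ofReal_lt {μ ν : Measure α} {C : ℝ≥0} {r : ℝ}
    (hνμ : ∀ E, MeasurableSet E → ν E ≤ C * μ E ^ r) (hf : Measurable f) :
    ∫⁻ a, f a ∂ν ≤ C * ∫⁻ l in Set.Ioi (0 : ℝ), μ {a | ENNReal.ofReal l < f a} ^ r := by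
  rw [lintegral_eq_lintegral_Ioi_meas_ofReal_lt hf.aemeasurable,
    ← lintegral_const_mul' _ _ coe_ne_top]
  exact lintegral_mono fun l => hνμ _ (measurableSet_lt measurable_const hf)

end LayerCake

section SublevelSets

variable {α : Type*} [MeasurableSpace α] {μ : Measure α} {w : α → ℝ≥0∞}

theorem lintegral_le_setLIntegral_le_add_inv_mul_lintegral_sq (hw : AEMeasurable w μ) {s : ℝ≥0}
    (hs : s ≠ 0) :
    ∫⁻ a, w a ∂μ ≤ ∫⁻ a in {a | w a ≤ s}, w a ∂μ + (s : ℝ≥0∞)⁻¹ * ∫⁻ a, w a ^ 2 ∂μ := by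
  have hpointwise (a : α) : w a ≤ {a | w a ≤ s}.indicator w a + (s : ℝ≥0∞)⁻¹ * w a ^ 2 := by
    by_cases ha : w a ≤ s
    · rw [Set.indicator_of_mem (by exact ha)]
      exact le_self_add
    · calc w a = (s : ℝ≥0∞)⁻¹ * (s * w a) :=
            (ENNReal.inv_mul_cancel_left (by simpa using hs) coe_ne_top).symm
        _ ≤ (s : ℝ≥0∞)⁻¹ * w a ^ 2 := by
            rw [sq]
            gcongr
            exact (not_le.mp ha).le
        _ ≤ {a | w a ≤ s}.indicator w a + (s : ℝ≥0∞)⁻¹ * w a ^ 2 := le_add_self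
  calc ∫⁻ a, w a ∂μ
      ≤ ∫⁻ a, ({a | w a ≤ s}.indicator w a + (s : ℝ≥0∞)⁻¹ * w a ^ 2) ∂μ :=
        lintegral_mono hpointwise
    _ = ∫⁻ a, {a | w a ≤ s}.indicator w a ∂μ + (s : ℝ≥0∞)⁻¹ * ∫⁻ a, w a ^ 2 ∂μ := by
        rw [lintegral_add_right' _ (by fun_prop), lintegral_const_mul'' _ (by fun_prop)]
    _ ≤ ∫⁻ a in {a | w a ≤ s}, w a ∂μ + (s : ℝ≥0∞)⁻¹ * ∫⁻ a, w a ^ 2 ∂μ :=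
        add_le_add (lintegral_indicator_le _ _) le_rfl

theorem lintegral_le_mul_lintegral_sq_rpow_half (hw : AEMeasurable w μ) {A : ℝ≥0∞}
    (hA : ∀ s : ℝ≥0, s ≠ 0 → ∫⁻ a in {a | w a ≤ s}, w a ∂μ ≤ A * s) :
    ∫⁻ a, w a ∂μ ≤ (A + 1) * (∫⁻ a, w a ^ 2 ∂μ) ^ (1 / 2 : ℝ) := by
  generalize hm : ∫⁻ a, w a ^ 2 ∂μ = m
  obtain hm_zero | hm_zero := eq_or_ne m 0
  · have hw_zero : w =ᵐ[μ] 0 := by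
      filter_upwards [(lintegral_eq_zero_iff' (by fun_prop)).1 (hm.trans hm_zero)] with a ha
      simpa using ha
    simp [lintegral_congr_ae hw_zero]
  obtain hm_top | hm_top := eq_or_ne m ∞
  · simp [hm_top]
  lift m to ℝ≥0 using hm_top
  have hm_ne : m ≠ 0 := by simpa using hm_zero
  set s := NNReal.sqrt m
  have hs : s ≠ 0 := by simpa [s] using hm_ne
  have hms : m = s * s := (NNReal.mul_self_sqrt m).symm
  have hroot : (m : ℝ≥0∞) ^ (1 / 2 : ℝ) = s := by
    rw [← coe_rpow_of_nonneg _ (by norm_num), ← NNReal.sqrt_eq_rpow]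
  calc ∫⁻ a, w a ∂μ ≤ ∫⁻ a in {a | w a ≤ s}, w a ∂μ + (s : ℝ≥0∞)⁻¹ * m :=
        hm ▸ lintegral_le_setLIntegral_le_add_inv_mul_lintegral_sq hw hs
    _ ≤ A * s + (s : ℝ≥0∞)⁻¹ * (s * s) := by
        gcongr
        · exact hA s hs
        · exact_mod_cast hms.le
    _ = (A + 1) * (m : ℝ≥0∞) ^ (1 / 2 : ℝ) := by
        rw [ENNReal.inv_mul_cancel_left (by simpa using hs) coe_ne_top, hroot, add_mul, one_mul]

end SublevelSets

section Exponential

variable {δ : ℝ}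

theorem setLIntegral_exp_mul_sublevel (hδ : δ ≠ 0) {s : ℝ} (hs : 0 < s) :
    ∫⁻ t in {t : ℝ | Real.exp (δ * t) ≤ s}, ENNReal.ofReal (Real.exp (δ * t)) =
      ENNReal.ofReal (s / |δ|) := by
  have hsublevel (t : ℝ) : Real.exp (δ * t) ≤ s ↔ t * δ ≤ Real.log s := by
    rw [← Real.le_log_iff_exp_le hs, mul_comm]
  have hexp_nonneg (S : Set ℝ) : 0 ≤ᵐ[volume.restrict S] fun t => Real.exp (δ * t) :=
    ae_of_all _ fun t => (Real.exp_pos _).le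
  rcases hδ.lt_or_gt with hneg | hpos
  · have hset : {t : ℝ | Real.exp (δ * t) ≤ s} = Set.Ici (Real.log s / δ) := by
      ext t
      exact (hsublevel t).trans (div_le_iff_of_neg hneg).symm
    rw [hset, setLIntegral_congr Ioi_ae_eq_Ici.symm,
      ← ofReal_integral_eq_lintegral_ofReal (integrableOn_exp_mul_Ioi hneg _) (hexp_nonneg _),
      integral_exp_mul_Ioi hneg, mul_div_cancel₀ _ hδ, Real.exp_log hs, abs_of_neg hneg, div_neg,
      neg_div]
  · have hset : {t : ℝ | Real.exp (δ * t) ≤ s} = Set.Iic (Real.log s / δ) := by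
      ext t
      exact (hsublevel t).trans (le_div_iff₀ hpos).symm
    rw [hset,
      ← ofReal_integral_eq_lintegral_ofReal (integrableOn_exp_mul_Iic hpos _) (hexp_nonneg _),
      integral_exp_mul_Iic hpos, mul_div_cancel₀ _ hδ, Real.exp_log hs, abs_of_pos hpos]

theorem withDensity_exp_mul_apply_le (hδ : δ ≠ 0) {E : Set ℝ} (hE : MeasurableSet E) :
    (volume.withDensity fun t => ENNReal.ofReal (Real.exp (δ * t))) E ≤
      (‖δ‖₊⁻¹ + 1 : ℝ≥0) *
        (volume.withDensity fun t => ENNReal.ofReal (Real.exp (2 * δ * t))) E ^ (1 / 2 : ℝ) := by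
  have hsq (t : ℝ) :
      ENNReal.ofReal (Real.exp (2 * δ * t)) = ENNReal.ofReal (Real.exp (δ * t)) ^ 2 := by
    rw [← ofReal_pow (Real.exp_pos _).le, ← Real.exp_nat_mul, Nat.cast_ofNat, mul_assoc]
  simp only [withDensity_apply _ hE, hsq, coe_add, ENNReal.coe_one]
  refine lintegral_le_mul_lintegral_sq_rpow_half (by fun_prop) fun s hs => ?_
  have hs_pos : 0 < (s : ℝ) := NNReal.coe_pos.2 (pos_iff_ne_zero.2 hs)
  calc ∫⁻ t in {t | ENNReal.ofReal (Real.exp (δ * t)) ≤ s},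
          ENNReal.ofReal (Real.exp (δ * t)) ∂volume.restrict E
      ≤ ∫⁻ t in {t | ENNReal.ofReal (Real.exp (δ * t)) ≤ s}, ENNReal.ofReal (Real.exp (δ * t)) :=
        lintegral_mono' (Measure.restrict_mono_measure Measure.restrict_le_self _) le_rfl
    _ = ∫⁻ t in {t | Real.exp (δ * t) ≤ s}, ENNReal.ofReal (Real.exp (δ * t)) := by
        simp only [ofReal_le_coe]
    _ = ENNReal.ofReal (s / |δ|) := setLIntegral_exp_mul_sublevel hδ hs_pos
    _ = (‖δ‖₊⁻¹ : ℝ≥0) * s := by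
        rw [div_eq_inv_mul, ofReal_mul (by positivity), ofReal_coe_nnreal, ← Real.norm_eq_abs,
          ← coe_nnnorm, ← NNReal.coe_inv, ofReal_coe_nnreal]

end Exponential

/-- **Lemma 3**: for `δ ≠ 0`, `‖f‖_{L¹(e^{δt}dt)} ≤ C_δ ‖f‖_{L^{2,1}(e^{2δt}dt)}`. -/
theorem L1_le_L21_exponential (δ : ℝ) (hδ : δ ≠ 0) :
    ∃ C : ℝ≥0, ∀ f : ℝ → ℝ≥0∞, Measurable f →
      (∫⁻ t, f t * ENNReal.ofReal (Real.exp (δ * t))) ≤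
        C * (2 * ∫⁻ l in Set.Ioi (0 : ℝ),
          ((volume.withDensity fun t => ENNReal.ofReal (Real.exp (2 * δ * t)))
              {t | ENNReal.ofReal l < f t}) ^ (1 / 2 : ℝ)) := by
  refine ⟨‖δ‖₊⁻¹ + 1, fun f hf => ?_⟩
  calc ∫⁻ t, f t * ENNReal.ofReal (Real.exp (δ * t))
      = ∫⁻ t, f t ∂volume.withDensity fun t => ENNReal.ofReal (Real.exp (δ * t)) := by
        rw [lintegral_withDensity_eq_lintegral_mul _ (by fun_prop) hf]
        simp only [Pi.mul_apply, mul_comm]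
    _ ≤ (‖δ‖₊⁻¹ + 1 : ℝ≥0) * ∫⁻ l in Set.Ioi (0 : ℝ),
          ((volume.withDensity fun t => ENNReal.ofReal (Real.exp (2 * δ * t)))
              {t | ENNReal.ofReal l < f t}) ^ (1 / 2 : ℝ) :=
        lintegral_le_mul_lintegral_rpow_meas_ofReal_lt
          (fun _ hE => withDensity_exp_mul_apply_le hδ hE) hf
    _ ≤ _ := by
        gcongr
        exact le_mul_of_one_le_left' one_le_two
end

section
/- There exists an absolute constant C such that for all σ-finite measure spaces (U, μ) and (V, ν) and every measurable function H : U × V → [0,∞], ( ∫_U ‖H(u, ·)‖_{L^{2,1}(ν)}² dμ(u) )^{1/2} ≤ C · ‖H‖_{L^{2,1}(μ ⊗ ν)}, where for a measure λ we write ‖h‖_{L^{2,1}(λ)} = 2 ∫₀^∞ λ({h > t})^{1/2} dt. -/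
open MeasureTheory ENNReal NNReal

noncomputable section

/-- The Lorentz quasi-norm `‖h‖_{L^{2,1}(λ)} = 2 ∫₀^∞ λ({h > t})^{1/2} dt`. -/
def lorentz21 {α : Type*} [MeasurableSpace α] (μ : Measure α) (f : α → ℝ≥0∞) : ℝ≥0∞ :=
  2 * ∫⁻ t in Set.Ioi (0 : ℝ), (μ {x | ENNReal.ofReal t < f x}) ^ (1 / 2 : ℝ)

/-!
For fixed `u`, the `L^{2,1}(ν)` quasi-norm of `H (u, ·)` is an integral over `t` of
`F u t = ν {v | t < H (u, v)} ^ (1 / 2)`, so Minkowski's integral inequality bounds its `L²(μ)` norm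
by the integral over `t` of the `L²(μ)` norm of `F · t`. By Tonelli the square of the latter norm is
`(μ ⊗ ν) {t < H}`, which gives the bound with constant `1`.
-/

section Minkowski

variable {α β : Type*} [MeasurableSpace α] [MeasurableSpace β] {μ : Measure α} {τ : Measure β}

lemma lintegral_mul_le_sqrt_mul_sqrt {f g : α → ℝ≥0∞} (hf : AEMeasurable f μ)
    (hg : AEMeasurable g μ) :
    ∫⁻ x, f x * g x ∂μ ≤
      (∫⁻ x, f x ^ 2 ∂μ) ^ (1 / 2 : ℝ) * (∫⁻ x, g x ^ 2 ∂μ) ^ (1 / 2 : ℝ) := by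
  simpa only [Pi.mul_apply, ENNReal.rpow_two] using
    ENNReal.lintegral_mul_le_Lp_mul_Lq μ Real.HolderConjugate.two_two hf hg

variable [SFinite τ]

lemma sq_lintegral_eq_lintegral_prod {f : β → ℝ≥0∞} (hf : AEMeasurable f τ) :
    (∫⁻ t, f t ∂τ) ^ 2 = ∫⁻ p, f p.1 * f p.2 ∂τ.prod τ := by
  rw [lintegral_prod_mul hf hf, sq]

variable [SFinite μ]

lemma aemeasurable_mul_slices {F : α → β → ℝ≥0∞}
    (hF : AEMeasurable (Function.uncurry F) (μ.prod τ)) :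
    AEMeasurable (Function.uncurry fun x (p : β × β) ↦ F x p.1 * F x p.2)
      (μ.prod (τ.prod τ)) := by
  have hfst := QuasiMeasurePreserving.prodMap (.id μ)
    (Measure.quasiMeasurePreserving_fst (μ := τ) (ν := τ))
  have hsnd := QuasiMeasurePreserving.prodMap (.id μ)
    (Measure.quasiMeasurePreserving_snd (μ := τ) (ν := τ))
  exact (hF.comp_quasiMeasurePreserving hfst).mul (hF.comp_quasiMeasurePreserving hsnd)

/-- **Minkowski's integral inequality** for the exponent `2`. -/
theorem lintegral_sq_lintegral_le {F : α → β → ℝ≥0∞}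
    (hF : AEMeasurable (Function.uncurry F) (μ.prod τ)) :
    ∫⁻ x, (∫⁻ t, F x t ∂τ) ^ 2 ∂μ ≤ (∫⁻ t, (∫⁻ x, F x t ^ 2 ∂μ) ^ (1 / 2 : ℝ) ∂τ) ^ 2 := by
  have hFx : ∀ᵐ x ∂μ, AEMeasurable (F x) τ :=
    hF.aestronglyMeasurable.prodMk_left.mono fun _ h ↦ h.aemeasurable
  have hFt : ∀ᵐ t ∂τ, AEMeasurable (F · t) μ :=
    hF.aestronglyMeasurable.prodMk_right.mono fun _ h ↦ h.aemeasurable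
  have hFt₁ : ∀ᵐ p ∂τ.prod τ, AEMeasurable (F · p.1) μ :=
    Measure.quasiMeasurePreserving_fst.ae hFt
  have hFt₂ : ∀ᵐ p ∂τ.prod τ, AEMeasurable (F · p.2) μ :=
    Measure.quasiMeasurePreserving_snd.ae hFt
  have hnorm : AEMeasurable (fun t ↦ (∫⁻ x, F x t ^ 2 ∂μ) ^ (1 / 2 : ℝ)) τ :=
    (AEMeasurable.lintegral_prod_left (hF.pow_const 2)).pow_const _
  calc ∫⁻ x, (∫⁻ t, F x t ∂τ) ^ 2 ∂μ
    _ = ∫⁻ x, ∫⁻ p, F x p.1 * F x p.2 ∂τ.prod τ ∂μ :=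
        lintegral_congr_ae (hFx.mono fun _ hx ↦ sq_lintegral_eq_lintegral_prod hx)
    _ = ∫⁻ p, ∫⁻ x, F x p.1 * F x p.2 ∂μ ∂τ.prod τ :=
        lintegral_lintegral_swap (aemeasurable_mul_slices hF)
    _ ≤ ∫⁻ p, (∫⁻ x, F x p.1 ^ 2 ∂μ) ^ (1 / 2 : ℝ) * (∫⁻ x, F x p.2 ^ 2 ∂μ) ^ (1 / 2 : ℝ)
          ∂τ.prod τ := by
        refine lintegral_mono_ae ?_
        filter_upwards [hFt₁, hFt₂] with p h₁ h₂ using lintegral_mul_le_sqrt_mul_sqrt h₁ h₂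
    _ = (∫⁻ t, (∫⁻ x, F x t ^ 2 ∂μ) ^ (1 / 2 : ℝ) ∂τ) ^ 2 :=
        (sq_lintegral_eq_lintegral_prod hnorm).symm

end Minkowski

section Lorentz

variable {U V : Type*} [MeasurableSpace U] [MeasurableSpace V] {μ : Measure U} {ν : Measure V}

lemma lorentz21_congr_ae {f g : U → ℝ≥0∞} (h : f =ᵐ[μ] g) : lorentz21 μ f = lorentz21 μ g := by
  have hlevel (t : ℝ) : μ {x | ENNReal.ofReal t < f x} = μ {x | ENNReal.ofReal t < g x} :=
    measure_congr (h.mono fun x hx ↦ congrArg (ENNReal.ofReal t < ·) hx)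
  simp only [lorentz21, hlevel]

variable [SFinite ν] {H : U × V → ℝ≥0∞}

lemma measurable_measure_slice_superlevel (hH : Measurable H) :
    Measurable fun q : U × ℝ ↦ ν {v | ENNReal.ofReal q.2 < H (q.1, v)} :=
  measurable_measure_prodMk_left (s := {z : (U × ℝ) × V | ENNReal.ofReal z.1.2 < H (z.1.1, z.2)})
    (measurableSet_lt (by fun_prop) (by fun_prop))

lemma lintegral_measure_slice_superlevel (hH : Measurable H) (a : ℝ≥0∞) :
    ∫⁻ u, ν {v | a < H (u, v)} ∂μ = μ.prod ν {z | a < H z} :=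
  (Measure.prod_apply (measurableSet_lt measurable_const hH)).symm

variable [SFinite μ]

lemma lintegral_lorentz21_sq_le (hH : Measurable H) :
    ∫⁻ u, lorentz21 ν (fun v ↦ H (u, v)) ^ 2 ∂μ ≤ lorentz21 (μ.prod ν) H ^ 2 := by
  let F (u : U) (t : ℝ) : ℝ≥0∞ := ν {v | ENNReal.ofReal t < H (u, v)} ^ (1 / 2 : ℝ)
  have hF : Measurable (Function.uncurry F) :=
    (measurable_measure_slice_superlevel hH).pow_const _
  have hsqrt (x : ℝ≥0∞) : (x ^ (1 / 2 : ℝ)) ^ 2 = x := by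
    simpa using ENNReal.rpow_inv_natCast_pow two_ne_zero x
  have hFsq (t : ℝ) : ∫⁻ u, F u t ^ 2 ∂μ = μ.prod ν {z | ENNReal.ofReal t < H z} := by
    simp only [F, hsqrt, lintegral_measure_slice_superlevel hH]
  calc ∫⁻ u, lorentz21 ν (fun v ↦ H (u, v)) ^ 2 ∂μ
    _ = 2 ^ 2 * ∫⁻ u, (∫⁻ t in Set.Ioi 0, F u t) ^ 2 ∂μ := by
        simp only [lorentz21, mul_pow, F]
        exact lintegral_const_mul' _ _ (by finiteness)
    _ ≤ 2 ^ 2 * (∫⁻ t in Set.Ioi 0, (∫⁻ u, F u t ^ 2 ∂μ) ^ (1 / 2 : ℝ)) ^ 2 := by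
        gcongr
        exact lintegral_sq_lintegral_le hF.aemeasurable
    _ = lorentz21 (μ.prod ν) H ^ 2 := by
        simp only [lorentz21, mul_pow, hFsq]

theorem lorentz21_fubini_general (hH : AEMeasurable H (μ.prod ν)) :
    (∫⁻ u, lorentz21 ν (fun v ↦ H (u, v)) ^ 2 ∂μ) ^ (1 / 2 : ℝ) ≤ lorentz21 (μ.prod ν) H := by
  have hslice : ∀ᵐ u ∂μ, lorentz21 ν (fun v ↦ H (u, v)) = lorentz21 ν fun v ↦ hH.mk H (u, v) :=
    (Measure.ae_ae_eq_curry_of_prod hH.ae_eq_mk).mono fun _ hu ↦ lorentz21_congr_ae hu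
  rw [one_div, ENNReal.rpow_inv_le_iff two_pos, ENNReal.rpow_two, lorentz21_congr_ae hH.ae_eq_mk]
  calc ∫⁻ u, lorentz21 ν (fun v ↦ H (u, v)) ^ 2 ∂μ
    _ = ∫⁻ u, lorentz21 ν (fun v ↦ hH.mk H (u, v)) ^ 2 ∂μ :=
        lintegral_congr_ae (hslice.mono fun _ hu ↦ congrArg (· ^ 2) hu)
    _ ≤ lorentz21 (μ.prod ν) (hH.mk H) ^ 2 := lintegral_lorentz21_sq_le hH.measurable_mk

end Lorentz

/-- **Lemma 5**: `(∫_U ‖H(u,·)‖_{L^{2,1}(ν)}² dμ(u))^{1/2} ≤ C ‖H‖_{L^{2,1}(μ⊗ν)}`. -/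
theorem lorentz21_fubini :
    ∃ C : ℝ≥0, ∀ (U V : Type*) [MeasurableSpace U] [MeasurableSpace V]
      (μ : Measure U) (ν : Measure V) [SigmaFinite μ] [SigmaFinite ν]
      (H : U × V → ℝ≥0∞), Measurable H →
        (∫⁻ u, (lorentz21 ν fun v => H (u, v)) ^ 2 ∂μ) ^ (1 / 2 : ℝ) ≤
          C * lorentz21 (μ.prod ν) H := by
  refine ⟨1, fun U V _ _ μ ν _ _ H hH ↦ ?_⟩
  simpa only [ENNReal.coe_one, one_mul] using lorentz21_fubini_general hH.aemeasurable

end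
end

section
/- For all measurable sets D ⊆ K and E ⊆ K', ∫_D ∫_E a(k, k') dν(k') dμ(k) ≤ ∫₀^{μ(D)} ∫₀^{ν(E)} a**(x, y) dy dx. -/
open MeasureTheory ENNReal NNReal

noncomputable section

/-- Nonincreasing rearrangement: `f*(x) = inf{λ ≥ 0 : μ({ω : f ω > λ}) ≤ x}`. -/
def rearr {Ω : Type*} [MeasurableSpace Ω] (μ : Measure Ω) (f : Ω → ℝ) (x : ℝ) : ℝ :=
  sInf {l : ℝ | 0 ≤ l ∧ μ {ω | l < f ω} ≤ ENNReal.ofReal x}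

/-- Rearrangement in the second variable: `a*(k, y)`. -/
def rearrSnd {K K' : Type*} [MeasurableSpace K'] (ν : Measure K')
    (a : K → K' → ℝ) (k : K) (y : ℝ) : ℝ :=
  rearr ν (a k) y

/-- Double rearrangement: `a**(x, y)` is the rearrangement in `k` of `k ↦ a*(k, y)`. -/
def rearrDouble {K K' : Type*} [MeasurableSpace K] [MeasurableSpace K']
    (μ : Measure K) (ν : Measure K') (a : K → K' → ℝ) (x y : ℝ) : ℝ :=
  rearr μ (fun k => rearrSnd ν a k y) x

/-! In one variable, `∫_D f dμ ≤ ∫₀^{μ(D)} f*` by the layer-cake formula, since `f*` exceeds `l`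
on an interval of length `μ {f > l} ≥ μ ({f > l} ∩ D)`. Apply this to `a k ·` for each `k`, exchange
the integrals, and apply it again to `k ↦ a*(k, y)` for each `y`. -/

section Rearr

variable {Ω T : Type*} [MeasurableSpace Ω] [MeasurableSpace T] {μ : Measure Ω} {f : Ω → ℝ}

lemma rearr_nonneg (μ : Measure Ω) (f : Ω → ℝ) (x : ℝ) : 0 ≤ rearr μ f x :=
  Real.sInf_nonneg fun _ h => h.1

lemma exists_lt_and_lt_measure_lt {l : ℝ} {c : ℝ≥0∞} (h : c < μ {ω | l < f ω}) :
    ∃ m, l < m ∧ c < μ {ω | m < f ω} := by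
  obtain ⟨u, hu_anti, hu_gt, hu_lim⟩ := exists_seq_strictAnti_tendsto l
  have hUnion : {ω | l < f ω} = ⋃ n, {ω | u n < f ω} := by
    ext ω
    simp only [Set.mem_ofPred_eq, Set.mem_iUnion]
    exact ⟨fun hω => (hu_lim.eventually_lt_const hω).exists, fun ⟨n, hn⟩ => (hu_gt n).trans hn⟩
  have hmono : Monotone fun n => {ω | u n < f ω} :=
    fun _ _ hnm _ hω => (hu_anti.antitone hnm).trans_lt hω
  rw [hUnion, hmono.measure_iUnion, lt_iSup_iff] at h
  obtain ⟨n, hn⟩ := h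
  exact ⟨u n, hu_gt n, hn⟩

lemma exists_nat_measure_lt_le [IsFiniteMeasure μ] (hf : AEMeasurable f μ) {c : ℝ≥0∞}
    (hc : c ≠ 0) : ∃ n : ℕ, μ {ω | (n : ℝ) < f ω} ≤ c := by
  have hanti : Antitone fun n : ℕ => {ω | (n : ℝ) < f ω} :=
    fun n m hnm ω (hω : (m : ℝ) < f ω) => (Nat.cast_le.2 hnm).trans_lt hω
  have hInter : ⋂ n : ℕ, {ω | (n : ℝ) < f ω} = ∅ :=
    Set.eq_empty_of_forall_notMem fun ω hω =>
      (exists_nat_ge (f ω)).elim fun n hn => hn.not_gt (Set.mem_iInter.1 hω n)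
  have hlim := tendsto_measure_iInter_atTop (μ := μ)
    (fun n : ℕ => nullMeasurableSet_lt aemeasurable_const hf) hanti ⟨0, measure_ne_top _ _⟩
  rw [hInter, measure_empty] at hlim
  exact (hlim.eventually_le_const hc.bot_lt).exists

/-- The second condition excludes the junk value `sInf ∅ = 0`. -/
lemma lt_rearr_iff {x l : ℝ} (hl : 0 ≤ l) :
    l < rearr μ f x ↔ ENNReal.ofReal x < μ {ω | l < f ω} ∧
      ∃ n : ℕ, μ {ω | (n : ℝ) < f ω} ≤ ENNReal.ofReal x := by
  constructor
  · intro h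
    refine ⟨not_le.1 fun hle => h.not_ge (csInf_le ⟨0, fun _ h => h.1⟩ ⟨hl, hle⟩), ?_⟩
    obtain ⟨b, -, hb⟩ : {b : ℝ | 0 ≤ b ∧ μ {ω | b < f ω} ≤ ENNReal.ofReal x}.Nonempty := by
      by_contra hempty
      rw [rearr, Set.not_nonempty_iff_eq_empty.1 hempty, Real.sInf_empty] at h
      exact h.not_ge hl
    obtain ⟨n, hn⟩ := exists_nat_ge b
    exact ⟨n, (measure_mono fun _ hω => hn.trans_lt hω).trans hb⟩
  · rintro ⟨h, n, hn⟩
    obtain ⟨m, hlm, hm⟩ := exists_lt_and_lt_measure_lt h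
    refine hlm.trans_le (le_csInf ⟨n, n.cast_nonneg, hn⟩ fun b hb => ?_)
    by_contra! hbm
    exact (hm.trans_le (measure_mono fun _ hω => hbm.trans hω)).not_ge hb.2

lemma measurable_rearr_of_measurable_measure_lt {F : T → Ω → ℝ} {g : T → ℝ}
    (hF : ∀ l, 0 ≤ l → Measurable fun t => μ {ω | l < F t ω}) (hg : Measurable g) :
    Measurable fun t => rearr μ (F t) (g t) := by
  refine measurable_of_Ioi fun l => ?_
  rcases lt_or_ge l 0 with hl | hl
  · convert MeasurableSet.univ
    exact Set.eq_univ_of_forall fun t => hl.trans_le (rearr_nonneg _ _ _)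
  · have hpre : (fun t => rearr μ (F t) (g t)) ⁻¹' Set.Ioi l =
        {t | ENNReal.ofReal (g t) < μ {ω | l < F t ω}} ∩
          ⋃ n : ℕ, {t | μ {ω | (n : ℝ) < F t ω} ≤ ENNReal.ofReal (g t)} := by
      ext t
      simp [lt_rearr_iff hl]
    rw [hpre]
    exact (measurableSet_lt hg.ennreal_ofReal (hF l hl)).inter <| .iUnion fun n =>
      measurableSet_le (hF n n.cast_nonneg) hg.ennreal_ofReal

lemma measurable_rearr (μ : Measure Ω) (f : Ω → ℝ) : Measurable (rearr μ f) :=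
  measurable_rearr_of_measurable_measure_lt (fun _ _ => measurable_const) measurable_id

lemma measurable_rearr_uncurry [SFinite μ] {F : T → Ω → ℝ}
    (hF : Measurable fun p : T × Ω => F p.1 p.2) :
    Measurable fun p : T × ℝ => rearr μ (F p.1) p.2 :=
  measurable_rearr_of_measurable_measure_lt
    (fun _ _ => (measurable_measure_prodMk_left (measurableSet_lt measurable_const hF)).comp
      measurable_fst)
    measurable_snd

lemma measure_lt_inter_le_volume_lt_rearr [IsFiniteMeasure μ] (hf : AEMeasurable f μ) (D : Set Ω)
    {l : ℝ} (hl : 0 ≤ l) :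
    μ ({ω | l < f ω} ∩ D) ≤ volume ({x | l < rearr μ f x} ∩ Set.Ioo 0 (μ D).toReal) := by
  have hsub : Set.Ioo 0 (μ ({ω | l < f ω} ∩ D)).toReal ⊆
      {x | l < rearr μ f x} ∩ Set.Ioo 0 (μ D).toReal := by
    rintro x ⟨hx0, hx⟩
    have hx' : ENNReal.ofReal x < μ ({ω | l < f ω} ∩ D) :=
      (ENNReal.ofReal_lt_iff_lt_toReal hx0.le (measure_ne_top _ _)).2 hx
    refine ⟨(lt_rearr_iff hl).2 ⟨hx'.trans_le (measure_mono Set.inter_subset_left), ?_⟩, hx0, ?_⟩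
    · exact exists_nat_measure_lt_le hf (ENNReal.ofReal_pos.2 hx0).ne'
    · exact hx.trans_le (ENNReal.toReal_mono (measure_ne_top _ _)
        (measure_mono Set.inter_subset_right))
  calc μ ({ω | l < f ω} ∩ D)
      = volume (Set.Ioo 0 (μ ({ω | l < f ω} ∩ D)).toReal) := by
        rw [Real.volume_Ioo, sub_zero, ENNReal.ofReal_toReal (measure_ne_top _ _)]
    _ ≤ volume ({x | l < rearr μ f x} ∩ Set.Ioo 0 (μ D).toReal) := measure_mono hsub

theorem setLIntegral_le_setLIntegral_rearr [IsFiniteMeasure μ] (hf : AEMeasurable f μ) (D : Set Ω)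
    (hf0 : 0 ≤ᵐ[μ.restrict D] f) :
    ∫⁻ ω in D, ENNReal.ofReal (f ω) ∂μ ≤
      ∫⁻ x in Set.Ioo 0 (μ D).toReal, ENNReal.ofReal (rearr μ f x) := by
  rw [lintegral_eq_lintegral_meas_lt _ hf0 hf.restrict,
    lintegral_eq_lintegral_meas_lt _ (ae_of_all _ (rearr_nonneg μ f))
      (measurable_rearr μ f).aemeasurable]
  refine setLIntegral_mono' measurableSet_Ioi fun l hl => ?_
  rw [Measure.restrict_apply₀ (nullMeasurableSet_lt aemeasurable_const hf.restrict)]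
  exact (measure_lt_inter_le_volume_lt_rearr hf D (le_of_lt hl)).trans
    (Measure.le_restrict_apply _ _)

end Rearr

theorem integral_le_rearrDouble_general {K K' : Type*} [MeasurableSpace K] [MeasurableSpace K']
    (μ : Measure K) (ν : Measure K') [IsFiniteMeasure μ] [IsFiniteMeasure ν]
    (a : K → K' → ℝ) (hmeas : Measurable fun p : K × K' => a p.1 p.2)
    (hpos : ∀ k k', 0 ≤ a k k') (D : Set K) (E : Set K') :
    (∫⁻ k in D, ∫⁻ k' in E, ENNReal.ofReal (a k k') ∂ν ∂μ) ≤
      ∫⁻ x in Set.Ioo (0 : ℝ) (μ D).toReal,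
        ∫⁻ y in Set.Ioo (0 : ℝ) (ν E).toReal,
          ENNReal.ofReal (rearrDouble μ ν a x y) := by
  have hSnd : Measurable fun p : K × ℝ => rearrSnd ν a p.1 p.2 :=
    measurable_rearr_uncurry (F := a) hmeas
  have hDouble : Measurable fun p : ℝ × ℝ => rearrDouble μ ν a p.2 p.1 :=
    measurable_rearr_uncurry (F := fun y k => rearrSnd ν a k y) (hSnd.comp measurable_swap)
  calc ∫⁻ k in D, ∫⁻ k' in E, ENNReal.ofReal (a k k') ∂ν ∂μ
      ≤ ∫⁻ k in D, (∫⁻ y in Set.Ioo 0 (ν E).toReal, ENNReal.ofReal (rearrSnd ν a k y)) ∂μ :=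
        lintegral_mono fun k => setLIntegral_le_setLIntegral_rearr
          (hmeas.comp measurable_prodMk_left).aemeasurable E (ae_of_all _ (hpos k))
    _ = ∫⁻ y in Set.Ioo 0 (ν E).toReal, ∫⁻ k in D, ENNReal.ofReal (rearrSnd ν a k y) ∂μ :=
        lintegral_lintegral_swap hSnd.ennreal_ofReal.aemeasurable
    _ ≤ ∫⁻ y in Set.Ioo 0 (ν E).toReal, ∫⁻ x in Set.Ioo 0 (μ D).toReal,
          ENNReal.ofReal (rearrDouble μ ν a x y) :=
        lintegral_mono fun y => setLIntegral_le_setLIntegral_rearr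
          (hSnd.comp measurable_prodMk_right).aemeasurable D
          (ae_of_all _ fun k => rearr_nonneg ν (a k) y)
    _ = ∫⁻ x in Set.Ioo 0 (μ D).toReal, ∫⁻ y in Set.Ioo 0 (ν E).toReal,
          ENNReal.ofReal (rearrDouble μ ν a x y) :=
        lintegral_lintegral_swap hDouble.ennreal_ofReal.aemeasurable

/-- **Lemma 7(b)(iii)**: for measurable `D ⊆ K`, `E ⊆ K'`,
`∫_D ∫_E a(k,k') dν dμ ≤ ∫₀^{μ(D)} ∫₀^{ν(E)} a**(x,y) dy dx`. -/
theorem integral_le_rearrDouble {K K' : Type*} [MeasurableSpace K] [MeasurableSpace K']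
    (μ : Measure K) (ν : Measure K') [IsProbabilityMeasure μ] [IsProbabilityMeasure ν]
    (a : K → K' → ℝ) (hmeas : Measurable fun p : K × K' => a p.1 p.2)
    (hpos : ∀ k k', 0 ≤ a k k')
    (D : Set K) (E : Set K') (hD : MeasurableSet D) (hE : MeasurableSet E) :
    (∫⁻ k in D, ∫⁻ k' in E, ENNReal.ofReal (a k k') ∂ν ∂μ) ≤
      ∫⁻ x in Set.Ioo (0 : ℝ) (μ D).toReal,
        ∫⁻ y in Set.Ioo (0 : ℝ) (ν E).toReal,
          ENNReal.ofReal (rearrDouble μ ν a x y) :=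
  integral_le_rearrDouble_general μ ν a hmeas hpos D E

end
end

section
/- Let ρ > 0. There exists a constant C = C(ρ) such that for all measurable functions F, H : (0,1] → [0,∞] and every measurable function G : (0,1] × (0,1] × (0,∞) → [0,1], ∫₀^∞ ∫₀^1 ∫₀^1 F(x) H(y) G(x,y,u) e^{ρ u} dy dx du ≤ C · ( ∫₀^1 F(x)² dx )^{1/2} · ( ∫₀^1 H(y)² dy )^{1/2} · ( ∫₀^∞ ∫₀^1 ∫₀^1 G(x,y,u) e^{2ρ u} dy dx du )^{1/2}. -/
open MeasureTheory ENNReal NNReal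

/-!
For fixed `x, y` put `g u = G x y u`. The symmetric integrand of
`(∫ g(u) e^{ρu} du)² = ∬ g(u) g(v) e^{ρu} e^{ρv} du dv` is twice as large as its part over `v ≤ u`,
where `g v ≤ 1` and `∫_{v ≤ u} e^{ρv} dv = e^{ρu} / ρ` bound the inner integral. Hence
`(∫ g(u) e^{ρu} du)² ≤ (2 / ρ) ∫ g(u) e^{2ρu} du`, and Cauchy–Schwarz in `(x, y)` concludes.
Of the weight `w u = e^{ρu}` only `∫_{v ≤ u} w ≤ c * w u` matters.
-/

section OrderedDomain

variable {T : Type*} [LinearOrder T] [TopologicalSpace T] [OrderClosedTopology T]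
  [SecondCountableTopology T] [MeasurableSpace T] [OpensMeasurableSpace T]
  {τ : Measure T} [SFinite τ]

lemma sq_lintegral_le_two_mul_lintegral_mul_setLIntegral_Iic {f : T → ℝ≥0∞}
    (hf : AEMeasurable f τ) :
    (∫⁻ u, f u ∂τ) ^ 2 ≤ 2 * ∫⁻ u, f u * ∫⁻ v in Set.Iic u, f v ∂τ ∂τ := by
  let k : T → T → ℝ≥0∞ := fun u v => f u * (Set.Iic u).indicator f v
  have hk : AEMeasurable (Function.uncurry k) (τ.prod τ) :=
    hf.comp_fst.mul <|
      hf.comp_snd.indicator (measurableSet_le measurable_snd measurable_fst)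
  have le_add_swap (u v : T) : f u * f v ≤ k u v + k v u := by
    rcases le_total v u with h | h
    · simp [k, h]
    · simp [k, h, mul_comm]
  have lintegral_k (u : T) : ∫⁻ v, k u v ∂τ = f u * ∫⁻ v in Set.Iic u, f v ∂τ := by
    rw [lintegral_const_mul'' _ (hf.indicator measurableSet_Iic),
      lintegral_indicator measurableSet_Iic]
  calc (∫⁻ u, f u ∂τ) ^ 2 = ∫⁻ u, ∫⁻ v, f u * f v ∂τ ∂τ := by
        rw [sq, lintegral_lintegral_mul hf hf]
    _ ≤ ∫⁻ u, ∫⁻ v, (k u v + k v u) ∂τ ∂τ :=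
        lintegral_mono fun u => lintegral_mono fun v => le_add_swap u v
    _ = ∫⁻ u, ∫⁻ v, k u v ∂τ ∂τ + ∫⁻ u, ∫⁻ v, k v u ∂τ ∂τ := by
        rw [lintegral_lintegral (hk.add hk.prod_swap), lintegral_lintegral hk,
          lintegral_lintegral hk.prod_swap]
        exact lintegral_add_left' hk _
    _ = 2 * ∫⁻ u, f u * ∫⁻ v in Set.Iic u, f v ∂τ ∂τ := by
        rw [← lintegral_lintegral_swap hk, ← two_mul]
        simp only [lintegral_k]

lemma lintegral_mul_le_rpow_half_mul_of_setLIntegral_Iic_le {c : ℝ≥0∞} {g w : T → ℝ≥0∞}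
    (hg : AEMeasurable g τ) (hw : AEMeasurable w τ) (hg_le : ∀ u, g u ≤ 1)
    (hwc : ∀ u, ∫⁻ v in Set.Iic u, w v ∂τ ≤ c * w u) :
    ∫⁻ u, g u * w u ∂τ ≤ (2 * c) ^ (1 / 2 : ℝ) * (∫⁻ u, g u * w u ^ 2 ∂τ) ^ (1 / 2 : ℝ) := by
  have setLIntegral_le (u : T) : ∫⁻ v in Set.Iic u, g v * w v ∂τ ≤ c * w u :=
    (lintegral_mono fun v => mul_le_of_le_one_left' (hg_le v)).trans (hwc u)
  have sq_le : (∫⁻ u, g u * w u ∂τ) ^ 2 ≤ 2 * c * ∫⁻ u, g u * w u ^ 2 ∂τ :=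
    calc (∫⁻ u, g u * w u ∂τ) ^ 2
        ≤ 2 * ∫⁻ u, g u * w u * ∫⁻ v in Set.Iic u, g v * w v ∂τ ∂τ :=
          sq_lintegral_le_two_mul_lintegral_mul_setLIntegral_Iic (hg.mul hw)
      _ ≤ 2 * ∫⁻ u, g u * w u * (c * w u) ∂τ := by gcongr with u; exact setLIntegral_le u
      _ = 2 * ∫⁻ u, c * (g u * w u ^ 2) ∂τ := by congr! 3 with u; ring
      _ = 2 * c * ∫⁻ u, g u * w u ^ 2 ∂τ := by
          rw [lintegral_const_mul'' c (f := fun u => g u * w u ^ 2) (hg.mul (hw.pow_const 2)),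
            mul_assoc]
  rw [← ENNReal.mul_rpow_of_nonneg _ _ (by norm_num), one_div, ENNReal.le_rpow_inv_iff two_pos,
    ENNReal.rpow_two]
  exact sq_le

end OrderedDomain

section ProductMeasure

variable {X Y T : Type*} [MeasurableSpace X] [MeasurableSpace Y] [MeasurableSpace T]
  {μ : Measure X} {ν : Measure Y} {τ : Measure T} [SFinite ν]

lemma lintegral_lintegral_lintegral_eq_lintegral_prod [SFinite μ] [SFinite τ]
    {φ : T → X × Y → ℝ≥0∞} (hφ : Measurable (Function.uncurry φ)) :
    ∫⁻ t, ∫⁻ x, ∫⁻ y, φ t (x, y) ∂ν ∂μ ∂τ = ∫⁻ p, ∫⁻ t, φ t p ∂τ ∂μ.prod ν := by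
  rw [← lintegral_lintegral_swap hφ.aemeasurable]
  exact lintegral_congr fun t => (lintegral_prod _ hφ.of_uncurry_left.aemeasurable).symm

lemma lintegral_prod_mul_mul_rpow_half_le {F : X → ℝ≥0∞} {H : Y → ℝ≥0∞} {K : X × Y → ℝ≥0∞}
    (hF : AEMeasurable F μ) (hH : AEMeasurable H ν) (hK : AEMeasurable K (μ.prod ν)) :
    ∫⁻ p, F p.1 * H p.2 * K p ^ (1 / 2 : ℝ) ∂μ.prod ν ≤
      (∫⁻ x, F x ^ 2 ∂μ) ^ (1 / 2 : ℝ) * (∫⁻ y, H y ^ 2 ∂ν) ^ (1 / 2 : ℝ) *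
        (∫⁻ p, K p ∂μ.prod ν) ^ (1 / 2 : ℝ) := by
  have lintegral_sq : ∫⁻ p, (F p.1 * H p.2) ^ (2 : ℝ) ∂μ.prod ν =
      (∫⁻ x, F x ^ 2 ∂μ) * ∫⁻ y, H y ^ 2 ∂ν := by
    simp only [ENNReal.rpow_two, mul_pow]
    exact lintegral_prod_mul (hF.pow_const 2) (hH.pow_const 2)
  have rpow_half_sq (p : X × Y) : (K p ^ (1 / 2 : ℝ)) ^ (2 : ℝ) = K p := by
    rw [one_div, ENNReal.rpow_inv_rpow two_ne_zero]
  calc ∫⁻ p, F p.1 * H p.2 * K p ^ (1 / 2 : ℝ) ∂μ.prod ν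
      ≤ (∫⁻ p, (F p.1 * H p.2) ^ (2 : ℝ) ∂μ.prod ν) ^ (1 / 2 : ℝ) *
          (∫⁻ p, (K p ^ (1 / 2 : ℝ)) ^ (2 : ℝ) ∂μ.prod ν) ^ (1 / 2 : ℝ) :=
        ENNReal.lintegral_mul_le_Lp_mul_Lq _ Real.HolderConjugate.two_two
          (hF.comp_fst.mul hH.comp_snd) (hK.pow_const _)
    _ = _ := by
        simp only [lintegral_sq, rpow_half_sq]
        rw [ENNReal.mul_rpow_of_nonneg _ _ (by norm_num)]

end ProductMeasure

lemma setLIntegral_Iic_ofReal_exp_mul {ρ : ℝ} (hρ : 0 < ρ) (a : ℝ) :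
    ∫⁻ u in Set.Iic a, ENNReal.ofReal (Real.exp (ρ * u)) =
      ENNReal.ofReal ρ⁻¹ * ENNReal.ofReal (Real.exp (ρ * a)) := by
  rw [← ofReal_integral_eq_lintegral_ofReal (integrableOn_exp_mul_Iic hρ a)
      (.of_forall fun u => (Real.exp_pos _).le),
    integral_exp_mul_Iic hρ a, ← ENNReal.ofReal_mul (inv_nonneg.2 hρ.le), div_eq_inv_mul]

lemma ofReal_exp_two_mul_mul (ρ u : ℝ) :
    ENNReal.ofReal (Real.exp (2 * ρ * u)) = ENNReal.ofReal (Real.exp (ρ * u)) ^ 2 := by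
  rw [← ENNReal.ofReal_pow (Real.exp_pos _).le, ← Real.exp_nat_mul, Nat.cast_ofNat, mul_assoc]

theorem trilinear_exponential_estimate_general {X Y T : Type*}
    [MeasurableSpace X] [MeasurableSpace Y] [LinearOrder T] [TopologicalSpace T]
    [OrderClosedTopology T] [SecondCountableTopology T] [MeasurableSpace T]
    [OpensMeasurableSpace T] {μ : Measure X} {ν : Measure Y} {τ : Measure T}
    [SFinite μ] [SFinite ν] [SFinite τ] {c : ℝ≥0∞} {w : T → ℝ≥0∞} (hw : Measurable w)
    (hwc : ∀ u, ∫⁻ v in Set.Iic u, w v ∂τ ≤ c * w u)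
    {F : X → ℝ≥0∞} {H : Y → ℝ≥0∞} {G : X → Y → T → ℝ≥0∞} (hF : Measurable F) (hH : Measurable H)
    (hG : Measurable fun p : X × Y × T => G p.1 p.2.1 p.2.2) (hG_le : ∀ x y u, G x y u ≤ 1) :
    ∫⁻ u, ∫⁻ x, ∫⁻ y, F x * H y * G x y u * w u ∂ν ∂μ ∂τ ≤
      (2 * c) ^ (1 / 2 : ℝ) * (∫⁻ x, F x ^ 2 ∂μ) ^ (1 / 2 : ℝ) *
        (∫⁻ y, H y ^ 2 ∂ν) ^ (1 / 2 : ℝ) *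
        (∫⁻ u, ∫⁻ x, ∫⁻ y, G x y u * w u ^ 2 ∂ν ∂μ ∂τ) ^ (1 / 2 : ℝ) := by
  let K : X × Y → ℝ≥0∞ := fun p => ∫⁻ u, G p.1 p.2 u * w u ^ 2 ∂τ
  have hG' : Measurable fun q : T × X × Y => G q.2.1 q.2.2 q.1 :=
    hG.comp (f := fun q : T × X × Y => (q.2.1, q.2.2, q.1)) (by fun_prop)
  have hGw : Measurable fun q : T × X × Y => G q.2.1 q.2.2 q.1 * w q.1 ^ 2 := by fun_prop
  have hG_slice (p : X × Y) : Measurable (G p.1 p.2) := hG'.comp measurable_prodMk_right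
  have hK : Measurable K := hGw.lintegral_prod_left'
  have lintegral_weight_le (p : X × Y) :
      ∫⁻ u, G p.1 p.2 u * w u ∂τ ≤ (2 * c) ^ (1 / 2 : ℝ) * K p ^ (1 / 2 : ℝ) :=
    lintegral_mul_le_rpow_half_mul_of_setLIntegral_Iic_le (hG_slice p).aemeasurable
      hw.aemeasurable (hG_le p.1 p.2) hwc
  calc ∫⁻ u, ∫⁻ x, ∫⁻ y, F x * H y * G x y u * w u ∂ν ∂μ ∂τ
      = ∫⁻ p, ∫⁻ u, F p.1 * H p.2 * G p.1 p.2 u * w u ∂τ ∂μ.prod ν :=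
        lintegral_lintegral_lintegral_eq_lintegral_prod
          (φ := fun u p => F p.1 * H p.2 * G p.1 p.2 u * w u) (by fun_prop)
    _ = ∫⁻ p, F p.1 * H p.2 * ∫⁻ u, G p.1 p.2 u * w u ∂τ ∂μ.prod ν := by
        refine lintegral_congr fun p => ?_
        simp only [mul_assoc (F p.1 * H p.2)]
        exact lintegral_const_mul _ ((hG_slice p).mul hw)
    _ ≤ ∫⁻ p, (2 * c) ^ (1 / 2 : ℝ) * (F p.1 * H p.2 * K p ^ (1 / 2 : ℝ)) ∂μ.prod ν := by
        refine lintegral_mono fun p => ?_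
        rw [mul_left_comm]
        gcongr
        exact lintegral_weight_le p
    _ = (2 * c) ^ (1 / 2 : ℝ) * ∫⁻ p, F p.1 * H p.2 * K p ^ (1 / 2 : ℝ) ∂μ.prod ν :=
        lintegral_const_mul _ (by fun_prop)
    _ ≤ (2 * c) ^ (1 / 2 : ℝ) * ((∫⁻ x, F x ^ 2 ∂μ) ^ (1 / 2 : ℝ) *
          (∫⁻ y, H y ^ 2 ∂ν) ^ (1 / 2 : ℝ) * (∫⁻ p, K p ∂μ.prod ν) ^ (1 / 2 : ℝ)) := by
        gcongr
        exact lintegral_prod_mul_mul_rpow_half_le hF.aemeasurable hH.aemeasurable hK.aemeasurable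
    _ = _ := by
        rw [← lintegral_lintegral_lintegral_eq_lintegral_prod
          (φ := fun u p => G p.1 p.2 u * w u ^ 2) hGw]
        simp only [mul_assoc]

/-- **Step 4 estimate**: for `ρ > 0` there is `C = C(ρ)` such that for all measurable
`F, H : (0,1] → [0,∞]` and measurable `G : (0,1]×(0,1]×(0,∞) → [0,1]`,
`∫₀^∞∫₀^1∫₀^1 F(x)H(y)G(x,y,u)e^{ρu} dy dx du` is bounded by
`C (∫F²)^{1/2} (∫H²)^{1/2} (∫∫∫ G e^{2ρu})^{1/2}`. -/
theorem trilinear_exponential_estimate (ρ : ℝ) (hρ : 0 < ρ) :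
    ∃ C : ℝ≥0, ∀ (F H : ℝ → ℝ≥0∞) (G : ℝ → ℝ → ℝ → ℝ≥0∞),
      Measurable F → Measurable H →
      Measurable (fun p : ℝ × ℝ × ℝ => G p.1 p.2.1 p.2.2) →
      (∀ x y u, G x y u ≤ 1) →
      (∫⁻ u in Set.Ioi (0 : ℝ), ∫⁻ x in Set.Ioc (0 : ℝ) 1, ∫⁻ y in Set.Ioc (0 : ℝ) 1,
          F x * H y * G x y u * ENNReal.ofReal (Real.exp (ρ * u))) ≤
        C * (∫⁻ x in Set.Ioc (0 : ℝ) 1, F x ^ 2) ^ (1 / 2 : ℝ) *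
          (∫⁻ y in Set.Ioc (0 : ℝ) 1, H y ^ 2) ^ (1 / 2 : ℝ) *
          (∫⁻ u in Set.Ioi (0 : ℝ), ∫⁻ x in Set.Ioc (0 : ℝ) 1, ∫⁻ y in Set.Ioc (0 : ℝ) 1,
            G x y u * ENNReal.ofReal (Real.exp (2 * ρ * u))) ^ (1 / 2 : ℝ) := by
  refine ⟨(2 * ρ⁻¹.toNNReal) ^ (1 / 2 : ℝ), fun F H G hF hH hG hG_le => ?_⟩
  simp only [ENNReal.coe_rpow_of_nonneg _ one_half_pos.le, ENNReal.coe_mul, ENNReal.coe_ofNat,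
    ofReal_exp_two_mul_mul]
  exact trilinear_exponential_estimate_general (by fun_prop)
    (fun u => (lintegral_mono' (Measure.restrict_mono_measure Measure.restrict_le_self _)
      le_rfl).trans_eq (setLIntegral_Iic_ofReal_exp_mul hρ u)) hF hH hG hG_le
end
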